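/- arXiv:2506.10604 — 2 statements merged into one kernel-verified Lean document; each statement's English description precedes it below -/
import Mathlib

section
/- For all integers k ≥ 3 and ℓ ≥ 2, let G_{k,ℓ} be the plane graph obtained from the Cartesian product of the cycle C_k and the path P_ℓ (drawn as ℓ nested k-cycles C⁰,…,C^{ℓ−1} with vertex ik+j on C^i joined to vertex (i+1)k+j on C^{i+1}) by adding, for each i ∈ {0,…,ℓ−2}, the k diagonal edges {ik+j, (i+1)k+j+1} for j ∈ {0,…,k−2} together with {ik+k−1, (i+1)k}. Then G_{k,ℓ} is a planar graph with f := 2k(ℓ−1)+2 faces which has exactly ℓ(ℓ+1)/2 CDCs of size f and exactly one true CDC of size f. Furthermore, G_{k,ℓ} is 3-connected when k = 3 and ℓ ≥ 3, and 4-connected otherwise. -/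
/-!
Planarity is proved by a counting form of Mac Lane's criterion. The even edge sets (mod 2 cycles) of
`G_{k,ℓ}` are exactly the sums of face boundaries (`exists_potential`), every edge lying on two
faces. A `K₅` or `K_{3,3}` minor would inherit such a family of even sets, and Euler-type counting
(`minor_cycle_bound`) contradicts the girth and the dimension of the cycle space of these graphs.

For connectivity, the deletion of fewer than four vertices (fewer than `k`, if there are more than
two rows) is analysed row by row (`isKConnected_Gkl`).

For the cycle double covers, give horizontal edges weight `2` and all other edges weight `k - 1`.
Every nonempty even edge set has weight at least `2k`, with equality only for the cycles `C^i` and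
the triangular faces (`two_mul_le_sum_wt`): the number of non-horizontal edges is even; if it is `0`
the set contains some `C^i`, if it is at least `4` the set is too heavy, and if it is `2` the set
has two horizontal edges or contains a triangle. The edges of the graph have total weight
`2k(k(ℓ-1)+1)`, so a double cover by as many cycles as there are faces uses only cycles of weight
exactly `2k` (`isCDC_card_iff`). In such a cover the multiplicities of the triangles are constant
around each strip and determined by the number of triangles having an edge on the inner side, which
decreases from `2` to `0` going outwards; the cycles `C^a`, `C^b` at the two drops determine the
cover (`cov_eq_two_iff`). Hence these covers correspond to unordered pairs `{a, b}` of rows, and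
only the pair of the innermost and the outermost row gives no repetition.
-/

open SimpleGraph

attribute [local instance] Classical.propDecidable

/-- A cycle in a graph: a connected, 2-regular subgraph. -/
def IsCycleSubgraph {V : Type*} {G : SimpleGraph V} (C : G.Subgraph) : Prop :=
  C.coe.Connected ∧ ∀ v ∈ C.verts, (C.neighborSet v).ncard = 2

/-- A cycle double cover: a multiset of cycles covering every edge exactly twice
(counted with multiplicity). -/
def IsCDC {V : Type*} (G : SimpleGraph V) (S : Multiset G.Subgraph) : Prop :=
  (∀ C ∈ S, IsCycleSubgraph C) ∧
  ∀ e ∈ G.edgeSet, S.countP (fun C => e ∈ C.edgeSet) = 2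

/-- Graph minor relation (via branch sets). -/
def HasGraphMinor {V : Type*} {W : Type*} (G : SimpleGraph V) (H : SimpleGraph W) : Prop :=
  ∃ f : W → Set V,
    (∀ w, (f w).Nonempty) ∧
    (∀ w, (G.induce (f w)).Connected) ∧
    (Pairwise fun w₁ w₂ => Disjoint (f w₁) (f w₂)) ∧
    ∀ ⦃w₁ w₂⦄, H.Adj w₁ w₂ → ∃ v₁ ∈ f w₁, ∃ v₂ ∈ f w₂, G.Adj v₁ v₂

/-- Planarity, via Wagner's theorem: no `K₅` minor and no `K_{3,3}` minor. -/
def IsPlanar {V : Type*} (G : SimpleGraph V) : Prop :=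
  ¬ HasGraphMinor G (completeGraph (Fin 5)) ∧
  ¬ HasGraphMinor G (completeBipartiteGraph (Fin 3) (Fin 3))

/-- `k`-connectivity: more than `k` vertices, and removing fewer than `k`
vertices leaves a connected graph. -/
def IsKConnected {V : Type*} [Fintype V] (k : ℕ) (G : SimpleGraph V) : Prop :=
  k < Fintype.card V ∧ ∀ s : Set V, s.ncard < k → (G.induce sᶜ).Connected

/-- A Hamiltonian cycle: a cycle through all vertices. -/
def IsHamCycle {V : Type*} (G : SimpleGraph V) (C : G.Subgraph) : Prop :=
  IsCycleSubgraph C ∧ C.verts = Set.univ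

/-- The graph `G_{k,ℓ}`: `ℓ` nested `k`-cycles (row `i`, vertices `(i, j)` for
`j ∈ ZMod k`), with vertical edges `(i,j)–(i+1,j)` and diagonal edges
`(i,j)–(i+1,j+1)` between consecutive cycles. -/
def Gkl (k l : ℕ) : SimpleGraph (Fin l × ZMod k) :=
  SimpleGraph.fromRel fun p q =>
    (p.1 = q.1 ∧ q.2 = p.2 + 1) ∨
    ((q.1 : ℕ) = (p.1 : ℕ) + 1 ∧ (q.2 = p.2 ∨ q.2 = p.2 + 1))

/-! ### Chains mod 2 and the obstruction to non-planar minors -/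

/-- The mod 2 boundary of an edge chain `X` in the multigraph with edge type `E` and end maps
`src`, `tgt`. The chain is even (a member of the cycle space) when its boundary vanishes. -/
noncomputable def chainBd {V E : Type*} [Fintype E] (src tgt : E → V) (X : E → ZMod 2) (v : V) : ZMod 2 :=
  ∑ e, X e * ((if src e = v then 1 else 0) + (if tgt e = v then 1 else 0))

lemma chainBd_add {V E : Type*} [Fintype E] (src tgt : E → V) (X Y : E → ZMod 2) (v : V) :
    chainBd src tgt (fun e => X e + Y e) v = chainBd src tgt X v + chainBd src tgt Y v := by
  simp [chainBd, add_mul, Finset.sum_add_distrib]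

lemma chainBd_single {V E : Type*} [Fintype E] (src tgt : E → V) (e₀ : E) (v : V) :
    chainBd src tgt (fun e => if e = e₀ then 1 else 0) v =
      (if src e₀ = v then 1 else 0) + (if tgt e₀ = v then 1 else 0) := by
  simp [chainBd]

lemma zmod2_add_self (a : ZMod 2) : a + a = 0 := CharTwo.add_self_eq_zero a

lemma zmod2_cases (a : ZMod 2) : a = 0 ∨ a = 1 := by
  fin_cases a
  · exact Or.inl rfl
  · exact Or.inr rfl

/-- In a connected piece of the graph, any two vertices bound a chain inside that piece. -/
lemma exists_chain_of_reachable {V E : Type*} [Fintype E] {src tgt : E → V} {G : SimpleGraph V}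
    (hG : ∀ u v, G.Adj u v → ∃ e, (src e = u ∧ tgt e = v) ∨ (src e = v ∧ tgt e = u))
    (A : Set V) (u v : A) (h : (G.induce A).Reachable u v) :
    ∃ c : E → ZMod 2, (∀ e, c e ≠ 0 → src e ∈ A ∧ tgt e ∈ A) ∧
      ∀ x, chainBd src tgt c x = (if (u : V) = x then 1 else 0) + (if (v : V) = x then 1 else 0) := by
  obtain ⟨p⟩ := h
  induction p with
  | nil => exact ⟨fun _ => 0, by simp, fun x => by simp [chainBd, zmod2_add_self]⟩
  | @cons u w v hadj p ih =>
    obtain ⟨c, hc, hb⟩ := ih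
    obtain ⟨e₀, he₀⟩ := hG u w hadj
    refine ⟨fun e => (if e = e₀ then 1 else 0) + c e, ?_, ?_⟩
    · intro e he
      by_cases h : e = e₀
      · subst h
        rcases he₀ with ⟨h1, h2⟩ | ⟨h1, h2⟩ <;> rw [h1, h2]
        · exact ⟨u.2, w.2⟩
        · exact ⟨w.2, u.2⟩
      · exact hc e (by simpa [h] using he)
    · intro x
      rw [chainBd_add, chainBd_single, hb]
      rcases he₀ with ⟨h1, h2⟩ | ⟨h1, h2⟩ <;> rw [h1, h2] <;>
        linear_combination zmod2_add_self (if (w : V) = x then 1 else 0)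

/-- An even chain using an edge at `w` uses a second edge at `w`. -/
lemma exists_other_edge {W ε : Type*} [Fintype ε] {p q : ε → W} {Z : ε → ZMod 2} {w : W}
    (hZ : chainBd p q Z w = 0) {κ : ε} (hκ : Z κ ≠ 0) (hpq : p κ ≠ q κ)
    (hw : p κ = w ∨ q κ = w) : ∃ κ', κ' ≠ κ ∧ Z κ' ≠ 0 ∧ (p κ' = w ∨ q κ' = w) := by
  by_contra! hcon
  have hκ1 : Z κ = 1 := (zmod2_cases _).resolve_left hκ
  rw [chainBd, Finset.sum_eq_single κ] at hZ
  · rcases hw with rfl | rfl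
    · simp [hκ1, hpq.symm] at hZ
    · simp [hκ1, hpq] at hZ
  · intro κ' _ hne
    by_cases hz : Z κ' = 0
    · simp [hz]
    · have := hcon κ' hne hz
      simp [this.1, this.2]
  · simp

/-- The counting form of Mac Lane's criterion, transported to minors. Suppose the even chains of `G`
are exactly the coboundaries of functions on a set `F` of faces, where `a e`, `b e` are the faces
on the two sides of `e`. If a multigraph `K` (edges `ε`, ends `p`, `q`) is a minor of `G`
and every nonzero even chain of `K` has at least `g` edges, then for some number `N` of faces of `K`
one has `g * N ≤ 2 * |E(K)|` and the cycle space of `K` has dimension at most `N - 1`. -/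
theorem minor_cycle_bound {V E F W ε : Type*} [Fintype V] [Fintype E] [Fintype F] [Fintype ε]
    {src tgt : E → V} {a b : E → F} {G : SimpleGraph V}
    (hG : ∀ u v, G.Adj u v → ∃ e, (src e = u ∧ tgt e = v) ∨ (src e = v ∧ tgt e = u))
    (hclosed : ∀ (x : F → ZMod 2) (v : V), chainBd src tgt (fun e => x (a e) + x (b e)) v = 0)
    (hexact : ∀ X : E → ZMod 2, (∀ v, chainBd src tgt X v = 0) →
      ∃ x : F → ZMod 2, ∀ e, X e = x (a e) + x (b e))
    {f : W → Set V} (hne : ∀ w, (f w).Nonempty) (hconn : ∀ w, (G.induce (f w)).Connected)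
    (hdisj : Pairwise fun w₁ w₂ => Disjoint (f w₁) (f w₂))
    {p q : ε → W} (hpq : ∀ κ, p κ ≠ q κ)
    (hinj : ∀ κ κ', (p κ = p κ' ∧ q κ = q κ') ∨ (p κ = q κ' ∧ q κ = p κ') → κ = κ')
    (hadj : ∀ κ, ∃ v₁ ∈ f (p κ), ∃ v₂ ∈ f (q κ), G.Adj v₁ v₂)
    {g : ℕ} (hg : ∀ Z : ε → ZMod 2, (∀ w, chainBd p q Z w = 0) → Z ≠ 0 →
      g ≤ (Finset.univ.filter fun κ => Z κ ≠ 0).card) :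
    ∃ N : ℕ, g * N ≤ 2 * Fintype.card ε ∧
      ∀ (n : ℕ) (φ : (Fin n → ZMod 2) → ε → ZMod 2), Function.Injective φ →
        (∀ t w, chainBd p q (φ t) w = 0) → n ≤ N - 1 := by
  have huniq : ∀ {v w w'}, v ∈ f w → v ∈ f w' → w = w' := by
    intro v w w' h h'
    by_contra hww
    exact Set.disjoint_left.mp (hdisj hww) h h'
  choose ρ hρ using hne
  choose v₁ hv₁ v₂ hv₂ hv using hadj
  choose ed hed using fun κ => hG _ _ (hv κ)
  have hends : ∀ κ w, ((if src (ed κ) ∈ f w then 1 else 0) + (if tgt (ed κ) ∈ f w then 1 else 0) :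
      ZMod 2) = (if p κ = w then 1 else 0) + (if q κ = w then 1 else 0) := by
    intro κ w
    have h1 : v₁ κ ∈ f w ↔ p κ = w := ⟨fun h => huniq (hv₁ κ) h, fun h => h ▸ hv₁ κ⟩
    have h2 : v₂ κ ∈ f w ↔ q κ = w := ⟨fun h => huniq (hv₂ κ) h, fun h => h ▸ hv₂ κ⟩
    rcases hed κ with ⟨e1, e2⟩ | ⟨e1, e2⟩ <;> simp only [e1, e2, h1, h2]
    rw [add_comm]
  have hed_out : ∀ κ w, ¬ (src (ed κ) ∈ f w ∧ tgt (ed κ) ∈ f w) := by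
    rintro κ w ⟨h1, h2⟩
    rcases hed κ with ⟨e1, e2⟩ | ⟨e1, e2⟩ <;> rw [e1] at h1 <;> rw [e2] at h2
    · exact hpq κ ((huniq (hv₁ κ) h1).trans (huniq (hv₂ κ) h2).symm)
    · exact hpq κ ((huniq (hv₁ κ) h2).trans (huniq (hv₂ κ) h1).symm)
  have hed_inj : ∀ κ κ', ed κ = ed κ' → κ = κ' := by
    intro κ κ' h
    have h1 := hed κ
    have h2 := hed κ'
    rw [h] at h1
    apply hinj
    rcases h1 with ⟨e1, e2⟩ | ⟨e1, e2⟩ <;> rcases h2 with ⟨e3, e4⟩ | ⟨e3, e4⟩ <;>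
      rw [e3] at e1 <;> rw [e4] at e2
    · exact Or.inl ⟨huniq (hv₁ κ) (e1 ▸ hv₁ κ'), huniq (hv₂ κ) (e2 ▸ hv₂ κ')⟩
    · exact Or.inr ⟨huniq (hv₁ κ) (e1 ▸ hv₂ κ'), huniq (hv₂ κ) (e2 ▸ hv₁ κ')⟩
    · exact Or.inr ⟨huniq (hv₁ κ) (e2 ▸ hv₂ κ'), huniq (hv₂ κ) (e1 ▸ hv₁ κ')⟩
    · exact Or.inl ⟨huniq (hv₁ κ) (e2 ▸ hv₁ κ'), huniq (hv₂ κ) (e1 ▸ hv₂ κ')⟩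
  have hρ_inj : ∀ w w', ρ w = ρ w' → w = w' := fun w w' h => huniq (hρ w) (h ▸ hρ w')
  -- The edges kept by the minor: the selected edges `ed κ` and all edges inside branch sets.
  set H : Set E := {e | (∃ κ, e = ed κ) ∨ ∃ w, src e ∈ f w ∧ tgt e ∈ f w} with hH
  -- Every edge of `K` lifts to a chain of kept edges joining the roots of two branch sets.
  have hlift : ∀ κ, ∃ c : E → ZMod 2, (∀ e, e ∉ H → c e = 0) ∧
      (∀ κ', c (ed κ') = if κ' = κ then 1 else 0) ∧
      ∀ x, chainBd src tgt c x =
        (if ρ (p κ) = x then 1 else 0) + (if ρ (q κ) = x then 1 else 0) := by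
    intro κ
    obtain ⟨c₁, hc₁, hb₁⟩ := exists_chain_of_reachable hG (f (p κ)) ⟨ρ (p κ), hρ _⟩ ⟨v₁ κ, hv₁ κ⟩
      ((hconn _).preconnected _ _)
    obtain ⟨c₂, hc₂, hb₂⟩ := exists_chain_of_reachable hG (f (q κ)) ⟨ρ (q κ), hρ _⟩ ⟨v₂ κ, hv₂ κ⟩
      ((hconn _).preconnected _ _)
    have z₁ : ∀ κ', c₁ (ed κ') = 0 := fun κ' => by
      by_contra h
      exact hed_out κ' _ (hc₁ _ h)
    have z₂ : ∀ κ', c₂ (ed κ') = 0 := fun κ' => by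
      by_contra h
      exact hed_out κ' _ (hc₂ _ h)
    refine ⟨fun e => (if e = ed κ then 1 else 0) + (c₁ e + c₂ e), ?_, ?_, ?_⟩
    · intro e he
      have h0 : e ≠ ed κ := fun h => he (Or.inl ⟨κ, h⟩)
      have h1 : c₁ e = 0 := by
        by_contra h
        exact he (Or.inr ⟨_, hc₁ e h⟩)
      have h2 : c₂ e = 0 := by
        by_contra h
        exact he (Or.inr ⟨_, hc₂ e h⟩)
      simp [h0, h1, h2]
    · intro κ'
      have : ed κ' = ed κ ↔ κ' = κ := ⟨hed_inj _ _, fun h => by rw [h]⟩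
      simp [z₁, z₂, this]
    · intro x
      rw [chainBd_add, chainBd_add, chainBd_single, hb₁, hb₂]
      rcases hed κ with ⟨h1, h2⟩ | ⟨h1, h2⟩ <;> rw [h1, h2] <;>
        linear_combination zmod2_add_self (if v₁ κ = x then 1 else 0) +
          zmod2_add_self (if v₂ κ = x then 1 else 0)
  choose c hc0 hc1 hcb using hlift
  -- Deleting an edge merges the two faces beside it.
  let r : F → F → Prop := fun x y => ∃ e, e ∉ H ∧ x = a e ∧ y = b e
  let cl : F → Quot r := Quot.mk r
  have : Fintype (Quot r) := Fintype.ofFinite _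
  let z : Quot r → ε → ZMod 2 := fun Q κ =>
    (if cl (a (ed κ)) = Q then 1 else 0) + (if cl (b (ed κ)) = Q then 1 else 0)
  have hz_even : ∀ Q w, chainBd p q (z Q) w = 0 := by
    intro Q w
    let x : F → ZMod 2 := fun y => if cl y = Q then 1 else 0
    let X : E → ZMod 2 := fun e => x (a e) + x (b e)
    have hX0 : ∀ e, e ∉ H → X e = 0 := by
      intro e he
      have : cl (a e) = cl (b e) := Quot.sound ⟨e, he, rfl, rfl⟩
      simp only [X, x, this]
      exact zmod2_add_self _
    -- Summing the boundary over a branch set contracts it to a vertex.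
    have hsum : ∑ v, (if v ∈ f w then chainBd src tgt X v else 0) = 0 := by
      apply Finset.sum_eq_zero
      intro v _
      rw [hclosed x v]
      simp
    have hswap : ∑ v, (if v ∈ f w then chainBd src tgt X v else 0) =
        ∑ e, X e * ((if src e ∈ f w then 1 else 0) + (if tgt e ∈ f w then 1 else 0)) := by
      have h1 : ∀ v, (if v ∈ f w then chainBd src tgt X v else 0) =
          ∑ e, X e * ((if src e = v then (if v ∈ f w then 1 else 0) else 0) +
            (if tgt e = v then (if v ∈ f w then 1 else 0) else 0)) := by
        intro v
        split_ifs <;> simp [chainBd]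
      simp_rw [h1]
      rw [Finset.sum_comm]
      refine Finset.sum_congr rfl fun e _ => ?_
      rw [← Finset.mul_sum, Finset.sum_add_distrib]
      simp
    rw [hswap] at hsum
    have hedinj : Function.Injective ed := fun κ κ' h => hed_inj κ κ' h
    rw [← hsum, chainBd]
    rw [← Finset.sum_subset (Finset.subset_univ (Finset.univ.image ed)),
      Finset.sum_image (fun κ _ κ' _ h => hed_inj κ κ' h)]
    · refine Finset.sum_congr rfl fun κ _ => ?_
      rw [hends]
    · intro e _ he
      by_cases heH : e ∈ H
      · rcases heH with ⟨κ, rfl⟩ | ⟨w', h1, h2⟩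
        · exact absurd (Finset.mem_image_of_mem _ (Finset.mem_univ κ)) he
        · by_cases hw : w' = w
          · subst hw
            simp only [h1, h2, if_true, zmod2_add_self, mul_zero]
          · have n1 : src e ∉ f w := fun h => hw (huniq h1 h)
            have n2 : tgt e ∉ f w := fun h => hw (huniq h2 h)
            simp [n1, n2]
      · rw [hX0 e heH, zero_mul]
  have hz_span : ∀ Z : ε → ZMod 2, (∀ w, chainBd p q Z w = 0) →
      ∃ y : Quot r → ZMod 2, ∀ κ, Z κ = ∑ Q, y Q * z Q κ := by
    intro Z hZ
    let X : E → ZMod 2 := fun e => ∑ κ, Z κ * c κ e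
    have hXb : ∀ v, chainBd src tgt X v = 0 := by
      intro v
      have h1 : chainBd src tgt X v = ∑ κ, Z κ * chainBd src tgt (c κ) v := by
        simp only [chainBd, X, Finset.sum_mul, Finset.mul_sum]
        rw [Finset.sum_comm]
        simp only [mul_assoc]
      rw [h1]
      simp_rw [hcb]
      by_cases hvρ : ∃ w, ρ w = v
      · obtain ⟨w, rfl⟩ := hvρ
        refine Eq.trans ?_ (hZ w)
        have : ∀ w', ρ w' = ρ w ↔ w' = w := fun w' => ⟨hρ_inj _ _, fun h => by rw [h]⟩
        simp only [this, chainBd]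
      · push Not at hvρ
        simp [hvρ]
    obtain ⟨x, hx⟩ := hexact X hXb
    have hresp : ∀ u v, r u v → x u = x v := by
      rintro u v ⟨e, he, rfl, rfl⟩
      have h0 : X e = 0 := Finset.sum_eq_zero fun κ _ => by rw [hc0 κ e he, mul_zero]
      rw [hx] at h0
      exact CharTwo.add_eq_zero.mp h0
    refine ⟨Quot.lift x hresp, fun κ => ?_⟩
    have h1 : Z κ = X (ed κ) := by simp [X, hc1]
    rw [h1, hx]
    simp only [z, mul_add, Finset.sum_add_distrib, mul_ite, mul_one, mul_zero, Finset.sum_ite_eq,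
      Finset.mem_univ, if_true]
    rfl
  have hz_sum : ∀ κ, ∑ Q, z Q κ = 0 := by
    intro κ
    simp only [z, Finset.sum_add_distrib, Finset.sum_ite_eq, Finset.mem_univ, if_true]
    exact zmod2_add_self 1
  set S := Finset.univ.filter fun Q => z Q ≠ 0 with hS
  have hS0 : ∀ Q, Q ∉ S → z Q = 0 := fun Q hQ => by simpa [hS] using hQ
  refine ⟨S.card, ?_, ?_⟩
  · calc g * S.card = ∑ Q ∈ S, g := by rw [Finset.sum_const, smul_eq_mul, mul_comm]
      _ ≤ ∑ Q ∈ S, (Finset.univ.filter fun κ => z Q κ ≠ 0).card := by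
        refine Finset.sum_le_sum fun Q hQ => hg _ (hz_even Q) ?_
        simpa [hS] using hQ
      _ = ∑ κ, (S.filter fun Q => z Q κ ≠ 0).card := by
        simp only [Finset.card_filter]
        rw [Finset.sum_comm]
      _ ≤ ∑ κ : ε, 2 := by
        refine Finset.sum_le_sum fun κ _ => ?_
        refine (Finset.card_le_card (t := {cl (a (ed κ)), cl (b (ed κ))}) ?_).trans
          Finset.card_le_two
        intro Q hQ
        by_contra hcon
        simp only [Finset.mem_insert, Finset.mem_singleton, not_or] at hcon
        have h2 := (Finset.mem_filter.mp hQ).2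
        apply h2
        simp only [z]
        rw [if_neg (Ne.symm hcon.1), if_neg (Ne.symm hcon.2), add_zero]
      _ = 2 * Fintype.card ε := by simp [mul_comm]
  · suffices hle : (Finset.univ.filter fun Z : ε → ZMod 2 => ∀ w, chainBd p q Z w = 0).card ≤
        2 ^ (S.card - 1) by
      intro n φ hφ hφ0
      have h1 : (Finset.univ : Finset (Fin n → ZMod 2)).card ≤
          (Finset.univ.filter fun Z : ε → ZMod 2 => ∀ w, chainBd p q Z w = 0).card :=
        Finset.card_le_card_of_injOn φ (fun t _ => by simpa using hφ0 t) (fun _ _ _ _ h => hφ h)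
      rw [Finset.card_univ, Fintype.card_fun, ZMod.card, Fintype.card_fin] at h1
      exact (Nat.pow_le_pow_iff_right (by norm_num)).mp (h1.trans hle)
    rcases S.eq_empty_or_nonempty with hemp | ⟨Q₀, hQ₀⟩
    · rw [hemp, Finset.card_empty]
      refine Finset.card_le_one.mpr ?_
      have key : ∀ Z : ε → ZMod 2, (∀ w, chainBd p q Z w = 0) → Z = 0 := by
        intro Z hZ
        obtain ⟨y, hy⟩ := hz_span Z hZ
        funext κ
        rw [hy]
        refine Finset.sum_eq_zero fun Q _ => ?_
        rw [hS0 Q (by simp [hemp])]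
        simp
      intro Z hZ Z' hZ'
      rw [key Z (by simpa using hZ), key Z' (by simpa using hZ')]
    · -- The faces of `K` sum to zero, so `Q₀` can be dropped from every spanning combination.
      have hsub : (Finset.univ.filter fun Z : ε → ZMod 2 => ∀ w, chainBd p q Z w = 0) ⊆
          (S.erase Q₀).powerset.image fun A κ => ∑ Q ∈ A, z Q κ := by
        intro Z hZ
        obtain ⟨y, hy⟩ := hz_span Z (by simpa using hZ)
        refine Finset.mem_image.mpr
          ⟨(S.erase Q₀).filter fun Q => y Q + y Q₀ ≠ 0,
            Finset.mem_powerset.mpr (Finset.filter_subset _ _), ?_⟩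
        funext κ
        have h1 : Z κ = ∑ Q, (y Q + y Q₀) * z Q κ := by
          simp only [add_mul, Finset.sum_add_distrib]
          rw [← hy, ← Finset.mul_sum, hz_sum, mul_zero, add_zero]
        rw [h1, ← Finset.sum_subset (Finset.subset_univ (S.erase Q₀)), Finset.sum_filter]
        · refine Finset.sum_congr rfl fun Q _ => ?_
          rcases zmod2_cases (y Q + y Q₀) with h | h <;> simp [h]
        · intro Q _ hQ
          by_cases h : Q = Q₀
          · rw [h, zmod2_add_self, zero_mul]
          · rw [hS0 Q (fun h' => hQ (Finset.mem_erase.mpr ⟨h, h'⟩))]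
            simp
      calc _ ≤ _ := Finset.card_le_card hsub
        _ ≤ _ := Finset.card_image_le
        _ = 2 ^ (S.card - 1) := by rw [Finset.card_powerset, Finset.card_erase_of_mem hQ₀]

lemma four_le_card {α : Type*} {s : Finset α} {a b c d : α} (ha : a ∈ s) (hb : b ∈ s) (hc : c ∈ s)
    (hd : d ∈ s) (hab : a ≠ b) (hac : a ≠ c) (had : a ≠ d) (hbc : b ≠ c) (hbd : b ≠ d)
    (hcd : c ≠ d) : 4 ≤ s.card := by
  have hsub : ({a, b, c, d} : Finset α) ⊆ s := by
    intro x hx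
    simp only [Finset.mem_insert, Finset.mem_singleton] at hx
    rcases hx with rfl | rfl | rfl | rfl <;> assumption
  refine le_trans (le_of_eq ?_) (Finset.card_le_card hsub)
  rw [Finset.card_insert_of_notMem (by simp [hab, hac, had]),
    Finset.card_insert_of_notMem (by simp [hbc, hbd]),
    Finset.card_insert_of_notMem (by simp [hcd]), Finset.card_singleton]

lemma no_K33_minor {V E F : Type*} [Fintype V] [Fintype E] [Fintype F]
    {src tgt : E → V} {a b : E → F} {G : SimpleGraph V}
    (hG : ∀ u v, G.Adj u v → ∃ e, (src e = u ∧ tgt e = v) ∨ (src e = v ∧ tgt e = u))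
    (hclosed : ∀ (x : F → ZMod 2) (v : V), chainBd src tgt (fun e => x (a e) + x (b e)) v = 0)
    (hexact : ∀ X : E → ZMod 2, (∀ v, chainBd src tgt X v = 0) →
      ∃ x : F → ZMod 2, ∀ e, X e = x (a e) + x (b e)) :
    ¬ HasGraphMinor G (completeBipartiteGraph (Fin 3) (Fin 3)) := by
  rintro ⟨f, hne, hconn, hdisj, hadj⟩
  let p : Fin 3 × Fin 3 → Fin 3 ⊕ Fin 3 := fun κ => Sum.inl κ.1
  let q : Fin 3 × Fin 3 → Fin 3 ⊕ Fin 3 := fun κ => Sum.inr κ.2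
  obtain ⟨N, hN, hcard⟩ := minor_cycle_bound (p := p) (q := q) (g := 4) hG hclosed hexact hne hconn
    hdisj (fun κ => by simp [p, q])
    (by
      rintro ⟨i, j⟩ ⟨i', j'⟩ h
      simpa [p, q] using h)
    (fun κ => hadj (by simp [p, q]))
    (by
      intro Z hZ hZ0
      obtain ⟨⟨i, j⟩, h0⟩ := Function.ne_iff.mp hZ0
      have hpq : ∀ κ, p κ ≠ q κ := fun κ => by simp [p, q]
      obtain ⟨⟨i1, j1⟩, n1, z1, w1⟩ := exists_other_edge (hZ (Sum.inl i)) h0 (hpq _) (Or.inl rfl)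
      obtain ⟨⟨i2, j2⟩, n2, z2, w2⟩ := exists_other_edge (hZ (Sum.inr j)) h0 (hpq _) (Or.inr rfl)
      obtain ⟨⟨i3, j3⟩, n3, z3, w3⟩ := exists_other_edge (hZ (Sum.inr j1)) z1 (hpq _) (Or.inr rfl)
      simp only [p, q, Sum.inl.injEq, Sum.inr.injEq, reduceCtorEq, or_false, false_or] at w1 w2 w3
      subst w1 w2 w3
      simp only [ne_eq, Prod.mk.injEq, true_and, and_true] at n1 n2 n3
      exact four_le_card (a := (i1, j2)) (b := (i1, j3)) (c := (i2, j2)) (d := (i3, j3))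
        (by simpa) (by simpa) (by simpa) (by simpa)
        (fun h => n1 (Prod.mk.inj h).2.symm) (fun h => n2 (Prod.mk.inj h).1.symm)
        (fun h => n1 (Prod.mk.inj h).2.symm) (fun h => n1 (Prod.mk.inj h).2)
        (fun h => n3 (Prod.mk.inj h).1.symm) (fun h => n1 (Prod.mk.inj h).2.symm))
  -- A 3 × 3 matrix with vanishing line sums is free in its top left 2 × 2 block.
  let φ : (Fin 4 → ZMod 2) → (Fin 3 × Fin 3 → ZMod 2) := fun t κ =>
    (![![t 0, t 1, t 0 + t 1], ![t 2, t 3, t 2 + t 3],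
      ![t 0 + t 2, t 1 + t 3, t 0 + t 1 + (t 2 + t 3)]] : Fin 3 → Fin 3 → ZMod 2) κ.1 κ.2
  have h4 := hcard 4 φ
    (by
      intro t t' h
      funext i
      fin_cases i
      · exact congrFun h (0, 0)
      · exact congrFun h (0, 1)
      · exact congrFun h (1, 0)
      · exact congrFun h (1, 1))
    (by
      intro t
      have h2 : (2 : ZMod 2) = 0 := rfl
      rintro (w | w) <;> fin_cases w <;>
        simp [chainBd, Fintype.sum_prod_type, Fin.sum_univ_three, p, q, φ] <;>
        ring_nf <;> simp [h2])
  simp only [Fintype.card_prod, Fintype.card_fin] at hN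
  omega

lemma no_K5_minor {V E F : Type*} [Fintype V] [Fintype E] [Fintype F]
    {src tgt : E → V} {a b : E → F} {G : SimpleGraph V}
    (hG : ∀ u v, G.Adj u v → ∃ e, (src e = u ∧ tgt e = v) ∨ (src e = v ∧ tgt e = u))
    (hclosed : ∀ (x : F → ZMod 2) (v : V), chainBd src tgt (fun e => x (a e) + x (b e)) v = 0)
    (hexact : ∀ X : E → ZMod 2, (∀ v, chainBd src tgt X v = 0) →
      ∃ x : F → ZMod 2, ∀ e, X e = x (a e) + x (b e)) :
    ¬ HasGraphMinor G (completeGraph (Fin 5)) := by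
  rintro ⟨f, hne, hconn, hdisj, hadj⟩
  let p : Fin 10 → Fin 5 := ![0, 0, 0, 0, 1, 1, 1, 2, 2, 3]
  let q : Fin 10 → Fin 5 := ![1, 2, 3, 4, 2, 3, 4, 3, 4, 4]
  have hpq : ∀ κ, p κ ≠ q κ := by
    intro κ
    fin_cases κ <;> simp [p, q]
  have hinj : ∀ κ κ', (p κ = p κ' ∧ q κ = q κ') ∨ (p κ = q κ' ∧ q κ = p κ') → κ = κ' := by
    intro κ κ'
    fin_cases κ <;> fin_cases κ' <;> simp [p, q]
  obtain ⟨N, hN, hcard⟩ := minor_cycle_bound (p := p) (q := q) (g := 3) hG hclosed hexact hne hconn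
    hdisj hpq hinj
    (fun κ => hadj (by simpa using hpq κ))
    (by
      intro Z hZ hZ0
      obtain ⟨κ, h0⟩ := Function.ne_iff.mp hZ0
      obtain ⟨κ1, n1, z1, w1⟩ := exists_other_edge (hZ (p κ)) h0 (hpq _) (Or.inl rfl)
      obtain ⟨κ2, n2, z2, w2⟩ := exists_other_edge (hZ (q κ)) h0 (hpq _) (Or.inr rfl)
      have n12 : κ1 ≠ κ2 := by
        rintro rfl
        have := hpq κ
        apply n1
        apply hinj
        rcases w1 with h1 | h1 <;> rcases w2 with h2 | h2
        · exact absurd (h1.symm.trans h2) this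
        · exact Or.inl ⟨h1, h2⟩
        · exact Or.inr ⟨h2, h1⟩
        · exact absurd (h1.symm.trans h2) this
      exact Finset.two_lt_card.mpr
        ⟨κ, by simpa, κ1, by simpa, κ2, by simpa, n1.symm, n2.symm, n12⟩)
  -- The six edges avoiding vertex `0` are free; parity at the other vertices fixes the rest.
  let φ : (Fin 6 → ZMod 2) → (Fin 10 → ZMod 2) := fun t =>
    ![t 0 + t 1 + t 2, t 0 + t 3 + t 4, t 1 + t 3 + t 5, t 2 + t 4 + t 5,
      t 0, t 1, t 2, t 3, t 4, t 5]
  have h6 := hcard 6 φ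
    (by
      intro t t' h
      funext i
      fin_cases i
      · exact congrFun h 4
      · exact congrFun h 5
      · exact congrFun h 6
      · exact congrFun h 7
      · exact congrFun h 8
      · exact congrFun h 9)
    (by
      intro t w
      have h2 : (2 : ZMod 2) = 0 := rfl
      have h10 : ∀ g : Fin 10 → ZMod 2, ∑ i, g i =
          g 0 + g 1 + g 2 + g 3 + g 4 + g 5 + g 6 + g 7 + g 8 + g 9 := fun g => by
        rw [Fin.sum_univ_castSucc, Fin.sum_univ_castSucc, Fin.sum_univ_eight]
        rfl
      rw [chainBd, h10]
      fin_cases w <;>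
        simp [p, q, φ] <;>
        ring_nf <;> simp [h2])
  simp only [Fintype.card_fin] at hN
  omega

/-! ### Edges of `G_{k,ℓ}` as an indexed family -/

/-- Index type for the edges of `G_{k,m+1}`: horizontal, vertical and diagonal ones. -/
abbrev EdgeIx (k m : ℕ) : Type :=
  (Fin (m + 1) × ZMod k) ⊕ (Fin m × ZMod k) ⊕ (Fin m × ZMod k)

/-- The horizontal edge from `(i, j)` to `(i, j + 1)`. -/
abbrev EdgeIx.hor {k m : ℕ} (i : Fin (m + 1)) (j : ZMod k) : EdgeIx k m :=
  Sum.inl (i, j)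

/-- The vertical edge from `(r, j)` to `(r + 1, j)`. -/
abbrev EdgeIx.vert {k m : ℕ} (r : Fin m) (j : ZMod k) : EdgeIx k m :=
  Sum.inr (Sum.inl (r, j))

/-- The diagonal edge from `(r, j)` to `(r + 1, j + 1)`. -/
abbrev EdgeIx.diag {k m : ℕ} (r : Fin m) (j : ZMod k) : EdgeIx k m :=
  Sum.inr (Sum.inr (r, j))

namespace EdgeIx

variable {k m : ℕ}

/-- The initial vertex of an edge. -/
def src : EdgeIx k m → Fin (m + 1) × ZMod k
  | .inl (i, j) => (i, j)
  | .inr (.inl (r, j)) => (r.castSucc, j)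
  | .inr (.inr (r, j)) => (r.castSucc, j)

/-- The terminal vertex of an edge. -/
def tgt : EdgeIx k m → Fin (m + 1) × ZMod k
  | .inl (i, j) => (i, j + 1)
  | .inr (.inl (r, j)) => (r.succ, j)
  | .inr (.inr (r, j)) => (r.succ, j + 1)

@[simp] lemma src_hor (i : Fin (m + 1)) (j : ZMod k) : src (hor i j : EdgeIx k m) = (i, j) := rfl
@[simp] lemma src_vert (r : Fin m) (j : ZMod k) :
    src (vert r j : EdgeIx k m) = (r.castSucc, j) := rfl
@[simp] lemma src_diag (r : Fin m) (j : ZMod k) :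
    src (diag r j : EdgeIx k m) = (r.castSucc, j) := rfl
@[simp] lemma tgt_hor (i : Fin (m + 1)) (j : ZMod k) :
    tgt (hor i j : EdgeIx k m) = (i, j + 1) := rfl
@[simp] lemma tgt_vert (r : Fin m) (j : ZMod k) : tgt (vert r j : EdgeIx k m) = (r.succ, j) := rfl
@[simp] lemma tgt_diag (r : Fin m) (j : ZMod k) :
    tgt (diag r j : EdgeIx k m) = (r.succ, j + 1) := rfl

/-- The edge as an unordered pair of vertices. -/
def pair (e : EdgeIx k m) : Sym2 (Fin (m + 1) × ZMod k) := s(e.src, e.tgt)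

end EdgeIx

open EdgeIx

lemma sum_edgeIx {k m : ℕ} [NeZero k] {M : Type*} [AddCommMonoid M] (f : EdgeIx k m → M) :
    ∑ e, f e = (∑ i, ∑ j, f (hor i j)) + ((∑ r, ∑ j, f (vert r j)) + ∑ r, ∑ j, f (diag r j)) := by
  simp only [Fintype.sum_sum_type, Fintype.sum_prod_type]

lemma zmod_one_ne_zero {k : ℕ} (hk : 3 ≤ k) : (1 : ZMod k) ≠ 0 := by
  have : Fact (1 < k) := ⟨by omega⟩
  exact one_ne_zero

lemma zmod_two_ne_zero {k : ℕ} (hk : 3 ≤ k) : (1 + 1 : ZMod k) ≠ 0 := by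
  intro h
  have h2 : ((2 : ℕ) : ZMod k) = 0 := by
    push_cast
    rw [← one_add_one_eq_two]
    exact h
  have := Nat.le_of_dvd (by norm_num) ((ZMod.natCast_eq_zero_iff 2 k).mp h2)
  omega

lemma zmod_add_one_ne {k : ℕ} (hk : 3 ≤ k) (j : ZMod k) : j + 1 ≠ j := fun h =>
  zmod_one_ne_zero hk (by simpa using h)

lemma zmod_add_two_ne {k : ℕ} (hk : 3 ≤ k) (j : ZMod k) : j + 1 + 1 ≠ j := fun h =>
  zmod_two_ne_zero hk (by simpa [add_assoc] using h)

lemma fin_succ_ne_castSucc {m : ℕ} (r : Fin m) : r.succ ≠ r.castSucc := by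
  intro h
  have := congrArg Fin.val h
  simp at this

lemma fin_castSucc_ne_succ {m : ℕ} (r : Fin m) : r.castSucc ≠ r.succ :=
  (fin_succ_ne_castSucc r).symm

lemma EdgeIx.src_ne_tgt {k m : ℕ} (hk : 3 ≤ k) (e : EdgeIx k m) : e.src ≠ e.tgt := by
  match e with
  | .inl (i, j) => simp [zmod_one_ne_zero hk]
  | .inr (.inl (r, j)) => simp [fin_castSucc_ne_succ]
  | .inr (.inr (r, j)) => simp [fin_castSucc_ne_succ]

lemma EdgeIx.pair_injective {k m : ℕ} (hk : 3 ≤ k) :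
    Function.Injective (pair : EdgeIx k m → _) := by
  have h1 := zmod_add_one_ne hk
  have h2 := zmod_add_two_ne hk
  intro e e' h
  rw [pair, pair, Sym2.eq_iff] at h
  have ext' : ∀ a b : Fin m, a = b ↔ (a : ℕ) = b := fun a b => Fin.ext_iff
  have ext'' : ∀ a b : Fin (m + 1), a = b ↔ (a : ℕ) = b := fun a b => Fin.ext_iff
  match e, e' with
  | .inl (i, j), .inl (i', j') =>
    simp only [src_hor, tgt_hor, Prod.mk.injEq] at h
    rcases h with ⟨⟨rfl, rfl⟩, _⟩ | ⟨⟨rfl, rfl⟩, -, h⟩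
    · rfl
    · exact absurd h (h2 _)
  | .inl (i, j), .inr (.inl (r, j')) => simp [ext''] at h; omega
  | .inl (i, j), .inr (.inr (r, j')) => simp [ext''] at h; omega
  | .inr (.inl (r, j')), .inl (i, j) => simp [ext''] at h; omega
  | .inr (.inr (r, j')), .inl (i, j) => simp [ext''] at h; omega
  | .inr (.inl (r, j)), .inr (.inl (r', j')) => 
    simp only [src_vert, tgt_vert, Prod.mk.injEq] at h
    rcases h with ⟨⟨h, rfl⟩, _⟩ | ⟨⟨h, rfl⟩, h', h''⟩
    · rw [Fin.castSucc_inj.mp h]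
    · simp [ext''] at h h'; omega
  | .inr (.inr (r, j)), .inr (.inr (r', j')) =>
    simp only [src_diag, tgt_diag, Prod.mk.injEq] at h
    rcases h with ⟨⟨h, rfl⟩, _⟩ | ⟨⟨h, rfl⟩, h', h''⟩
    · rw [Fin.castSucc_inj.mp h]
    · simp [ext''] at h h'; omega
  | .inr (.inl (r, j)), .inr (.inr (r', j')) =>
    simp only [src_diag, tgt_diag, src_vert, tgt_vert, Prod.mk.injEq] at h
    rcases h with ⟨⟨h, rfl⟩, h', h''⟩ | ⟨⟨h, rfl⟩, h', h''⟩
    · exact absurd h''.symm (h1 _)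
    · simp [ext''] at h h'; omega
  | .inr (.inr (r, j)), .inr (.inl (r', j')) =>
    simp only [src_diag, tgt_diag, src_vert, tgt_vert, Prod.mk.injEq] at h
    rcases h with ⟨⟨h, rfl⟩, h', h''⟩ | ⟨⟨h, rfl⟩, h', h''⟩
    · exact absurd h'' (h1 _)
    · simp [ext''] at h h'; omega

lemma Gkl_adj_iff {k m : ℕ} (hk : 3 ≤ k) (u v : Fin (m + 1) × ZMod k) :
    (Gkl k (m + 1)).Adj u v ↔
      ∃ e : EdgeIx k m, (e.src = u ∧ e.tgt = v) ∨ (e.src = v ∧ e.tgt = u) := by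
  have key : ∀ p q : Fin (m + 1) × ZMod k, ((p.1 = q.1 ∧ q.2 = p.2 + 1) ∨
      ((q.1 : ℕ) = (p.1 : ℕ) + 1 ∧ (q.2 = p.2 ∨ q.2 = p.2 + 1))) ↔
      ∃ e : EdgeIx k m, e.src = p ∧ e.tgt = q := by
    rintro ⟨i, j⟩ ⟨i', j'⟩
    constructor
    · rintro (⟨h, h'⟩ | ⟨h, h'⟩)
      · dsimp only at h h'
        subst h h'
        exact ⟨hor i j, rfl, rfl⟩
      · dsimp only at h h'
        have hlt : (i : ℕ) < m := by omega
        have hi : i = (⟨i, hlt⟩ : Fin m).castSucc := rfl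
        have hi' : i' = (⟨i, hlt⟩ : Fin m).succ := by
          ext
          simpa using h
        rcases h' with rfl | rfl
        · exact ⟨vert ⟨i, hlt⟩ j', by rw [hi']; exact ⟨rfl, rfl⟩⟩
        · exact ⟨diag ⟨i, hlt⟩ j, by rw [hi']; exact ⟨rfl, rfl⟩⟩
    · rintro ⟨e, h1, h2⟩
      match e with
      | .inl (i₀, j₀) =>
        obtain ⟨rfl, rfl⟩ := Prod.mk.inj h1
        obtain ⟨rfl, rfl⟩ := Prod.mk.inj h2
        simp
      | .inr (.inl (r, j₀)) =>
        obtain ⟨rfl, rfl⟩ := Prod.mk.inj h1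
        obtain ⟨rfl, rfl⟩ := Prod.mk.inj h2
        simp
      | .inr (.inr (r, j₀)) =>
        obtain ⟨rfl, rfl⟩ := Prod.mk.inj h1
        obtain ⟨rfl, rfl⟩ := Prod.mk.inj h2
        simp
  rw [Gkl, SimpleGraph.fromRel_adj, key u v, key v u]
  constructor
  · rintro ⟨-, ⟨e, h⟩ | ⟨e, h⟩⟩
    · exact ⟨e, Or.inl h⟩
    · exact ⟨e, Or.inr h⟩
  · rintro ⟨e, h | h⟩
    · exact ⟨by rw [← h.1, ← h.2]; exact e.src_ne_tgt hk, Or.inl ⟨e, h⟩⟩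
    · exact ⟨by rw [← h.1, ← h.2]; exact (e.src_ne_tgt hk).symm, Or.inr ⟨e, h⟩⟩

lemma EdgeIx.adj {k m : ℕ} (hk : 3 ≤ k) (e : EdgeIx k m) : (Gkl k (m + 1)).Adj e.src e.tgt :=
  (Gkl_adj_iff hk _ _).mpr ⟨e, Or.inl ⟨rfl, rfl⟩⟩

lemma edgeSet_eq_range {k m : ℕ} (hk : 3 ≤ k) :
    (Gkl k (m + 1)).edgeSet = Set.range (pair : EdgeIx k m → _) := by
  ext x
  induction x with
  | _ u v =>
    rw [SimpleGraph.mem_edgeSet, Gkl_adj_iff hk]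
    simp only [Set.mem_range, pair, Sym2.eq_iff]

lemma ncard_edgeSet {k m : ℕ} [NeZero k] (hk : 3 ≤ k) :
    (Gkl k (m + 1)).edgeSet.ncard = (m + 1) * k + (m * k + m * k) := by
  rw [edgeSet_eq_range hk, ← Set.image_univ, Set.ncard_image_of_injective _ (pair_injective hk),
    Set.ncard_univ, Nat.card_eq_fintype_card]
  simp [ZMod.card]

/-- The indicator of a proposition, mod 2. -/
noncomputable def ind (P : Prop) : ZMod 2 := if P then 1 else 0

lemma ite_eq_ind (P : Prop) {_ : Decidable P} : (if P then 1 else 0 : ZMod 2) = ind P := by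
  by_cases h : P <;> simp [h, ind]

@[simp] lemma ind_true : ind True = 1 := by simp [ind]
@[simp] lemma ind_false : ind False = 0 := by simp [ind]

lemma ind_and (P Q : Prop) : ind (P ∧ Q) = ind P * ind Q := by
  by_cases hP : P <;> by_cases hQ : Q <;> simp [hP, hQ]

lemma sum_mul_ind {α : Type*} [Fintype α] (g : α → ZMod 2) (c : α) :
    ∑ x, g x * ind (x = c) = g c := by
  rw [Finset.sum_eq_single c (fun x _ h => by simp [h]) (by simp)]
  simp

/-- The boundary at `(i, j)`: two horizontal edges, the two edges going up and the two coming from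
below. The sums over strips have at most one nonzero term. -/
lemma chainBd_eq {k m : ℕ} [NeZero k] (X : EdgeIx k m → ZMod 2) (i : Fin (m + 1)) (j : ZMod k) :
    chainBd src tgt X (i, j) = X (hor i j) + X (hor i (j - 1)) +
      (∑ r : Fin m, (X (vert r j) + X (diag r j)) * ind (r.castSucc = i)) +
      (∑ r : Fin m, (X (vert r j) + X (diag r (j - 1))) * ind (r.succ = i)) := by
  have hj : ∀ j' : ZMod k, j' + 1 = j ↔ j' = j - 1 := fun j' => by rw [eq_sub_iff_add_eq]
  have h1 : ∀ {n : ℕ} (φ : Fin n → Fin (m + 1)) (g : Fin n → ZMod k → ZMod 2) (c : ZMod k),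
      ∑ r, ∑ j', g r j' * (ind (φ r = i) * ind (j' = c)) = ∑ r, g r c * ind (φ r = i) := by
    intro n φ g c
    refine Finset.sum_congr rfl fun r _ => ?_
    rw [← sum_mul_ind (fun j' => g r j' * ind (φ r = i)) c]
    simp only [mul_assoc]
  rw [chainBd, sum_edgeIx]
  simp only [ite_eq_ind, src_hor, src_vert, src_diag, tgt_hor, tgt_vert, tgt_diag, Prod.mk.injEq,
    hj, ind_and, mul_add, Finset.sum_add_distrib, h1 (fun r : Fin m => r.castSucc),
    h1 (fun r : Fin m => r.succ), h1 (fun r : Fin (m + 1) => r), sum_mul_ind, add_mul]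
  ring

lemma sum_ind_castSucc {m : ℕ} (g : Fin m → ZMod 2) (s : Fin m) :
    ∑ r : Fin m, g r * ind (r.castSucc = s.castSucc) = g s := by
  simp only [Fin.castSucc_inj]
  exact sum_mul_ind g s

lemma sum_ind_castSucc_last {m : ℕ} (g : Fin m → ZMod 2) :
    ∑ r : Fin m, g r * ind (r.castSucc = Fin.last m) = 0 :=
  Finset.sum_eq_zero fun r _ => by simp [Fin.castSucc_ne_last r]

lemma sum_ind_succ {m : ℕ} (g : Fin m → ZMod 2) (s : Fin m) :
    ∑ r : Fin m, g r * ind (r.succ = s.succ) = g s := by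
  simp only [Fin.succ_inj]
  exact sum_mul_ind g s

lemma sum_ind_succ_zero {m : ℕ} (g : Fin m → ZMod 2) :
    ∑ r : Fin m, g r * ind (r.succ = 0) = 0 :=
  Finset.sum_eq_zero fun r _ => by simp [Fin.succ_ne_zero r]

lemma zmod_eq_of_sub_one {k : ℕ} [NeZero k] {α : Type*} {g : ZMod k → α}
    (h : ∀ j, g (j - 1) = g j) (j j' : ZMod k) : g j = g j' := by
  have key : ∀ n : ℕ, g (n : ZMod k) = g 0 := by
    intro n
    induction n with
    | zero => simp
    | succ n ih => rw [← h, ← ih]; simp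
  have h0 : ∀ j, g j = g 0 := fun j => by
    rw [← key j.val, ZMod.natCast_zmod_val]
  rw [h0 j, h0 j']

/-! ### Planarity -/

/-- Faces of `G_{k,m+1}`: the innermost face `inl true`, the outermost face `inl false`, the
triangles `upF r j` on `(r, j), (r, j+1), (r+1, j+1)` and `downF r j` on
`(r, j), (r+1, j), (r+1, j+1)`. -/
abbrev FaceIx (k m : ℕ) : Type := Bool ⊕ (Fin m × ZMod k) ⊕ (Fin m × ZMod k)

/-- The triangular face on `(r, j), (r, j+1), (r+1, j+1)`. -/
abbrev FaceIx.upF {k m : ℕ} (r : Fin m) (j : ZMod k) : FaceIx k m := Sum.inr (Sum.inl (r, j))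

/-- The triangular face on `(r, j), (r+1, j), (r+1, j+1)`. -/
abbrev FaceIx.downF {k m : ℕ} (r : Fin m) (j : ZMod k) : FaceIx k m := Sum.inr (Sum.inr (r, j))

/-- The face on the inner (or left) side of an edge. -/
def EdgeIx.faceA {k m : ℕ} : EdgeIx k m → FaceIx k m
  | .inl (i, j) => Fin.cases (motive := fun _ => FaceIx k m) (Sum.inl true)
      (fun r => FaceIx.downF r j) i
  | .inr (.inl (r, j)) => FaceIx.upF r (j - 1)
  | .inr (.inr (r, j)) => FaceIx.upF r j

/-- The face on the other side of an edge. -/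
def EdgeIx.faceB {k m : ℕ} : EdgeIx k m → FaceIx k m
  | .inl (i, j) => Fin.lastCases (motive := fun _ => FaceIx k m) (Sum.inl false)
      (fun r => FaceIx.upF r j) i
  | .inr (.inl (r, j)) => FaceIx.downF r j
  | .inr (.inr (r, j)) => FaceIx.downF r j

@[simp] lemma faceA_zero {k m : ℕ} (j : ZMod k) :
    (hor 0 j : EdgeIx k m).faceA = Sum.inl true := rfl
@[simp] lemma faceA_succ {k m : ℕ} (r : Fin m) (j : ZMod k) :
    (hor r.succ j : EdgeIx k m).faceA = FaceIx.downF r j := rfl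
@[simp] lemma faceB_last {k m : ℕ} (j : ZMod k) :
    (hor (Fin.last m) j : EdgeIx k m).faceB = Sum.inl false := by
  simp [EdgeIx.faceB]
@[simp] lemma faceB_castSucc {k m : ℕ} (r : Fin m) (j : ZMod k) :
    (hor r.castSucc j : EdgeIx k m).faceB = FaceIx.upF r j := by
  simp [EdgeIx.faceB]

/-- Faces are bounded by even chains. -/
lemma chainBd_coboundary {k m : ℕ} [NeZero k] (x : FaceIx k m → ZMod 2)
    (v : Fin (m + 1) × ZMod k) :
    chainBd src tgt (fun e : EdgeIx k m => x e.faceA + x e.faceB) v = 0 := by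
  obtain ⟨i, j⟩ := v
  rw [chainBd_eq]
  have hA : x (hor i j).faceA + x (hor i (j - 1)).faceA +
      ∑ r : Fin m, ((x (vert r j).faceA + x (vert r j).faceB) +
        (x (diag r (j - 1)).faceA + x (diag r (j - 1)).faceB)) * ind (r.succ = i) = 0 := by
    refine Fin.cases ?_ (fun s => ?_) i
    · rw [sum_ind_succ_zero]
      simp only [faceA_zero, zmod2_add_self, add_zero]
    · rw [sum_ind_succ, faceA_succ, faceA_succ]
      simp only [EdgeIx.faceA, EdgeIx.faceB]
      linear_combination zmod2_add_self (x (FaceIx.downF s j)) +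
        zmod2_add_self (x (FaceIx.downF s (j - 1))) + zmod2_add_self (x (FaceIx.upF s (j - 1)))
  have hB : x (hor i j).faceB + x (hor i (j - 1)).faceB +
      ∑ r : Fin m, ((x (vert r j).faceA + x (vert r j).faceB) +
        (x (diag r j).faceA + x (diag r j).faceB)) * ind (r.castSucc = i) = 0 := by
    refine Fin.lastCases ?_ (fun s => ?_) i
    · rw [sum_ind_castSucc_last]
      simp only [faceB_last, zmod2_add_self, add_zero]
    · rw [sum_ind_castSucc, faceB_castSucc, faceB_castSucc]
      simp only [EdgeIx.faceA, EdgeIx.faceB]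
      linear_combination zmod2_add_self (x (FaceIx.downF s j)) +
        zmod2_add_self (x (FaceIx.upF s j)) + zmod2_add_self (x (FaceIx.upF s (j - 1)))
  linear_combination hA + hB

/-- Every even chain is a sum of faces: the face potential is built row by row, starting from the
value `0` on the innermost face. -/
lemma exists_potential {k m : ℕ} [NeZero k] (X : EdgeIx k m → ZMod 2)
    (hX : ∀ v, chainBd src tgt X v = 0) :
    ∃ x : FaceIx k m → ZMod 2, ∀ e, X e = x e.faceA + x e.faceB := by
  -- `y i j` is the value on the face just inside the horizontal edge `hor i j`.
  obtain ⟨y, hy0, hys⟩ : ∃ y : Fin (m + 1) → ZMod k → ZMod 2, (∀ j, y 0 j = 0) ∧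
      ∀ r j, y (Fin.succ r) j = y r.castSucc j + X (hor r.castSucc j) + X (diag r j) :=
    ⟨Fin.induction (motive := fun _ => ZMod k → ZMod 2) (fun _ => 0)
      (fun r p j => p j + X (hor r.castSucc j) + X (diag r j)), fun _ => rfl, fun r j => rfl⟩
  have hbd : ∀ i j, X (hor i j) + X (hor i (j - 1)) +
      (∑ r : Fin m, (X (vert r j) + X (diag r j)) * ind (r.castSucc = i)) +
      (∑ r : Fin m, (X (vert r j) + X (diag r (j - 1))) * ind (r.succ = i)) = 0 := by
    intro i j
    rw [← chainBd_eq, hX]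
  have hinv : ∀ i j, y i (j - 1) + y i j =
      ∑ r : Fin m, (X (vert r j) + X (diag r (j - 1))) * ind (r.succ = i) := by
    intro i
    induction i using Fin.induction with
    | zero =>
      intro j
      rw [sum_ind_succ_zero, hy0, hy0, add_zero]
    | succ s ih =>
      intro j
      rw [sum_ind_succ, hys, hys]
      have h1 := hbd s.castSucc j
      rw [← ih j, sum_ind_castSucc] at h1
      linear_combination h1 - zmod2_add_self (X (vert s j))
  refine ⟨fun F => match F with
    | Sum.inl true => 0
    | Sum.inl false => y (Fin.last m) 0 + X (hor (Fin.last m) 0)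
    | Sum.inr (Sum.inl (r, j)) => y r.castSucc j + X (hor r.castSucc j)
    | Sum.inr (Sum.inr (r, j)) => y r.succ j, fun e => ?_⟩
  match e with
  | .inl (i, j) =>
    have hconst : ∀ j, y (Fin.last m) j + X (hor (Fin.last m) j) =
        y (Fin.last m) 0 + X (hor (Fin.last m) 0) := by
      intro j
      refine zmod_eq_of_sub_one (g := fun j => y (Fin.last m) j + X (hor (Fin.last m) j))
        (fun j => ?_) j 0
      have h1 := hbd (Fin.last m) j
      rw [← hinv (Fin.last m) j, sum_ind_castSucc_last] at h1
      linear_combination h1 - zmod2_add_self (y (Fin.last m) j) -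
        zmod2_add_self (X (hor (Fin.last m) j))
    have hA : (match (hor i j).faceA with
        | Sum.inl true => 0
        | Sum.inl false => y (Fin.last m) 0 + X (hor (Fin.last m) 0)
        | Sum.inr (Sum.inl (r, j)) => y r.castSucc j + X (hor r.castSucc j)
        | Sum.inr (Sum.inr (r, j)) => y r.succ j) = y i j := by
      refine Fin.cases ?_ (fun s => ?_) i
      · exact (hy0 j).symm
      · rfl
    have hB : (match (hor i j).faceB with
        | Sum.inl true => 0
        | Sum.inl false => y (Fin.last m) 0 + X (hor (Fin.last m) 0)
        | Sum.inr (Sum.inl (r, j)) => y r.castSucc j + X (hor r.castSucc j)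
        | Sum.inr (Sum.inr (r, j)) => y r.succ j) = y i j + X (hor i j) := by
      refine Fin.lastCases ?_ (fun s => ?_) i
      · rw [faceB_last]
        exact (hconst j).symm
      · rw [faceB_castSucc]
    refine Eq.trans ?_ (congrArg₂ (· + ·) hA hB).symm
    linear_combination -zmod2_add_self (y i j)
  | .inr (.inl (r, j)) =>
    simp only [EdgeIx.faceA, EdgeIx.faceB]
    have h1 := hbd r.castSucc j
    rw [← hinv r.castSucc j, sum_ind_castSucc] at h1
    rw [hys]
    linear_combination zmod2_add_self (X (vert r j)) - h1
  | .inr (.inr (r, j)) =>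
    simp only [EdgeIx.faceA, EdgeIx.faceB]
    rw [hys]
    linear_combination - zmod2_add_self (y r.castSucc j) - zmod2_add_self (X (hor r.castSucc j))

lemma isPlanar_Gkl {k m : ℕ} [NeZero k] (hk : 3 ≤ k) : IsPlanar (Gkl k (m + 1)) :=
  ⟨no_K5_minor (fun u v h => (Gkl_adj_iff hk u v).mp h) chainBd_coboundary exists_potential,
    no_K33_minor (fun u v h => (Gkl_adj_iff hk u v).mp h) chainBd_coboundary exists_potential⟩

/-! ### Connectivity -/

/-- Two vertices are joined by a walk avoiding `s`. Unlike reachability in the induced graph, this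
speaks of vertices of the full graph. -/
def Linked {k m : ℕ} (s : Set (Fin (m + 1) × ZMod k)) (u v : Fin (m + 1) × ZMod k) : Prop :=
  ∃ (hu : u ∈ sᶜ) (hv : v ∈ sᶜ), ((Gkl k (m + 1)).induce sᶜ).Reachable ⟨u, hu⟩ ⟨v, hv⟩

lemma Linked.refl {k m : ℕ} {s : Set (Fin (m + 1) × ZMod k)} {u : Fin (m + 1) × ZMod k}
    (hu : u ∉ s) : Linked s u u := ⟨hu, hu, SimpleGraph.Reachable.refl _⟩

lemma Linked.symm {k m : ℕ} {s : Set (Fin (m + 1) × ZMod k)} {u v : Fin (m + 1) × ZMod k}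
    (h : Linked s u v) : Linked s v u := by
  obtain ⟨hu, hv, h⟩ := h
  exact ⟨hv, hu, h.symm⟩

lemma Linked.trans {k m : ℕ} {s : Set (Fin (m + 1) × ZMod k)} {u v w : Fin (m + 1) × ZMod k}
    (h : Linked s u v) (h' : Linked s v w) : Linked s u w := by
  obtain ⟨hu, hv, h⟩ := h
  obtain ⟨_, hw, h'⟩ := h'
  exact ⟨hu, hw, h.trans h'⟩

lemma linked_edge {k m : ℕ} (hk : 3 ≤ k) {s : Set (Fin (m + 1) × ZMod k)} (e : EdgeIx k m)
    (h1 : e.src ∉ s) (h2 : e.tgt ∉ s) : Linked s e.src e.tgt :=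
  ⟨h1, h2, SimpleGraph.Adj.reachable (e.adj hk)⟩

/-- The columns of row `i` deleted by `s`. -/
noncomputable def delRow {k m : ℕ} [NeZero k] (s : Set (Fin (m + 1) × ZMod k)) (i : Fin (m + 1)) :
    Finset (ZMod k) := Finset.univ.filter fun j => (i, j) ∈ s

lemma mem_delRow {k m : ℕ} [NeZero k] {s : Set (Fin (m + 1) × ZMod k)} {i : Fin (m + 1)}
    {j : ZMod k} : j ∈ delRow s i ↔ (i, j) ∈ s := by simp [delRow]

lemma ncard_eq_sum_delRow {k m : ℕ} [NeZero k] (s : Set (Fin (m + 1) × ZMod k)) :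
    s.ncard = ∑ i, (delRow s i).card := by
  have h : s = ((Finset.univ.sigma (delRow s)).image fun x => (x.1, x.2) :
      Finset (Fin (m + 1) × ZMod k)) := by
    ext ⟨i, j⟩
    simp [delRow]
  conv_lhs => rw [h]
  rw [Set.ncard_coe_finset, Finset.card_image_of_injective, Finset.card_sigma]
  rintro ⟨a, b⟩ ⟨c, d⟩ h
  simp only [Prod.mk.injEq] at h
  obtain ⟨rfl, rfl⟩ := h
  rfl

lemma delRow_card_add_le {k m : ℕ} [NeZero k] (s : Set (Fin (m + 1) × ZMod k))
    {i i' : Fin (m + 1)} (h : i ≠ i') : (delRow s i).card + (delRow s i').card ≤ s.ncard := by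
  rw [ncard_eq_sum_delRow, ← Finset.sum_pair (f := fun i => (delRow s i).card) h]
  exact Finset.sum_le_sum_of_subset (Finset.subset_univ _)

lemma delRow_card_le {k m : ℕ} [NeZero k] (s : Set (Fin (m + 1) × ZMod k))
    (i : Fin (m + 1)) : (delRow s i).card ≤ s.ncard := by
  rw [ncard_eq_sum_delRow]
  exact Finset.single_le_sum (f := fun i => (delRow s i).card) (fun _ _ => Nat.zero_le _)
    (Finset.mem_univ i)

/-- A row stays connected when at most one of its vertices is deleted. -/
lemma linked_row {k m : ℕ} [NeZero k] (hk : 3 ≤ k) {s : Set (Fin (m + 1) × ZMod k)}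
    {i : Fin (m + 1)} (h : (delRow s i).card ≤ 1) {j j' : ZMod k} (hj : (i, j) ∉ s)
    (hj' : (i, j') ∉ s) : Linked s (i, j) (i, j') := by
  obtain ⟨c, hc⟩ : ∃ c, ∀ j, j ≠ c → (i, j) ∉ s := by
    rcases (delRow s i).eq_empty_or_nonempty with h0 | ⟨c, hc⟩
    · refine ⟨0, fun j _ hjs => ?_⟩
      have := mem_delRow.mpr hjs
      simp [h0] at this
    · refine ⟨c, fun j hne hjs => hne ?_⟩
      exact Finset.card_le_one.mp h j (mem_delRow.mpr hjs) c hc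
  have hc1 : (i, c + 1) ∉ s := hc _ (zmod_add_one_ne hk c)
  -- Walk around the row starting just after the column `c`.
  have walk : ∀ n : ℕ, n + 1 < k → Linked s (i, c + 1) (i, c + 1 + n) := by
    intro n
    induction n with
    | zero => intro _; simpa using Linked.refl hc1
    | succ n ih =>
      intro hn
      have hne : ∀ t : ℕ, t + 1 < k → c + 1 + (t : ZMod k) ≠ c := by
        intro t ht h
        have h0 : ((t + 1 : ℕ) : ZMod k) = 0 := by
          push_cast
          linear_combination h
        have := Nat.le_of_dvd (by omega) ((ZMod.natCast_eq_zero_iff _ _).mp h0)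
        omega
      have e := linked_edge hk (s := s) (hor i (c + 1 + (n : ZMod k)) : EdgeIx k m)
        (hc _ (hne n (by omega)))
        (hc _ (by have := hne (n + 1) hn; push_cast at this; rwa [← add_assoc] at this))
      have := (ih (by omega)).trans e
      push_cast
      rw [← add_assoc (c + 1)]
      exact this
  have all : ∀ j, (i, j) ∉ s → Linked s (i, c + 1) (i, j) := by
    intro j hj
    by_cases hjc : j = c
    · subst hjc
      exact (linked_edge hk (s := s) (hor i j : EdgeIx k m) hj hc1).symm
    · have hval : ((j - (c + 1)).val : ZMod k) = j - (c + 1) := ZMod.natCast_zmod_val _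
      have hlt : (j - (c + 1)).val + 1 < k := by
        have h1 := ZMod.val_lt (j - (c + 1))
        by_contra hcon
        have h2 : (j - (c + 1)).val + 1 = k := by omega
        have h3 : (((j - (c + 1)).val + 1 : ℕ) : ZMod k) = 0 := by rw [h2]; simp
        push_cast at h3
        rw [hval] at h3
        exact hjc (by linear_combination h3)
      have := walk _ hlt
      rw [hval] at this
      simpa using this
  exact (all j hj).symm.trans (all j' hj')

/-- If at most three vertices are deleted, all surviving vertices of two consecutive rows are
linked to each other. -/
lemma linked_strip {k m : ℕ} [NeZero k] (hk : 3 ≤ k) {s : Set (Fin (m + 1) × ZMod k)}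
    (hs : s.ncard ≤ 3) (r : Fin m) {j j' : ZMod k} (hj : (r.castSucc, j) ∉ s)
    (hj' : (r.succ, j') ∉ s) : Linked s (r.castSucc, j) (r.succ, j') := by
  have hsum := delRow_card_add_le s (fin_castSucc_ne_succ r)
  by_cases hA : (delRow s r.castSucc).card ≤ 1
  · by_cases hB : (delRow s r.succ).card ≤ 1
    · obtain ⟨c, hc⟩ : ∃ c, c ∉ delRow s r.castSucc ∪ delRow s r.succ := by
        by_contra! hcon
        have h1 : (Finset.univ : Finset (ZMod k)) ⊆ delRow s r.castSucc ∪ delRow s r.succ :=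
          fun c _ => hcon c
        have h2 := (Finset.card_le_card h1).trans (Finset.card_union_le _ _)
        rw [Finset.card_univ, ZMod.card] at h2
        omega
      simp only [Finset.mem_union, mem_delRow, not_or] at hc
      exact (linked_row hk hA hj hc.1).trans ((linked_edge hk (vert r c : EdgeIx k m) hc.1 hc.2).trans
        (linked_row hk hB hc.2 hj'))
    · -- A surviving vertex of a damaged row keeps a neighbour in the adjacent row.
      by_cases h0 : (r.castSucc, j') ∈ s
      · have h1 : (r.castSucc, j' - 1) ∉ s := by
          intro h1
          have := Finset.card_le_one.mp hA _ (mem_delRow.mpr h0) _ (mem_delRow.mpr h1)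
          exact zmod_one_ne_zero hk (by linear_combination this)
        have e := linked_edge hk (s := s) (diag r (j' - 1) : EdgeIx k m) h1 (by simpa using hj')
        simp only [src_diag, tgt_diag, sub_add_cancel] at e
        exact (linked_row hk hA hj h1).trans e
      · exact (linked_row hk hA hj h0).trans (linked_edge hk (vert r j' : EdgeIx k m) h0 hj')
  · have hB : (delRow s r.succ).card ≤ 1 := by omega
    by_cases h0 : (r.succ, j) ∈ s
    · have h1 : (r.succ, j + 1) ∉ s := by
        intro h1
        have := Finset.card_le_one.mp hB _ (mem_delRow.mpr h0) _ (mem_delRow.mpr h1)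
        exact zmod_add_one_ne hk j this.symm
      exact (linked_edge hk (diag r j : EdgeIx k m) hj h1).trans (linked_row hk hB h1 hj')
    · exact (linked_edge hk (vert r j : EdgeIx k m) hj h0).trans (linked_row hk hB h0 hj')

lemma linked_all {k m : ℕ} [NeZero k] (hk : 3 ≤ k) (hm : 1 ≤ m)
    {s : Set (Fin (m + 1) × ZMod k)} (hs : s.ncard ≤ 3) (hs' : s.ncard < k ∨ m = 1)
    {u v : Fin (m + 1) × ZMod k} (hu : u ∉ s) (hv : v ∉ s) : Linked s u v := by
  have hsurv : ∀ i, (delRow s i).card < k → ∃ j, (i, j) ∉ s := by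
    intro i hi
    by_contra! hcon
    have h1 : delRow s i = Finset.univ := by
      ext j
      simp [mem_delRow, hcon j]
    rw [h1, Finset.card_univ, ZMod.card] at hi
    omega
  have hlt : ∀ (d : ℕ) (i i' : Fin (m + 1)) (j j' : ZMod k), (i' : ℕ) = i + d + 1 →
      (i, j) ∉ s → (i', j') ∉ s → Linked s (i, j) (i', j') := by
    intro d
    induction d with
    | zero =>
      intro i i' j j' h hj hj'
      have hi : (i : ℕ) < m := by omega
      have e1 : i = (⟨i, hi⟩ : Fin m).castSucc := rfl
      have e2 : i' = (⟨i, hi⟩ : Fin m).succ := by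
        ext
        simpa using h
      rw [e2] at hj' ⊢
      exact linked_strip hk hs ⟨i, hi⟩ hj hj'
    | succ d ih =>
      intro i i' j j' h hj hj'
      have hi : (i : ℕ) + d + 1 < m := by omega
      have hsk : s.ncard < k := hs'.resolve_right (by omega)
      obtain ⟨c, hc⟩ := hsurv (⟨i + d + 1, hi⟩ : Fin m).castSucc
        ((delRow_card_le s _).trans_lt hsk)
      have e2 : i' = (⟨i + d + 1, hi⟩ : Fin m).succ := by
        ext
        simp
        omega
      rw [e2] at hj' ⊢
      exact (ih i _ j c rfl hj hc).trans (linked_strip hk hs _ hc hj')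
  obtain ⟨i, j⟩ := u
  obtain ⟨i', j'⟩ := v
  rcases lt_trichotomy (i : ℕ) i' with h | h | h
  · exact hlt (i' - i - 1) i i' j j' (by omega) hu hv
  · obtain rfl : i = i' := Fin.ext h
    by_cases hA : (delRow s i).card ≤ 1
    · exact linked_row hk hA hu hv
    · -- Detour through an adjacent row, which has lost at most one vertex.
      by_cases hi : (i : ℕ) < m
      · have e1 : i = (⟨i, hi⟩ : Fin m).castSucc := rfl
        have hsum := delRow_card_add_le s (fin_castSucc_ne_succ ⟨i, hi⟩)
        rw [← e1] at hsum
        obtain ⟨c, hc⟩ := hsurv (⟨i, hi⟩ : Fin m).succ (by omega)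
        exact (linked_strip hk hs ⟨i, hi⟩ hu hc).trans (linked_strip hk hs ⟨i, hi⟩ hv hc).symm
      · have hi' : (i : ℕ) - 1 < m := by omega
        have e1 : i = (⟨i - 1, hi'⟩ : Fin m).succ := by
          ext
          simp
          omega
        have hsum := delRow_card_add_le s (fin_castSucc_ne_succ ⟨i - 1, hi'⟩)
        rw [← e1] at hsum
        obtain ⟨c, hc⟩ := hsurv (⟨i - 1, hi'⟩ : Fin m).castSucc (by omega)
        have l1 := linked_strip hk hs ⟨i - 1, hi'⟩ hc (e1 ▸ hu)
        have l2 := linked_strip hk hs ⟨i - 1, hi'⟩ hc (e1 ▸ hv)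
        rw [← e1] at l1 l2
        exact l1.symm.trans l2
  · exact (hlt (i - i' - 1) i' i j' j (by omega) hv hu).symm

lemma connected_induce_compl {k m : ℕ} [NeZero k] (hk : 3 ≤ k) (hm : 1 ≤ m)
    {s : Set (Fin (m + 1) × ZMod k)} (hs : s.ncard ≤ 3) (hs' : s.ncard < k ∨ m = 1) :
    ((Gkl k (m + 1)).induce sᶜ).Connected := by
  have : Nonempty ↥(sᶜ) := by
    by_contra hcon
    have hall : s = Set.univ := by
      ext v
      simp only [Set.mem_univ, iff_true]
      by_contra hv
      exact hcon ⟨v, hv⟩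
    rw [hall, Set.ncard_univ, Nat.card_eq_fintype_card, Fintype.card_prod, Fintype.card_fin,
      ZMod.card] at hs
    nlinarith
  refine SimpleGraph.Connected.mk fun u v => ?_
  obtain ⟨_, _, h⟩ := linked_all hk hm hs hs' u.2 v.2
  exact h

lemma connected_Gkl {k m : ℕ} [NeZero k] (hk : 3 ≤ k) (hm : 1 ≤ m) :
    (Gkl k (m + 1)).Connected := by
  refine SimpleGraph.Connected.mk fun u v => ?_
  obtain ⟨_, _, h⟩ := linked_all hk hm (s := ∅) (by simp) (Or.inl (by simp; omega))
    (Set.notMem_empty u) (Set.notMem_empty v)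
  exact h.map (SimpleGraph.Embedding.induce _).toHom

lemma isKConnected_Gkl {k m : ℕ} [NeZero k] (hk : 3 ≤ k) (hm : 1 ≤ m) (c : ℕ) (hc : c ≤ 4)
    (hc' : c ≤ k ∨ m = 1) : IsKConnected c (Gkl k (m + 1)) := by
  refine ⟨?_, fun s hs => connected_induce_compl hk hm (by omega) ?_⟩
  · rw [Fintype.card_prod, Fintype.card_fin, ZMod.card]
    nlinarith
  · rcases hc' with h | h
    · exact Or.inl (by omega)
    · exact Or.inr h

/-! ### Light even edge sets -/

/-- The edge weights `2` (horizontal) and `k - 1` (vertical and diagonal), chosen so that the `k`-cycles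
`C^i` and the triangles of `G_{k,ℓ}` all have the same weight `2k`. -/
def EdgeIx.wt {k m : ℕ} : EdgeIx k m → ℕ
  | .inl (_, _) => 2
  | .inr (.inl (_, _)) => k - 1
  | .inr (.inr (_, _)) => k - 1

/-- Vertical and diagonal edges. -/
def EdgeIx.IsCross {k m : ℕ} (e : EdgeIx k m) : Prop := ∀ i j, e ≠ hor i j

lemma EdgeIx.isCross_vert {k m : ℕ} (r : Fin m) (j : ZMod k) : (vert r j : EdgeIx k m).IsCross :=
  fun _ _ h => by simp at h

lemma EdgeIx.isCross_diag {k m : ℕ} (r : Fin m) (j : ZMod k) : (diag r j : EdgeIx k m).IsCross :=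
  fun _ _ h => by simp at h

lemma EdgeIx.not_isCross_hor {k m : ℕ} (i : Fin (m + 1)) (j : ZMod k) :
    ¬ (hor i j : EdgeIx k m).IsCross := fun h => h i j rfl

lemma EdgeIx.IsCross.wt_eq {k m : ℕ} {e : EdgeIx k m} (h : e.IsCross) : e.wt = k - 1 := by
  match e with
  | .inl (i, j) => exact absurd rfl (h i j)
  | .inr (.inl (_, _)) => rfl
  | .inr (.inr (_, _)) => rfl

lemma EdgeIx.wt_pos {k m : ℕ} (hk : 3 ≤ k) (e : EdgeIx k m) : 0 < e.wt := by
  match e with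
  | .inl (i, j) => exact Nat.two_pos
  | .inr (.inl (_, _)) => simp only [wt]; omega
  | .inr (.inr (_, _)) => simp only [wt]; omega

lemma EdgeIx.IsCross.rows {k m : ℕ} {e : EdgeIx k m} (h : e.IsCross) :
    (e.tgt.1 : ℕ) = (e.src.1 : ℕ) + 1 := by
  match e with
  | .inl (i, j) => exact absurd rfl (h i j)
  | .inr (.inl (_, _)) => simp
  | .inr (.inr (_, _)) => simp

/-- Index type for the cycles of minimal weight: the cycles `C^i`, and the two kinds of triangles. -/
abbrev TightIx (k m : ℕ) : Type := Fin (m + 1) ⊕ (Fin m × ZMod k) ⊕ (Fin m × ZMod k)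

/-- The cycle `C^i`. -/
abbrev TightIx.row {k m : ℕ} (i : Fin (m + 1)) : TightIx k m := Sum.inl i

/-- The triangle on `(r, j), (r, j+1), (r+1, j+1)`. -/
abbrev TightIx.up {k m : ℕ} (r : Fin m) (j : ZMod k) : TightIx k m :=
  Sum.inr (Sum.inl (r, j))

/-- The triangle on `(r, j), (r+1, j), (r+1, j+1)`. -/
abbrev TightIx.down {k m : ℕ} (r : Fin m) (j : ZMod k) : TightIx k m :=
  Sum.inr (Sum.inr (r, j))

open TightIx

/-- The edges of a cycle of minimal weight. -/
noncomputable def tightEdges {k m : ℕ} [NeZero k] : TightIx k m → Finset (EdgeIx k m)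
  | .inl i => Finset.univ.image (hor i)
  | .inr (.inl (r, j)) => {hor r.castSucc j, vert r (j + 1), diag r j}
  | .inr (.inr (r, j)) => {hor r.succ j, vert r j, diag r j}

section tightEdges

variable {k m : ℕ} [NeZero k]

@[simp] lemma hor_mem_row (i i' : Fin (m + 1)) (j : ZMod k) :
    (hor i j : EdgeIx k m) ∈ tightEdges (row i') ↔ i' = i := by simp [tightEdges]
@[simp] lemma vert_mem_row (i : Fin (m + 1)) (r : Fin m) (j : ZMod k) :
    (vert r j : EdgeIx k m) ∉ tightEdges (row i) := by simp [tightEdges]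
@[simp] lemma diag_mem_row (i : Fin (m + 1)) (r : Fin m) (j : ZMod k) :
    (diag r j : EdgeIx k m) ∉ tightEdges (row i) := by simp [tightEdges]
@[simp] lemma hor_mem_up (i : Fin (m + 1)) (j : ZMod k) (r : Fin m) (j' : ZMod k) :
    (hor i j : EdgeIx k m) ∈ tightEdges (up r j') ↔ i = r.castSucc ∧ j = j' := by
  simp [tightEdges]
@[simp] lemma vert_mem_up (s : Fin m) (j : ZMod k) (r : Fin m) (j' : ZMod k) :
    (vert s j : EdgeIx k m) ∈ tightEdges (up r j') ↔ s = r ∧ j = j' + 1 := by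
  simp [tightEdges]
@[simp] lemma diag_mem_up (s : Fin m) (j : ZMod k) (r : Fin m) (j' : ZMod k) :
    (diag s j : EdgeIx k m) ∈ tightEdges (up r j') ↔ s = r ∧ j = j' := by
  simp [tightEdges]
@[simp] lemma hor_mem_down (i : Fin (m + 1)) (j : ZMod k) (r : Fin m) (j' : ZMod k) :
    (hor i j : EdgeIx k m) ∈ tightEdges (down r j') ↔ i = r.succ ∧ j = j' := by
  simp [tightEdges]
@[simp] lemma vert_mem_down (s : Fin m) (j : ZMod k) (r : Fin m) (j' : ZMod k) :
    (vert s j : EdgeIx k m) ∈ tightEdges (down r j') ↔ s = r ∧ j = j' := by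
  simp [tightEdges]
@[simp] lemma diag_mem_down (s : Fin m) (j : ZMod k) (r : Fin m) (j' : ZMod k) :
    (diag s j : EdgeIx k m) ∈ tightEdges (down r j') ↔ s = r ∧ j = j' := by
  simp [tightEdges]

lemma sum_wt_tightEdges (hk : 3 ≤ k) (t : TightIx k m) : ∑ e ∈ tightEdges t, e.wt = 2 * k := by
  match t with
  | .inl i =>
    rw [tightEdges, Finset.sum_image (fun a _ b _ h => by simpa using h)]
    simp [wt, ZMod.card, mul_comm]
  | .inr (.inl (r, j)) =>
    rw [tightEdges, Finset.sum_insert (by simp), Finset.sum_insert (by simp),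
      Finset.sum_singleton]
    simp only [wt]
    omega
  | .inr (.inr (r, j)) =>
    rw [tightEdges, Finset.sum_insert (by simp), Finset.sum_insert (by simp),
      Finset.sum_singleton]
    simp only [wt]
    omega

lemma tightEdges_injective :
    Function.Injective (tightEdges : TightIx k m → Finset (EdgeIx k m)) := by
  intro t t' h
  have hm : ∀ e, e ∈ tightEdges t ↔ e ∈ tightEdges t' := fun e => by rw [h]
  match t, t' with
  | .inl i, .inl i' => 
    have := hm (hor i 0)
    simp only [hor_mem_row, true_iff] at this
    rw [this]
  | .inl i, .inr (.inl (r, j)) => simpa using hm (diag r j)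
  | .inl i, .inr (.inr (r, j)) => simpa using hm (diag r j)
  | .inr (.inl (r, j)), .inl i => simpa using hm (diag r j)
  | .inr (.inr (r, j)), .inl i => simpa using hm (diag r j)
  | .inr (.inl (r, j)), .inr (.inl (r', j')) =>
    obtain ⟨rfl, rfl⟩ : r = r' ∧ j = j' := by simpa using hm (diag r j)
    rfl
  | .inr (.inr (r, j)), .inr (.inr (r', j')) =>
    obtain ⟨rfl, rfl⟩ : r = r' ∧ j = j' := by simpa using hm (diag r j)
    rfl
  | .inr (.inl (r, j)), .inr (.inr (r', j')) =>
    obtain ⟨rfl, rfl⟩ : r = r' ∧ j = j' := by simpa using hm (diag r j)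
    simpa [fin_castSucc_ne_succ] using hm (hor r.castSucc j)
  | .inr (.inr (r, j)), .inr (.inl (r', j')) =>
    obtain ⟨rfl, rfl⟩ : r = r' ∧ j = j' := by simpa using hm (diag r j)
    simpa [fin_succ_ne_castSucc] using hm (hor r.succ j)

end tightEdges

lemma exists_mem_compl_of_sum {ε : Type*} [Fintype ε] {Y : ε → ZMod 2} (hY : ∑ e, Y e = 0)
    (s : Finset ε) (hs : ∑ e ∈ s, Y e = 1) : ∃ e ∉ s, Y e ≠ 0 := by
  by_contra! hcon
  rw [Finset.sum_subset (Finset.subset_univ s) (fun e _ he => hcon e he), hY] at hs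
  exact zero_ne_one hs

/-- An even edge set contains an even number of vertical and diagonal edges, because the triangles
around a strip form a closed sequence. -/
lemma sum_cross_eq_zero {k m : ℕ} [NeZero k] (X : EdgeIx k m → ZMod 2)
    (hX : ∀ v, chainBd src tgt X v = 0) : ∑ e, X e * ind e.IsCross = 0 := by
  obtain ⟨x, hx⟩ := exists_potential X hX
  rw [sum_edgeIx]
  simp only [isCross_vert, isCross_diag, not_isCross_hor, ind_true, ind_false, mul_one, mul_zero,
    Finset.sum_const_zero, zero_add]
  rw [← Finset.sum_add_distrib]
  refine Finset.sum_eq_zero fun r _ => ?_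
  simp only [hx, EdgeIx.faceA, EdgeIx.faceB, Finset.sum_add_distrib]
  have hshift := (Equiv.subRight (1 : ZMod k)).sum_comp (fun j => x (FaceIx.upF r j))
  simp only [Equiv.subRight_apply] at hshift
  rw [hshift]
  linear_combination zmod2_add_self (∑ j, x (FaceIx.upF r j)) +
    zmod2_add_self (∑ j, x (FaceIx.downF r j))

section light

variable {k m : ℕ} {F : Finset (EdgeIx k m)}

lemma heavy_of_two_hor (hk : 3 ≤ k) {e₁ e₂ : EdgeIx k m} {i i' : Fin (m + 1)} {j j' : ZMod k}
    (h₁ : e₁ ∈ F) (h₂ : e₂ ∈ F) (hne : e₁ ≠ e₂) (hc₁ : e₁.IsCross) (hc₂ : e₂.IsCross)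
    (hh : hor i j ∈ F) (hh' : hor i' j' ∈ F) (hne' : (hor i j : EdgeIx k m) ≠ hor i' j') :
    2 * k < ∑ e ∈ F, e.wt := by
  have hsub : ({e₁, e₂, hor i j, hor i' j'} : Finset (EdgeIx k m)) ⊆ F := by
    intro e he
    simp only [Finset.mem_insert, Finset.mem_singleton] at he
    rcases he with rfl | rfl | rfl | rfl <;> assumption
  refine lt_of_lt_of_le ?_ (Finset.sum_le_sum_of_subset hsub)
  rw [Finset.sum_insert, Finset.sum_insert, Finset.sum_insert, Finset.sum_singleton, hc₁.wt_eq,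
    hc₂.wt_eq]
  · simp only [wt]
    omega
  · simpa using hne'
  · simp only [Finset.mem_insert, Finset.mem_singleton, not_or]
    exact ⟨hc₂ _ _, hc₂ _ _⟩
  · simp only [Finset.mem_insert, Finset.mem_singleton, not_or]
    exact ⟨hne, hc₁ _ _, hc₁ _ _⟩

variable [NeZero k]

/-- In an even edge set whose only vertical or diagonal edge at `v` is `e`, a horizontal edge
leaves `v`. -/
lemma exists_hor_at (hk : 3 ≤ k) (hF : ∀ v, chainBd src tgt (fun e => ind (e ∈ F)) v = 0)
    {e : EdgeIx k m} (he : e ∈ F) (v : Fin (m + 1) × ZMod k) (hv : e.src = v ∨ e.tgt = v)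
    (hno : ∀ e' ∈ F, e' ≠ e → e'.IsCross → ¬ (e'.src = v ∨ e'.tgt = v)) :
    ∃ j, hor v.1 j ∈ F ∧ (j = v.2 ∨ j + 1 = v.2) := by
  obtain ⟨e', hne, he', hv'⟩ := exists_other_edge (hF v) (κ := e) (by simp [he])
    (e.src_ne_tgt hk) hv
  have hmem : e' ∈ F := by
    by_contra hcon
    simp [hcon] at he'
  have hnc : ¬ e'.IsCross := fun hc => hno e' hmem hne hc hv'
  match e' with
  | .inl (i, j) =>
    rcases hv' with rfl | rfl
    · exact ⟨j, hmem, Or.inl rfl⟩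
    · exact ⟨j, hmem, Or.inr rfl⟩
  | .inr (.inl (r, j)) => exact absurd (isCross_vert r j) hnc
  | .inr (.inr (r, j)) => exact absurd (isCross_diag r j) hnc

/-- Suppose `e₁`, `e₂` are the only vertical or diagonal edges of an even set, and `(i, j)`,
`(i, j + 1)` are ends of `e₁`, respectively `e₂`, that they do not share. Then the set has two
horizontal edges, which makes it heavy, or contains the edge joining these ends. -/
lemma heavy_or_hor (hk : 3 ≤ k) (hF : ∀ v, chainBd src tgt (fun e => ind (e ∈ F)) v = 0)
    {e₁ e₂ : EdgeIx k m} (h₁ : e₁ ∈ F) (h₂ : e₂ ∈ F) (hne : e₁ ≠ e₂) (hc₁ : e₁.IsCross)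
    (hc₂ : e₂.IsCross) (hB : ∀ e ∈ F, e.IsCross → e = e₁ ∨ e = e₂) {i : Fin (m + 1)} {j : ZMod k}
    (hv₁ : e₁.src = (i, j) ∨ e₁.tgt = (i, j)) (hv₁' : ¬ (e₂.src = (i, j) ∨ e₂.tgt = (i, j)))
    (hv₂ : e₂.src = (i, j + 1) ∨ e₂.tgt = (i, j + 1))
    (hv₂' : ¬ (e₁.src = (i, j + 1) ∨ e₁.tgt = (i, j + 1))) :
    2 * k < ∑ e ∈ F, e.wt ∨ hor i j ∈ F := by
  obtain ⟨a, ha, ha'⟩ := exists_hor_at hk hF h₁ _ hv₁ fun e' he' hne' hc' => by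
    rcases hB e' he' hc' with rfl | rfl
    · exact absurd rfl hne'
    · exact hv₁'
  obtain ⟨b, hb, hb'⟩ := exists_hor_at hk hF h₂ _ hv₂ fun e' he' hne' hc' => by
    rcases hB e' he' hc' with rfl | rfl
    · exact hv₂'
    · exact absurd rfl hne'
  dsimp only at ha ha' hb hb'
  by_cases hab : a = b
  · subst hab
    right
    rcases hb' with hb' | hb'
    · rcases ha' with rfl | ha'
      · exact ha
      · exact absurd ha' (by rw [hb']; exact zmod_add_two_ne hk j)
    · rwa [add_right_cancel hb'] at ha
  · left
    exact heavy_of_two_hor hk h₁ h₂ hne hc₁ hc₂ ha hb (by simpa using hab)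

/-- If two ends of vertical or diagonal edges lie in different rows and each is met by only one such
edge, the even set has horizontal edges in both rows. -/
lemma heavy_of_rows (hk : 3 ≤ k) (hF : ∀ v, chainBd src tgt (fun e => ind (e ∈ F)) v = 0)
    {e₁ e₂ : EdgeIx k m} (h₁ : e₁ ∈ F) (h₂ : e₂ ∈ F) (hne : e₁ ≠ e₂) (hc₁ : e₁.IsCross)
    (hc₂ : e₂.IsCross) {e e' : EdgeIx k m} (he : e ∈ F) (he' : e' ∈ F)
    {v v' : Fin (m + 1) × ZMod k} (hv : e.src = v ∨ e.tgt = v) (hv' : e'.src = v' ∨ e'.tgt = v')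
    (hno : ∀ e₀ ∈ F, e₀ ≠ e → e₀.IsCross → ¬ (e₀.src = v ∨ e₀.tgt = v))
    (hno' : ∀ e₀ ∈ F, e₀ ≠ e' → e₀.IsCross → ¬ (e₀.src = v' ∨ e₀.tgt = v'))
    (hvv : (v.1 : ℕ) ≠ v'.1) : 2 * k < ∑ e ∈ F, e.wt := by
  obtain ⟨a, ha, -⟩ := exists_hor_at hk hF he _ hv hno
  obtain ⟨b, hb, -⟩ := exists_hor_at hk hF he' _ hv' hno'
  refine heavy_of_two_hor hk h₁ h₂ hne hc₁ hc₂ ha hb fun h => hvv ?_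
  have := Sum.inl.inj h
  rw [(Prod.mk.inj this).1]

/-- A nonempty even edge set contains a cycle `C^i` or a triangle, or is heavier than these. -/
lemma exists_tight_or_heavy (hk : 3 ≤ k) (hF : ∀ v, chainBd src tgt (fun e => ind (e ∈ F)) v = 0)
    (hne : F.Nonempty) : (∃ t, tightEdges t ⊆ F) ∨ 2 * k < ∑ e ∈ F, e.wt := by
  by_cases hcross : ∀ e ∈ F, ¬ e.IsCross
  · -- without vertical and diagonal edges, horizontal edges continue around their row
    left
    obtain ⟨e, he⟩ := hne
    match e with
    | .inr (.inl (r, j)) => exact absurd (isCross_vert r j) (hcross _ he)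
    | .inr (.inr (r, j)) => exact absurd (isCross_diag r j) (hcross _ he)
    | .inl (i, j) =>
      have hv : ∀ r j, vert r j ∉ F := fun r j h => hcross _ h (isCross_vert r j)
      have hd : ∀ r j, diag r j ∉ F := fun r j h => hcross _ h (isCross_diag r j)
      have hstep : ∀ j', ind (hor i (j' - 1) ∈ F) = ind (hor i j' ∈ F) := by
        intro j'
        have := hF (i, j')
        rw [chainBd_eq] at this
        simp only [hv, hd, ind_false, add_zero, zero_mul, Finset.sum_const_zero] at this
        linear_combination this - zmod2_add_self (ind (hor i j' ∈ F))
      refine ⟨row i, fun e' he' => ?_⟩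
      simp only [tightEdges, Finset.mem_image, Finset.mem_univ, true_and] at he'
      obtain ⟨j', rfl⟩ := he'
      have h1 := zmod_eq_of_sub_one (g := fun j => ind (hor i j ∈ F)) hstep j j'
      by_contra hcon
      simp [he, hcon] at h1
  push Not at hcross
  obtain ⟨e₁, h₁, hc₁⟩ := hcross
  have hsum := sum_cross_eq_zero _ hF
  have hmem : ∀ e, ind (e ∈ F) * ind e.IsCross ≠ 0 → e ∈ F ∧ e.IsCross := by
    intro e he
    constructor <;> by_contra hcon <;> simp [hcon] at he
  obtain ⟨e₂, hne₂, he₂⟩ := exists_mem_compl_of_sum hsum {e₁} (by simp [h₁, hc₁])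
  obtain ⟨h₂, hc₂⟩ := hmem _ he₂
  have hne12 : e₁ ≠ e₂ := fun h => hne₂ (by simp [h])
  by_cases hB : ∀ e ∈ F, e.IsCross → e = e₁ ∨ e = e₂
  swap
  · -- three cross edges force a fourth one
    right
    push Not at hB
    obtain ⟨e₃, h₃, hc₃, h13, h23⟩ := hB
    have hs3 : ∀ (f : EdgeIx k m → ZMod 2), ∑ e ∈ ({e₁, e₂, e₃} : Finset (EdgeIx k m)), f e
        = f e₁ + (f e₂ + f e₃) := fun f => by
      rw [Finset.sum_insert (by simp [hne12, h13.symm]), Finset.sum_insert (by simp [h23.symm]),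
        Finset.sum_singleton]
    obtain ⟨e₄, hne₄, he₄⟩ := exists_mem_compl_of_sum hsum {e₁, e₂, e₃} (by
      rw [hs3]
      simp only [h₁, h₂, h₃, hc₁, hc₂, hc₃, ind_true, mul_one]
      decide)
    obtain ⟨h₄, hc₄⟩ := hmem _ he₄
    have hsub : ({e₄, e₁, e₂, e₃} : Finset (EdgeIx k m)) ⊆ F := by
      intro e he
      simp only [Finset.mem_insert, Finset.mem_singleton] at he
      rcases he with rfl | rfl | rfl | rfl <;> assumption
    refine lt_of_lt_of_le ?_ (Finset.sum_le_sum_of_subset hsub)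
    rw [Finset.sum_insert hne₄, Finset.sum_insert (by simp [hne12, h13.symm]),
      Finset.sum_insert (by simp [h23.symm]), Finset.sum_singleton, hc₁.wt_eq,
      hc₂.wt_eq, hc₃.wt_eq, hc₄.wt_eq]
    omega
  have other₁ : ∀ v, ¬ (e₂.src = v ∨ e₂.tgt = v) →
      ∀ e₀ ∈ F, e₀ ≠ e₁ → e₀.IsCross → ¬ (e₀.src = v ∨ e₀.tgt = v) := by
    intro v hv e₀ he₀ hne₀ hc₀
    rw [(hB e₀ he₀ hc₀).resolve_left hne₀]
    exact hv
  have other₂ : ∀ v, ¬ (e₁.src = v ∨ e₁.tgt = v) →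
      ∀ e₀ ∈ F, e₀ ≠ e₂ → e₀.IsCross → ¬ (e₀.src = v ∨ e₀.tgt = v) := by
    intro v hv e₀ he₀ hne₀ hc₀
    rw [(hB e₀ he₀ hc₀).resolve_right hne₀]
    exact hv
  have r1 := hc₁.rows
  have r2 := hc₂.rows
  by_cases hst : e₂.src = e₁.tgt
  · right
    have hrow : (e₂.src.1 : ℕ) = e₁.tgt.1 := by rw [hst]
    refine heavy_of_rows hk hF h₁ h₂ hne12 hc₁ hc₂ h₁ h₂ (Or.inl rfl) (Or.inr rfl)
      (other₁ _ ?_) (other₂ _ ?_) ?_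
    · rintro (h | h) <;> have := congrArg (fun v => (v.1 : ℕ)) h <;> omega
    · rintro (h | h) <;> have := congrArg (fun v => (v.1 : ℕ)) h <;> omega
    · omega
  by_cases hts : e₂.tgt = e₁.src
  · right
    have hrow : (e₂.tgt.1 : ℕ) = e₁.src.1 := by rw [hts]
    refine heavy_of_rows hk hF h₁ h₂ hne12 hc₁ hc₂ h₁ h₂ (Or.inr rfl) (Or.inl rfl)
      (other₁ _ ?_) (other₂ _ ?_) ?_
    · rintro (h | h) <;> have := congrArg (fun v => (v.1 : ℕ)) h <;> omega
    · rintro (h | h) <;> have := congrArg (fun v => (v.1 : ℕ)) h <;> omega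
    · omega
  by_cases hss : e₂.src = e₁.src
  · have key : ∀ (r : Fin m) (j : ZMod k), vert r j ∈ F → diag r j ∈ F →
        (∀ e ∈ F, e.IsCross → e = vert r j ∨ e = diag r j) →
        (∃ t, tightEdges t ⊆ F) ∨ 2 * k < ∑ e ∈ F, e.wt := by
      intro r j hv hd hB'
      rcases heavy_or_hor (i := r.succ) (j := j) hk hF hv hd (by simp) (isCross_vert r j) (isCross_diag r j) hB'
        (by simp) (by simp [fin_castSucc_ne_succ, zmod_one_ne_zero hk]) (by simp)
        (by simp [fin_castSucc_ne_succ, zmod_one_ne_zero hk]) with h | h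
      · exact Or.inr h
      · refine Or.inl ⟨down r j, fun e he => ?_⟩
        simp only [tightEdges, Finset.mem_insert, Finset.mem_singleton] at he
        rcases he with rfl | rfl | rfl <;> assumption
    match e₁, e₂ with
    | .inl (i, j), _ => exact absurd hc₁ (not_isCross_hor i j)
    | _, .inl (i, j) => exact absurd hc₂ (not_isCross_hor i j)
    | .inr (.inl (r, j)), .inr (.inl (r', j')) =>
      simp at hss hne12
      exact absurd hss.2.symm (hne12 hss.1.symm)
    | .inr (.inr (r, j)), .inr (.inr (r', j')) =>
      simp at hss hne12
      exact absurd hss.2.symm (hne12 hss.1.symm)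
    | .inr (.inl (r, j)), .inr (.inr (r', j')) =>
      simp at hss
      obtain ⟨rfl, rfl⟩ := hss
      exact key _ _ h₁ h₂ hB
    | .inr (.inr (r, j)), .inr (.inl (r', j')) =>
      simp at hss
      obtain ⟨rfl, rfl⟩ := hss
      exact key _ _ h₂ h₁ fun e he hc => (hB e he hc).symm
  by_cases htt : e₂.tgt = e₁.tgt
  · have key : ∀ (r : Fin m) (j : ZMod k), vert r (j + 1) ∈ F → diag r j ∈ F →
        (∀ e ∈ F, e.IsCross → e = diag r j ∨ e = vert r (j + 1)) →
        (∃ t, tightEdges t ⊆ F) ∨ 2 * k < ∑ e ∈ F, e.wt := by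
      intro r j hv hd hB'
      rcases heavy_or_hor (i := r.castSucc) (j := j) hk hF hd hv (by simp) (isCross_diag r j) (isCross_vert r _) hB'
        (by simp) (by simp [fin_succ_ne_castSucc, zmod_one_ne_zero hk]) (by simp)
        (by simp [fin_succ_ne_castSucc, zmod_one_ne_zero hk]) with h | h
      · exact Or.inr h
      · refine Or.inl ⟨up r j, fun e he => ?_⟩
        simp only [tightEdges, Finset.mem_insert, Finset.mem_singleton] at he
        rcases he with rfl | rfl | rfl <;> assumption
    match e₁, e₂ with
    | .inl (i, j), _ => exact absurd hc₁ (not_isCross_hor i j)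
    | _, .inl (i, j) => exact absurd hc₂ (not_isCross_hor i j)
    | .inr (.inl (r, j)), .inr (.inl (r', j')) =>
      simp at htt hne12
      exact absurd htt.2.symm (hne12 htt.1.symm)
    | .inr (.inr (r, j)), .inr (.inr (r', j')) =>
      simp at htt hne12
      exact absurd htt.2.symm (hne12 htt.1.symm)
    | .inr (.inl (r, j)), .inr (.inr (r', j')) =>
      simp at htt
      obtain ⟨rfl, rfl⟩ := htt
      exact key _ _ h₁ h₂ fun e he hc => (hB e he hc).symm
    | .inr (.inr (r, j)), .inr (.inl (r', j')) =>
      simp at htt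
      obtain ⟨rfl, rfl⟩ := htt
      exact key _ _ h₂ h₁ hB
  · right
    refine heavy_of_rows hk hF h₁ h₂ hne12 hc₁ hc₂ h₁ h₁ (Or.inl rfl) (Or.inr rfl)
      (other₁ _ ?_) (other₁ _ ?_) (by omega)
    · rintro (h | h)
      exacts [hss h, hts h]
    · rintro (h | h)
      exacts [hst h, htt h]

/-- Nonempty even edge sets have weight at least `2k`, with equality only for the cycles `C^i` and
the triangles. -/
lemma two_mul_le_sum_wt (hk : 3 ≤ k) (hF : ∀ v, chainBd src tgt (fun e => ind (e ∈ F)) v = 0)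
    (hne : F.Nonempty) :
    2 * k ≤ ∑ e ∈ F, e.wt ∧ (∑ e ∈ F, e.wt = 2 * k → ∃ t, F = tightEdges t) := by
  rcases exists_tight_or_heavy hk hF hne with ⟨t, ht⟩ | h
  · rw [← sum_wt_tightEdges hk t]
    refine ⟨Finset.sum_le_sum_of_subset ht, fun h => ⟨t, ?_⟩⟩
    by_contra hcon
    obtain ⟨e, he, he'⟩ := Finset.exists_of_ssubset (Finset.ssubset_iff_subset_ne.mpr ⟨ht, fun h => hcon h.symm⟩)
    have := Finset.sum_lt_sum_of_subset (f := EdgeIx.wt) ht he he' (e.wt_pos hk) (by simp)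
    omega
  · exact ⟨h.le, fun h' => absurd h' (by omega)⟩

end light

/-! ### Cycles as edge sets -/

/-- The subgraph formed by a set of edges and their ends. -/
def edgeSub {k m : ℕ} (hk : 3 ≤ k) (F : Finset (EdgeIx k m)) : (Gkl k (m + 1)).Subgraph where
  verts := {v | ∃ e ∈ F, e.src = v ∨ e.tgt = v}
  Adj u v := ∃ e ∈ F, e.pair = s(u, v)
  adj_sub := by
    rintro u v ⟨e, -, he⟩
    exact (Gkl_adj_iff hk u v).mpr ⟨e, by simpa [pair, Sym2.eq_iff] using he⟩
  edge_vert := by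
    rintro u v ⟨e, he, he'⟩
    refine ⟨e, he, ?_⟩
    rcases Sym2.eq_iff.mp he' with h | h
    · exact Or.inl h.1
    · exact Or.inr h.2
  symm := ⟨by
    rintro u v ⟨e, he, he'⟩
    exact ⟨e, he, by rw [he', Sym2.eq_swap]⟩⟩

/-- The edge indices of a subgraph. -/
noncomputable def edgeFin {k m : ℕ} [NeZero k] (C : (Gkl k (m + 1)).Subgraph) :
    Finset (EdgeIx k m) :=
  Finset.univ.filter fun e => e.pair ∈ C.edgeSet

lemma mem_edgeFin {k m : ℕ} [NeZero k] (C : (Gkl k (m + 1)).Subgraph) (e : EdgeIx k m) :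
    e ∈ edgeFin C ↔ e.pair ∈ C.edgeSet := by simp [edgeFin]

lemma pair_mem_edgeSub {k m : ℕ} (hk : 3 ≤ k) (F : Finset (EdgeIx k m)) (e : EdgeIx k m) :
    e.pair ∈ (edgeSub hk F).edgeSet ↔ e ∈ F := by
  constructor
  · rintro ⟨e', he', h⟩
    rwa [← pair_injective hk (h : e'.pair = e.pair)]
  · exact fun he => ⟨e, he, rfl⟩

lemma edgeFin_edgeSub {k m : ℕ} [NeZero k] (hk : 3 ≤ k) (F : Finset (EdgeIx k m)) :
    edgeFin (edgeSub hk F) = F := by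
  ext e
  rw [mem_edgeFin, pair_mem_edgeSub]

lemma exists_pair_eq {k m : ℕ} (hk : 3 ≤ k) {C : (Gkl k (m + 1)).Subgraph}
    {u v : Fin (m + 1) × ZMod k} (h : C.Adj u v) : ∃ e : EdgeIx k m, e.pair = s(u, v) := by
  have : s(u, v) ∈ (Gkl k (m + 1)).edgeSet := C.adj_sub h
  rwa [edgeSet_eq_range hk] at this

lemma IsCycleSubgraph.exists_adj {V : Type*} {G : SimpleGraph V} {C : G.Subgraph}
    (hC : IsCycleSubgraph C) {v : V} (hv : v ∈ C.verts) :
    ∃ a b, a ≠ b ∧ ∀ w, C.Adj v w ↔ w = a ∨ w = b := by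
  obtain ⟨a, b, hab, h⟩ := Set.ncard_eq_two.mp (hC.2 v hv)
  refine ⟨a, b, hab, fun w => ?_⟩
  have : w ∈ C.neighborSet v ↔ w ∈ ({a, b} : Set V) := by rw [h]
  simpa using this

lemma edgeSub_edgeFin {k m : ℕ} [NeZero k] (hk : 3 ≤ k) {C : (Gkl k (m + 1)).Subgraph}
    (hC : IsCycleSubgraph C) : edgeSub hk (edgeFin C) = C := by
  have hadj : ∀ u v, (edgeSub hk (edgeFin C)).Adj u v ↔ C.Adj u v := by
    intro u v
    constructor
    · rintro ⟨e, he, h⟩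
      rw [mem_edgeFin, h] at he
      exact he
    · intro h
      obtain ⟨e, he⟩ := exists_pair_eq hk h
      exact ⟨e, (mem_edgeFin C e).mpr (by rw [he]; exact h), he⟩
  refine Subgraph.ext ?_ (funext fun u => funext fun v => propext (hadj u v))
  ext v
  constructor
  · rintro ⟨e, he, h⟩
    rw [mem_edgeFin] at he
    have he' : C.Adj e.src e.tgt := he
    rcases h with rfl | rfl
    · exact C.edge_vert he'
    · exact C.edge_vert he'.symm
  · intro hv
    obtain ⟨a, b, -, h⟩ := hC.exists_adj hv
    exact (edgeSub hk (edgeFin C)).edge_vert ((hadj v a).mpr ((h a).mpr (Or.inl rfl)))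

lemma edgeFin_nonempty {k m : ℕ} [NeZero k] (hk : 3 ≤ k) {C : (Gkl k (m + 1)).Subgraph}
    (hC : IsCycleSubgraph C) : (edgeFin C).Nonempty := by
  obtain ⟨v⟩ := hC.1.nonempty
  obtain ⟨a, b, -, h⟩ := hC.exists_adj v.2
  have hva := (h a).mpr (Or.inl rfl)
  obtain ⟨e, he⟩ := exists_pair_eq hk hva
  exact ⟨e, (mem_edgeFin C e).mpr (by rw [he]; exact hva)⟩

/-- The edge set of a cycle is even. -/
lemma chainBd_edgeFin {k m : ℕ} [NeZero k] (hk : 3 ≤ k) {C : (Gkl k (m + 1)).Subgraph}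
    (hC : IsCycleSubgraph C) (v : Fin (m + 1) × ZMod k) :
    chainBd src tgt (fun e : EdgeIx k m => ind (e ∈ edgeFin C)) v = 0 := by
  -- edges at `v` in terms of neighbours of `v`
  have hinc : ∀ e : EdgeIx k m, e ∈ edgeFin C → (e.src = v ∨ e.tgt = v) →
      ∃ w, C.Adj v w ∧ e.pair = s(v, w) := by
    rintro e he (rfl | rfl)
    · exact ⟨e.tgt, (mem_edgeFin C e).mp he, rfl⟩
    · exact ⟨e.src, Subgraph.Adj.symm ((mem_edgeFin C e).mp he), by rw [pair, Sym2.eq_swap]⟩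
  by_cases hv : v ∈ C.verts
  swap
  · refine Finset.sum_eq_zero fun e _ => ?_
    by_cases he : e ∈ edgeFin C
    · have h : ¬ (e.src = v ∨ e.tgt = v) := fun h => by
        obtain ⟨w, hw, -⟩ := hinc e he h
        exact hv (C.edge_vert hw)
      push Not at h
      simp [h.1, h.2]
    · simp [he]
  obtain ⟨a, b, hab, h⟩ := hC.exists_adj hv
  have hva := (h a).mpr (Or.inl rfl)
  have hvb := (h b).mpr (Or.inr rfl)
  obtain ⟨ea, hea⟩ := exists_pair_eq hk hva
  obtain ⟨eb, heb⟩ := exists_pair_eq hk hvb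
  have hea' : ea ∈ edgeFin C := (mem_edgeFin C ea).mpr (by rw [hea]; exact hva)
  have heb' : eb ∈ edgeFin C := (mem_edgeFin C eb).mpr (by rw [heb]; exact hvb)
  have hne : ea ≠ eb := by
    rintro rfl
    rw [hea] at heb
    exact hab (Sym2.congr_right.mp heb)
  have hone : ∀ (e : EdgeIx k m) (w), e.pair = s(v, w) →
      ind (e.src = v) + ind (e.tgt = v) = 1 := by
    intro e w he
    have := e.src_ne_tgt hk
    rcases Sym2.eq_iff.mp he with ⟨rfl, rfl⟩ | ⟨rfl, rfl⟩
    · simp [this.symm]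
    · simp [this]
  rw [chainBd, Finset.sum_eq_add ea eb hne]
  · simp only [ite_eq_ind]
    rw [hone ea a hea, hone eb b heb]
    simp only [hea', heb', ind_true, mul_one]
    decide
  · rintro e - ⟨hna, hnb⟩
    by_cases he : e ∈ edgeFin C
    · have h' : ¬ (e.src = v ∨ e.tgt = v) := fun h' => by
        obtain ⟨w, hw, hw'⟩ := hinc e he h'
        rcases (h w).mp hw with rfl | rfl
        · exact hna (pair_injective hk (hw'.trans hea.symm))
        · exact hnb (pair_injective hk (hw'.trans heb.symm))
      push Not at h'
      simp [h'.1, h'.2]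
    · simp [he]
  · simp
  · simp

/-- The cycles of minimal weight, as subgraphs. -/
noncomputable def tightCyc {k m : ℕ} [NeZero k] (hk : 3 ≤ k) (t : TightIx k m) :
    (Gkl k (m + 1)).Subgraph :=
  edgeSub hk (tightEdges t)

lemma tightCyc_injective {k m : ℕ} [NeZero k] (hk : 3 ≤ k) :
    Function.Injective (tightCyc hk : TightIx k m → _) := by
  intro t t' h
  apply tightEdges_injective
  rw [← edgeFin_edgeSub hk (tightEdges t), ← edgeFin_edgeSub hk (tightEdges t')]
  exact congrArg edgeFin h

lemma isCycle_of_triangle {V : Type*} {G : SimpleGraph V} (C : G.Subgraph) (a b c : V) (hab : a ≠ b)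
    (hbc : b ≠ c) (hac : a ≠ c) (hV : ∀ v, v ∈ C.verts ↔ v = a ∨ v = b ∨ v = c)
    (h1 : C.Adj a b) (h2 : C.Adj b c) (h3 : C.Adj a c) : IsCycleSubgraph C := by
  have hnb : ∀ u v w, (∀ x, x ∈ C.verts ↔ x = u ∨ x = v ∨ x = w) → v ≠ w → C.Adj u v →
      C.Adj u w → (C.neighborSet u).ncard = 2 := by
    intro u v w hx hvw huv huw
    have : C.neighborSet u = {v, w} := by
      ext x
      simp only [Subgraph.mem_neighborSet, Set.mem_insert_iff, Set.mem_singleton_iff]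
      constructor
      · intro h
        rcases (hx x).mp (C.edge_vert h.symm) with rfl | h'
        · exact absurd rfl h.ne
        · exact h'
      · rintro (rfl | rfl)
        exacts [huv, huw]
    rw [this, Set.ncard_pair hvw]
  constructor
  · have hroot : ∀ v : C.verts, C.coe.Reachable ⟨a, (hV a).mpr (Or.inl rfl)⟩ v := by
      rintro ⟨v, hv⟩
      rcases (hV v).mp hv with rfl | rfl | rfl
      · exact Reachable.refl _
      · exact Adj.reachable (by simpa using h1)
      · exact Adj.reachable (by simpa using h3)
    have : Nonempty C.verts := ⟨⟨a, (hV a).mpr (Or.inl rfl)⟩⟩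
    exact Connected.mk fun u v => (hroot u).symm.trans (hroot v)
  · intro v hv
    rcases (hV v).mp hv with rfl | rfl | rfl
    · exact hnb _ b c hV hbc h1 h3
    · exact hnb _ a c (fun x => by rw [hV]; exact or_left_comm) hac h1.symm h2
    · exact hnb _ a b (fun x => by rw [hV]; tauto) hab h3.symm h2.symm

lemma isCycle_tightCyc {k m : ℕ} [NeZero k] (hk : 3 ≤ k) (t : TightIx k m) :
    IsCycleSubgraph (tightCyc hk t) := by
  have h1 := zmod_one_ne_zero hk
  match t with
  | .inr (.inl (r, j)) =>
    refine isCycle_of_triangle _ (r.castSucc, j) (r.castSucc, j + 1) (r.succ, j + 1) (by simp [h1])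
      (by simp [fin_castSucc_ne_succ]) (by simp [fin_castSucc_ne_succ]) ?_
      ⟨hor r.castSucc j, by simp, rfl⟩ ⟨vert r (j + 1), by simp, rfl⟩ ⟨diag r j, by simp, rfl⟩
    intro v
    change (∃ e ∈ tightEdges (up r j), e.src = v ∨ e.tgt = v) ↔ _
    simp only [tightEdges, Finset.mem_insert, Finset.mem_singleton, exists_eq_or_imp,
      exists_eq_left, src_hor, src_vert, src_diag, tgt_hor, tgt_vert, tgt_diag, eq_comm (b := v)]
    tauto
  | .inr (.inr (r, j)) =>
    refine isCycle_of_triangle _ (r.castSucc, j) (r.succ, j) (r.succ, j + 1)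
      (by simp [fin_castSucc_ne_succ]) (by simp [h1]) (by simp [fin_castSucc_ne_succ]) ?_
      ⟨vert r j, by simp, rfl⟩ ⟨hor r.succ j, by simp, rfl⟩ ⟨diag r j, by simp, rfl⟩
    intro v
    change (∃ e ∈ tightEdges (down r j), e.src = v ∨ e.tgt = v) ↔ _
    simp only [tightEdges, Finset.mem_insert, Finset.mem_singleton, exists_eq_or_imp,
      exists_eq_left, src_hor, src_vert, src_diag, tgt_hor, tgt_vert, tgt_diag, eq_comm (b := v)]
    tauto
  | .inl i =>
    have hadj : ∀ j, (tightCyc hk (row i : TightIx k m)).Adj (i, j) (i, j + 1) := fun j =>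
      ⟨hor i j, by simp, rfl⟩
    have hadj' : ∀ u v, (tightCyc hk (row i : TightIx k m)).Adj u v →
        ∃ j, (u = (i, j) ∧ v = (i, j + 1)) ∨ (v = (i, j) ∧ u = (i, j + 1)) := by
      rintro u v ⟨e, he, h⟩
      simp only [tightEdges, Finset.mem_image, Finset.mem_univ, true_and] at he
      obtain ⟨j, rfl⟩ := he
      refine ⟨j, ?_⟩
      rcases Sym2.eq_iff.mp h with ⟨h, h'⟩ | ⟨h, h'⟩
      · exact Or.inl ⟨h.symm, h'.symm⟩
      · exact Or.inr ⟨h.symm, h'.symm⟩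
    have hV : ∀ v, v ∈ (tightCyc hk (row i : TightIx k m)).verts → ∃ j, v = (i, j) := by
      rintro v ⟨e, he, h⟩
      simp only [tightEdges, Finset.mem_image, Finset.mem_univ, true_and] at he
      obtain ⟨j, rfl⟩ := he
      rcases h with rfl | rfl
      exacts [⟨j, rfl⟩, ⟨j + 1, rfl⟩]
    have hV' : ∀ j, (i, j) ∈ (tightCyc hk (row i : TightIx k m)).verts := fun j =>
      Subgraph.edge_vert _ (hadj j)
    constructor
    · have hroot : ∀ n : ℕ, (tightCyc hk (row i : TightIx k m)).coe.Reachable ⟨(i, 0), hV' 0⟩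
          ⟨(i, (n : ZMod k)), hV' n⟩ := by
        intro n
        induction n with
        | zero => simp
        | succ n ih =>
          refine ih.trans (Adj.reachable ?_)
          rw [Subgraph.coe_adj]
          push_cast
          exact hadj n
      have hroot' : ∀ v, (tightCyc hk (row i : TightIx k m)).coe.Reachable ⟨(i, 0), hV' 0⟩ v := by
        rintro ⟨v, hv⟩
        obtain ⟨j, rfl⟩ := hV v hv
        have := hroot j.val
        simpa only [ZMod.natCast_zmod_val] using this
      have : Nonempty (tightCyc hk (row i : TightIx k m)).verts := ⟨⟨(i, 0), hV' 0⟩⟩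
      exact Connected.mk fun u v => (hroot' u).symm.trans (hroot' v)
    · intro v hv
      obtain ⟨j, rfl⟩ := hV v hv
      have : (tightCyc hk (row i : TightIx k m)).neighborSet (i, j) = {(i, j + 1), (i, j - 1)} := by
        ext x
        simp only [Subgraph.mem_neighborSet, Set.mem_insert_iff, Set.mem_singleton_iff]
        constructor
        · intro h
          obtain ⟨j', ⟨h1, h2⟩ | ⟨h1, h2⟩⟩ := hadj' _ _ h
          · rw [(Prod.mk.inj h1).2]
            exact Or.inl h2
          · rw [(Prod.mk.inj h2).2]
            exact Or.inr (by rw [h1, add_sub_cancel_right])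
        · rintro (rfl | rfl)
          · exact hadj j
          · have := (hadj (j - 1)).symm
            rwa [sub_add_cancel] at this
      rw [this, Set.ncard_pair]
      intro h
      have h := (Prod.mk.inj h).2
      refine zmod_add_two_ne hk (j - 1) ?_
      rw [sub_add_cancel, h]

/-- The cycles of weight at most `2k` are those indexed by `TightIx`. -/
lemma cycle_weight {k m : ℕ} [NeZero k] (hk : 3 ≤ k) {C : (Gkl k (m + 1)).Subgraph}
    (hC : IsCycleSubgraph C) : 2 * k ≤ ∑ e ∈ edgeFin C, e.wt ∧
      (∑ e ∈ edgeFin C, e.wt = 2 * k → ∃ t, tightCyc hk t = C) := by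
  obtain ⟨h1, h2⟩ := two_mul_le_sum_wt hk (chainBd_edgeFin hk hC) (edgeFin_nonempty hk hC)
  refine ⟨h1, fun h => ?_⟩
  obtain ⟨t, ht⟩ := h2 h
  exact ⟨t, by rw [tightCyc, ← ht, edgeSub_edgeFin hk hC]⟩

/-! ### Double covers of minimal size -/

lemma sum_map_weight {α ε : Type*} [Fintype ε] {E : α → Finset ε}
    [∀ e, DecidablePred fun C => e ∈ E C] (S : Multiset α) (w : ε → ℕ) :
    (S.map fun C => ∑ e ∈ E C, w e).sum = ∑ e, w e * S.countP (fun C => e ∈ E C) := by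
  induction S using Multiset.induction with
  | empty => simp
  | cons C S ih =>
    have hC : ∑ e ∈ E C, w e = ∑ e, w e * if e ∈ E C then 1 else 0 := by
      rw [← Finset.sum_subset (Finset.subset_univ (E C)) (fun e _ he => by simp [he])]
      exact Finset.sum_congr rfl fun e he => by rw [if_pos he, mul_one]
    rw [Multiset.map_cons, Multiset.sum_cons, ih, hC, add_comm, ← Finset.sum_add_distrib]
    refine Finset.sum_congr rfl fun e _ => ?_
    rw [Multiset.countP_cons, mul_add]

lemma countP_eq_sum_count {T : Type*} [Fintype T] {_ : DecidableEq T} (M : Multiset T)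
    (p : T → Prop) {_ : DecidablePred p} : M.countP p = ∑ t, if p t then M.count t else 0 := by
  induction M using Multiset.induction with
  | empty => simp
  | cons t M ih =>
    have : ∀ t', (if p t' then (t ::ₘ M).count t' else 0) =
        (if p t' then M.count t' else 0) + if t' = t then (if p t then 1 else 0) else 0 := by
      intro t'
      rw [Multiset.count_cons]
      by_cases h : t' = t
      · subst h
        by_cases hp : p t' <;> simp [hp]
      · simp [h]
    simp only [this, Finset.sum_add_distrib, ← ih, Multiset.countP_cons]
    rw [Finset.sum_eq_single t (by intro b _ hb; simp [hb]) (by simp)]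
    simp

lemma sum_ite_unique {T : Type*} [Fintype T] {p : T → Prop} {_ : DecidablePred p} (g : T → ℕ) (c : T)
    (h : ∀ t, p t ↔ t = c) : (∑ t, if p t then g t else 0) = g c := by
  rw [Finset.sum_eq_single c (fun t _ ht => if_neg (mt (h t).mp ht)) (by simp)]
  exact if_pos ((h c).mpr rfl)

section cover

variable {k m : ℕ} [NeZero k]

/-- How often a family of cycles of minimal weight covers an edge. -/
noncomputable def cov (M : Multiset (TightIx k m)) (e : EdgeIx k m) : ℕ :=
  M.countP fun t => e ∈ tightEdges t

lemma cov_eq (M : Multiset (TightIx k m)) (e : EdgeIx k m) : cov M e =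
    (∑ i, if e ∈ tightEdges (row i) then M.count (row i) else 0) +
    ((∑ p : Fin m × ZMod k, if e ∈ tightEdges (up p.1 p.2) then M.count (up p.1 p.2) else 0) +
    ∑ p : Fin m × ZMod k, if e ∈ tightEdges (down p.1 p.2) then M.count (down p.1 p.2) else 0) := by
  rw [cov, countP_eq_sum_count, Fintype.sum_sum_type, Fintype.sum_sum_type]

lemma cov_vert (M : Multiset (TightIx k m)) (r : Fin m) (j : ZMod k) :
    cov M (vert r j) = M.count (up r (j - 1)) + M.count (down r j) := by
  rw [cov_eq, sum_ite_unique (fun p : Fin m × ZMod k => M.count (up p.1 p.2)) (r, j - 1),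
    sum_ite_unique (fun p : Fin m × ZMod k => M.count (down p.1 p.2)) (r, j)]
  · simp
  · rintro ⟨s, j'⟩
    simp [eq_comm]
  · rintro ⟨s, j'⟩
    simp only [vert_mem_up, Prod.mk.injEq, eq_sub_iff_add_eq]
    simp [eq_comm]

lemma cov_diag (M : Multiset (TightIx k m)) (r : Fin m) (j : ZMod k) :
    cov M (diag r j) = M.count (up r j) + M.count (down r j) := by
  rw [cov_eq, sum_ite_unique (fun p : Fin m × ZMod k => M.count (up p.1 p.2)) (r, j),
    sum_ite_unique (fun p : Fin m × ZMod k => M.count (down p.1 p.2)) (r, j)]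
  · simp
  · rintro ⟨s, j'⟩
    simp [eq_comm]
  · rintro ⟨s, j'⟩
    simp [eq_comm]

lemma cov_hor (M : Multiset (TightIx k m)) (i : Fin (m + 1)) (j : ZMod k) :
    cov M (hor i j) = M.count (row i) +
      ((if h : (i : ℕ) < m then M.count (up ⟨i, h⟩ j) else 0) +
      if h : 0 < (i : ℕ) then M.count (down ⟨i - 1, by omega⟩ j) else 0) := by
  rw [cov_eq]
  congr 1
  · exact sum_ite_unique (fun i => M.count (row i)) i (by simp)
  congr 1
  · split_ifs with h
    · refine sum_ite_unique (fun p : Fin m × ZMod k => M.count (up p.1 p.2)) (⟨i, h⟩, j) ?_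
      rintro ⟨s, j'⟩
      simp [Fin.ext_iff, eq_comm]
    · refine Finset.sum_eq_zero fun p _ => if_neg ?_
      simp only [hor_mem_up, Fin.ext_iff, Fin.val_castSucc]
      omega
  · split_ifs with h
    · refine sum_ite_unique (fun p : Fin m × ZMod k => M.count (down p.1 p.2))
        (⟨i - 1, by omega⟩, j) ?_
      rintro ⟨s, j'⟩
      simp only [hor_mem_down, Fin.ext_iff, Fin.val_succ, Prod.mk.injEq, eq_comm (a := j)]
      refine and_congr_left fun _ => ?_
      omega
    · refine Finset.sum_eq_zero fun p _ => if_neg ?_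
      simp only [hor_mem_down, Fin.ext_iff, Fin.val_succ]
      omega

lemma sum_wt : ∑ e : EdgeIx k m, e.wt = 2 * k * (k * m + 1) := by
  rw [sum_edgeIx]
  obtain ⟨n, rfl⟩ : ∃ n, k = n + 1 := ⟨k - 1, by have := NeZero.pos k; omega⟩
  simp only [wt, Finset.sum_const, Finset.card_univ, ZMod.card, Fintype.card_fin, smul_eq_mul,
    Nat.add_sub_cancel]
  ring

/-- The total weight of a double cover is `2k` times the number of faces, so a double cover has as
many cycles as there are faces only when all its cycles have minimal weight. -/
lemma isCDC_card_iff (hk : 3 ≤ k) (S : Multiset (Gkl k (m + 1)).Subgraph) :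
    (IsCDC (Gkl k (m + 1)) S ∧ Multiset.card S = 2 * k * m + 2) ↔
      ∃ M : Multiset (TightIx k m), M.map (tightCyc hk) = S ∧ ∀ e, cov M e = 2 := by
  have htot : IsCDC (Gkl k (m + 1)) S →
      (S.map fun C => ∑ e ∈ edgeFin C, e.wt).sum = 2 * k * (2 * k * m + 2) := by
    intro h
    rw [sum_map_weight]
    have : ∀ e : EdgeIx k m, S.countP (fun C => e ∈ edgeFin C) = 2 := fun e => by
      rw [← h.2 e.pair (by rw [edgeSet_eq_range hk]; exact ⟨e, rfl⟩)]
      exact Multiset.countP_congr rfl fun C _ => propext (mem_edgeFin C e)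
    simp only [this]
    rw [← Finset.sum_mul, sum_wt]
    ring
  have hcov : ∀ (M : Multiset (TightIx k m)) (e : EdgeIx k m),
      (M.map (tightCyc hk)).countP (fun C => e.pair ∈ C.edgeSet) = cov M e := by
    intro M e
    rw [Multiset.countP_map, ← Multiset.countP_eq_card_filter, cov]
    simp only [tightCyc, pair_mem_edgeSub]
  constructor
  · rintro ⟨h, hcard⟩
    have hle : ∀ C ∈ S, 2 * k ≤ ∑ e ∈ edgeFin C, e.wt := fun C hC => (cycle_weight hk (h.1 C hC)).1
    have hall : ∀ C ∈ S, ∑ e ∈ edgeFin C, e.wt = 2 * k := by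
      intro C hC
      refine le_antisymm ?_ (hle C hC)
      have ht := htot h
      obtain ⟨S', rfl⟩ := Multiset.exists_cons_of_mem hC
      rw [Multiset.map_cons, Multiset.sum_cons] at ht
      have hS' := Multiset.card_nsmul_le_sum (s := S'.map fun C => ∑ e ∈ edgeFin C, e.wt)
        (a := 2 * k) (by
          intro x hx
          obtain ⟨C', hC', rfl⟩ := Multiset.mem_map.mp hx
          exact hle C' (Multiset.mem_cons_of_mem hC'))
      rw [Multiset.card_map, smul_eq_mul] at hS'
      rw [← hcard, Multiset.card_cons] at ht
      nlinarith
    have hex : ∀ C ∈ S, ∃ t, tightCyc hk t = C := fun C hC =>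
      (cycle_weight hk (h.1 C hC)).2 (hall C hC)
    have : CanLift (Gkl k (m + 1)).Subgraph (TightIx k m) (tightCyc hk)
        (fun C => ∃ t, tightCyc hk t = C) := ⟨fun C h => h⟩
    obtain ⟨M, rfl⟩ : ∃ M : Multiset (TightIx k m), M.map (tightCyc hk) = S :=
      (Multiset.canLift (tightCyc hk) fun C => ∃ t, tightCyc hk t = C).prf S hex
    exact ⟨M, rfl, fun e => by
      rw [← hcov]
      exact h.2 _ (by rw [edgeSet_eq_range hk]; exact ⟨e, rfl⟩)⟩
  · rintro ⟨M, rfl, hM⟩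
    have hcdc : IsCDC (Gkl k (m + 1)) (M.map (tightCyc hk)) := by
      constructor
      · intro C hC
        obtain ⟨t, -, rfl⟩ := Multiset.mem_map.mp hC
        exact isCycle_tightCyc hk t
      · intro x hx
        rw [edgeSet_eq_range hk] at hx
        obtain ⟨e, rfl⟩ := hx
        rw [hcov, hM]
    refine ⟨hcdc, ?_⟩
    have ht := htot hcdc
    rw [Multiset.map_map] at ht
    simp only [Function.comp_def, tightCyc, edgeFin_edgeSub, sum_wt_tightEdges hk, Multiset.map_const',
      Multiset.sum_replicate, smul_eq_mul] at ht
    rw [Multiset.card_map]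
    rw [mul_comm] at ht
    exact Nat.eq_of_mul_eq_mul_left (by omega) ht

/-- A family of cycles of minimal weight covering every edge once: the cycle `C^a`, the `up`
triangles in the strips inside it and the `down` triangles in the strips outside it. -/
noncomputable def singleCover (a : Fin (m + 1)) : Multiset (TightIx k m) :=
  (Finset.univ.filter fun t : TightIx k m => match t with
    | .inl i => i = a
    | .inr (.inl (r, _)) => (r : ℕ) < a
    | .inr (.inr (r, _)) => (a : ℕ) ≤ r).val

lemma count_filter_val {T : Type*} [Fintype T] {_ : DecidableEq T} (p : T → Prop)
    {_ : DecidablePred p} (t : T) :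
    (Finset.univ.filter p).val.count t = if p t then 1 else 0 := by
  by_cases h : p t
  · rw [if_pos h]
    exact Multiset.count_eq_one_of_mem (Finset.nodup _) (by simp [h])
  · rw [if_neg h]
    exact Multiset.count_eq_zero_of_notMem (by simp [h])

@[simp] lemma count_row_singleCover (a i : Fin (m + 1)) :
    (singleCover a : Multiset (TightIx k m)).count (row i) = if (i : ℕ) = a then 1 else 0 := by
  rw [singleCover, count_filter_val]
  simp [Fin.ext_iff]

@[simp] lemma count_up_singleCover (a : Fin (m + 1)) (r : Fin m) (j : ZMod k) :
    (singleCover a : Multiset (TightIx k m)).count (up r j) = if (r : ℕ) < a then 1 else 0 := by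
  rw [singleCover, count_filter_val]
  simp

@[simp] lemma count_down_singleCover (a : Fin (m + 1)) (r : Fin m) (j : ZMod k) :
    (singleCover a : Multiset (TightIx k m)).count (down r j) = if (a : ℕ) ≤ r then 1 else 0 := by
  rw [singleCover, count_filter_val]
  simp

lemma cov_singleCover (a : Fin (m + 1)) (e : EdgeIx k m) : cov (singleCover a) e = 1 := by
  match e with
  | .inr (.inl (r, j)) =>
    rw [cov_vert, count_up_singleCover, count_down_singleCover]
    split_ifs <;> omega
  | .inr (.inr (r, j)) =>
    rw [cov_diag, count_up_singleCover, count_down_singleCover]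
    split_ifs <;> omega
  | .inl (i, j) =>
    rw [cov_hor]
    simp only [count_row_singleCover, count_up_singleCover, count_down_singleCover]
    split_ifs <;> omega

lemma cov_add (M N : Multiset (TightIx k m)) (e : EdgeIx k m) :
    cov (M + N) e = cov M e + cov N e := Multiset.countP_add _ _ _

/-- A decreasing sequence from `2` to `0` has two (possibly equal) drops. -/
lemma exists_two_drops (U : ℕ → ℕ) (m : ℕ) (h0 : U 0 = 2) (hm : U (m + 1) = 0)
    (hU : ∀ i, U (i + 1) ≤ U i) : ∃ a ≤ m, ∃ b ≤ m, ∀ i,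
      U i = (if i ≤ a then 1 else 0) + if i ≤ b then 1 else 0 := by
  have hanti : Antitone U := antitone_nat_of_succ_le hU
  have ha : ∃ i, U (i + 1) = 0 := ⟨m, hm⟩
  have hb : ∃ i, U (i + 1) ≤ 1 := ⟨m, by omega⟩
  refine ⟨Nat.find ha, Nat.find_min' ha hm, Nat.find hb, Nat.find_min' hb (by omega), fun i => ?_⟩
  have h2 : U i ≤ 2 := h0 ▸ hanti (Nat.zero_le i)
  have ha1 : i ≤ Nat.find ha → U i ≠ 0 := by
    intro h
    match i with
    | 0 => omega
    | i + 1 => exact Nat.find_min ha h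
  have ha2 : ¬ i ≤ Nat.find ha → U i = 0 := fun h =>
    Nat.le_zero.mp ((Nat.find_spec ha) ▸ hanti (by omega : Nat.find ha + 1 ≤ i))
  have hb1 : i ≤ Nat.find hb → 1 < U i := by
    intro h
    match i with
    | 0 => omega
    | i + 1 => exact not_le.mp (Nat.find_min hb h)
  have hb2 : ¬ i ≤ Nat.find hb → U i ≤ 1 := fun h =>
    (hanti (by omega : Nat.find hb + 1 ≤ i)).trans (Nat.find_spec hb)
  by_cases h : i ≤ Nat.find ha <;> by_cases h' : i ≤ Nat.find hb
  · have := hb1 h'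
    rw [if_pos h, if_pos h']
    omega
  · have := ha1 h
    have := hb2 h'
    rw [if_pos h, if_neg h']
    omega
  · have := ha2 h
    have := hb1 h'
    omega
  · have := ha2 h
    rw [if_neg h, if_neg h']
    omega

/-- The families of cycles of minimal weight covering every edge twice. Going outwards, the number
of chosen triangles of the first kind per position decreases from `2` to `0`, the drops being taken
up by the cycles `C^i`. -/
lemma cov_eq_two_iff (M : Multiset (TightIx k m)) :
    (∀ e, cov M e = 2) ↔ ∃ a b, singleCover a + singleCover b = M := by
  constructor
  swap
  · rintro ⟨a, b, rfl⟩ e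
    rw [cov_add, cov_singleCover, cov_singleCover]
  intro h
  have hud : ∀ r j, M.count (up r j) + M.count (down r j) = 2 := fun r j => by
    rw [← cov_diag, h]
  have hud' : ∀ r j, M.count (up r (j - 1)) + M.count (down r j) = 2 := fun r j => by
    rw [← cov_vert, h]
  have hconst : ∀ r j, M.count (up r j) = M.count (up r (0 : ZMod k)) := fun r j =>
    zmod_eq_of_sub_one (g := fun j => M.count (up r j))
      (fun j => by have := hud r j; have := hud' r j; omega) j 0
  have hd : ∀ r j, M.count (down r j) = 2 - M.count (up r (0 : ZMod k)) := fun r j => by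
    have := hud r j
    rw [hconst] at this
    omega
  have hu2 : ∀ r, M.count (up r (0 : ZMod k)) ≤ 2 := fun r => by have := hud r 0; omega
  obtain ⟨U, hU0, hUs⟩ : ∃ U : ℕ → ℕ, U 0 = 2 ∧
      ∀ r, U (r + 1) = if h : r < m then M.count (up ⟨r, h⟩ (0 : ZMod k)) else 0 :=
    ⟨fun n => Nat.casesOn n 2 fun r => if h : r < m then M.count (up ⟨r, h⟩ (0 : ZMod k)) else 0,
      rfl, fun _ => rfl⟩
  have hU2 : ∀ i, U i ≤ 2 := by
    rintro (_ | r)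
    · omega
    · rw [hUs]
      split_ifs
      · exact hu2 _
      · omega
  have hc : ∀ i : Fin (m + 1), M.count (row i) + U (i + 1) = U i := by
    intro i
    have hh := h (hor i 0)
    have hU2' := hU2 i
    rw [cov_hor, ← hUs] at hh
    by_cases hi : 0 < (i : ℕ)
    · rw [dif_pos hi, hd] at hh
      have hprev := hUs (i - 1)
      rw [dif_pos (by omega), Nat.sub_add_cancel hi] at hprev
      omega
    · rw [dif_neg hi] at hh
      have : (i : ℕ) = 0 := by omega
      rw [this] at hh ⊢
      omega
  obtain ⟨a, ham, b, hbm, hab⟩ := exists_two_drops U m hU0 (by rw [hUs]; simp) (by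
    intro i
    by_cases hi : i < m + 1
    · have := hc ⟨i, hi⟩
      dsimp only at this
      omega
    · rw [hUs, dif_neg (by omega)]
      omega)
  have hu : ∀ r : Fin m, M.count (up r (0 : ZMod k)) = U (r + 1) := fun r => by
    rw [hUs, dif_pos r.2]
  refine ⟨⟨a, by omega⟩, ⟨b, by omega⟩, Multiset.ext.mpr fun t => ?_⟩
  rw [Multiset.count_add]
  match t with
  | .inl i =>
    change _ = M.count (row i)
    rw [count_row_singleCover, count_row_singleCover]
    have h1 := hc i
    rw [hab, hab] at h1
    dsimp only
    split_ifs at h1 ⊢ <;> omega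
  | .inr (.inl (r, j)) =>
    rw [count_up_singleCover, count_up_singleCover, hconst, hu, hab]
    dsimp only
    split_ifs <;> omega
  | .inr (.inr (r, j)) =>
    rw [count_down_singleCover, count_down_singleCover, hd, hu, hab]
    dsimp only
    split_ifs <;> omega

/-- The cover attached to an unordered pair of rows. -/
noncomputable def pairCover (z : Sym2 (Fin (m + 1))) : Multiset (TightIx k m) :=
  Sym2.lift ⟨fun a b => singleCover a + singleCover b, fun _ _ => add_comm _ _⟩ z

lemma pairCover_mk (a b : Fin (m + 1)) :
    (pairCover s(a, b) : Multiset (TightIx k m)) = singleCover a + singleCover b := rfl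

lemma pairCover_injective :
    Function.Injective (pairCover : Sym2 (Fin (m + 1)) → Multiset (TightIx k m)) := by
  intro z z'
  induction z with | _ a b
  induction z' with | _ a' b'
  intro h
  rw [pairCover_mk, pairCover_mk] at h
  have hc : ∀ i : Fin (m + 1), ((if (i : ℕ) = a then 1 else 0) + if (i : ℕ) = b then 1 else 0) =
      (if (i : ℕ) = a' then 1 else 0) + if (i : ℕ) = b' then 1 else 0 := fun i => by
    have := congrArg (Multiset.count (row i)) h
    simpa only [Multiset.count_add, count_row_singleCover] using this
  rw [Sym2.eq_iff]
  have ha := hc a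
  have hb := hc b
  simp only [Fin.ext_iff]
  split_ifs at ha hb <;> omega

/-- No cycle is repeated exactly when the two rows are the innermost and the outermost one. -/
lemma pairCover_nodup_iff (hm : 1 ≤ m) (z : Sym2 (Fin (m + 1))) :
    (pairCover z : Multiset (TightIx k m)).Nodup ↔ z = s(0, Fin.last m) := by
  induction z with | _ a b
  rw [pairCover_mk, Multiset.nodup_iff_count_le_one]
  constructor
  · intro h
    have h1 := h (up ⟨0, hm⟩ 0)
    have h2 := h (down ⟨m - 1, by omega⟩ 0)
    rw [Multiset.count_add, count_up_singleCover, count_up_singleCover] at h1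
    rw [Multiset.count_add, count_down_singleCover, count_down_singleCover] at h2
    rw [Sym2.eq_iff]
    simp only [Fin.ext_iff, Fin.val_zero, Fin.val_last]
    dsimp only at h1 h2
    split_ifs at h1 h2 <;> omega
  · intro h t
    rw [← pairCover_mk, h, pairCover_mk, Multiset.count_add]
    match t with
    | .inl i =>
      rw [count_row_singleCover, count_row_singleCover]
      have h0 : ((0 : Fin (m + 1)) : ℕ) = 0 := rfl
      have hl : (Fin.last m : ℕ) = m := rfl
      split_ifs <;> omega
    | .inr (.inl (r, j)) =>
      rw [count_up_singleCover, count_up_singleCover]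
      simp
    | .inr (.inr (r, j)) =>
      rw [count_down_singleCover, count_down_singleCover]
      simp

lemma isCDC_card_iff_pairCover (hk : 3 ≤ k) (S : Multiset (Gkl k (m + 1)).Subgraph) :
    (IsCDC (Gkl k (m + 1)) S ∧ Multiset.card S = 2 * k * m + 2) ↔
      ∃ z : Sym2 (Fin (m + 1)), (pairCover z).map (tightCyc hk) = S := by
  rw [isCDC_card_iff hk]
  constructor
  · rintro ⟨M, rfl, hM⟩
    obtain ⟨a, b, rfl⟩ := (cov_eq_two_iff M).mp hM
    exact ⟨s(a, b), rfl⟩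
  · rintro ⟨z, rfl⟩
    induction z with | _ a b
    exact ⟨_, rfl, (cov_eq_two_iff _).mpr ⟨a, b, rfl⟩⟩

lemma ncard_cdc (hk : 3 ≤ k) :
    {S : Multiset (Gkl k (m + 1)).Subgraph |
        IsCDC (Gkl k (m + 1)) S ∧ Multiset.card S = 2 * k * m + 2}.ncard
      = (m + 1) * (m + 1 + 1) / 2 := by
  have : {S : Multiset (Gkl k (m + 1)).Subgraph |
      IsCDC (Gkl k (m + 1)) S ∧ Multiset.card S = 2 * k * m + 2} =
      (fun z : Sym2 (Fin (m + 1)) => (pairCover z).map (tightCyc hk)) '' Set.univ := by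
    ext S
    rw [Set.image_univ]
    exact isCDC_card_iff_pairCover hk S
  rw [this, Set.ncard_image_of_injective, Set.ncard_univ, Nat.card_eq_fintype_card, Sym2.card,
    Nat.choose_two_right, Fintype.card_fin, Nat.add_sub_cancel, mul_comm]
  exact (Multiset.map_injective (tightCyc_injective hk)).comp pairCover_injective

lemma ncard_trueCDC (hk : 3 ≤ k) (hm : 1 ≤ m) :
    {S : Multiset (Gkl k (m + 1)).Subgraph |
        IsCDC (Gkl k (m + 1)) S ∧ Multiset.card S = 2 * k * m + 2 ∧ S.Nodup}.ncard = 1 := by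
  rw [Set.ncard_eq_one]
  refine ⟨(pairCover s(0, Fin.last m)).map (tightCyc hk), ?_⟩
  ext S
  change (_ ∧ _ ∧ _) ↔ _
  rw [← and_assoc, isCDC_card_iff_pairCover hk, Set.mem_singleton_iff]
  constructor
  · rintro ⟨⟨z, rfl⟩, h⟩
    rw [Multiset.nodup_map_iff_of_injective (tightCyc_injective hk), pairCover_nodup_iff hm] at h
    rw [h]
  · rintro rfl
    refine ⟨⟨_, rfl⟩, ?_⟩
    rw [Multiset.nodup_map_iff_of_injective (tightCyc_injective hk), pairCover_nodup_iff hm]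

end cover

/-- For all `k ≥ 3`, `ℓ ≥ 2`, the graph `G_{k,ℓ}` is planar with `f = 2k(ℓ-1)+2` faces
(equivalently, by Euler's formula, it is planar, connected, and has `kℓ` vertices and
`k(3ℓ-2)` edges), has exactly `ℓ(ℓ+1)/2` CDCs of size `f` and exactly one true CDC of
size `f`; moreover it is 3-connected when `k = 3` and `ℓ ≥ 3`, and 4-connected otherwise. -/
theorem statement_6 (k l : ℕ) [NeZero k] (hk : 3 ≤ k) (hl : 2 ≤ l) :
    IsPlanar (Gkl k l) ∧
    (Gkl k l).Connected ∧
    (Gkl k l).edgeSet.ncard + 2 = k * l + (2 * k * (l - 1) + 2) ∧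
    {S : Multiset (Gkl k l).Subgraph |
        IsCDC (Gkl k l) S ∧ Multiset.card S = 2 * k * (l - 1) + 2}.ncard
      = l * (l + 1) / 2 ∧
    {S : Multiset (Gkl k l).Subgraph |
        IsCDC (Gkl k l) S ∧ Multiset.card S = 2 * k * (l - 1) + 2 ∧ S.Nodup}.ncard
      = 1 ∧
    ((k = 3 ∧ 3 ≤ l) → IsKConnected 3 (Gkl k l)) ∧
    (¬ (k = 3 ∧ 3 ≤ l) → IsKConnected 4 (Gkl k l)) := by
  obtain ⟨m, rfl⟩ : ∃ m, l = m + 1 := ⟨l - 1, by omega⟩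
  have hm : 1 ≤ m := by omega
  refine ⟨isPlanar_Gkl hk, connected_Gkl hk hm, ?_, ncard_cdc hk, ncard_trueCDC hk hm, fun _ => ?_,
    fun h => ?_⟩
  · rw [ncard_edgeSet hk, Nat.add_sub_cancel]
    ring
  · exact isKConnected_Gkl hk hm 3 (by omega) (Or.inl hk)
  · exact isKConnected_Gkl hk hm 4 le_rfl (by omega)
end

section
/- Let c be a positive integer different from 2 and let A be the antiprism on n = 2k vertices with k > 3c+3. Then the number of CDCs of A of size exactly n+2−c is at most 4·(e/c)^{2c}·(3c+1)·p(3c)·n^{5c}, where p denotes the integer partition function. In particular, the number of (n+2−c)-CDCs of A is bounded by f(c)·g(n,c) where f depends only on c and g(n,c) = n^{5c} is polynomial in n of degree 5c. -/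
/-!
The number of cycle double covers of the antiprism, the square of the cycle on `n = 2k` vertices, with
`n + 2 - c` members is bounded by encoding each cover injectively.

Call the edges `{i, i + 1}` short and the edges `{i, i + 2}` long, and consider the `n` cuts between
consecutive vertices, each crossed by three edges. A cycle avoiding some cut is *local*: it is the
cycle `loc i m` on the consecutive vertices `i, …, i + m + 1`, with two short and `m` long edges
(`EdgeVec.IsCycle.exists_eq_loc`). Local cycles cross every cut an even number of times. Counting
short edges, long edges and crossings (`EdgeVec.IsCover.counts`) shows that, since `c ≠ 2` and
`k > 3c + 3`, there are one or two non-local cycles in the cover, with `2c - 2` or `2c` short edges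
altogether, and that the local cycles `loc i m` satisfy `∑ (m - 1) ≤ 2c`.

The triangles `loc i 1` of a cover are determined by its other cycles, because each long edge lies in
a single triangle (`EdgeVec.IsCover.ext_of`). A non-local cycle is determined by its short edges and
two bits, because the graph of long edges has cycle space of dimension at most two
(`EdgeVec.IsEven.ext_of`). The local non-triangles are encoded by a word of length `2c` over an
alphabet with `n + 1` letters (`EdgeVec.exists_word`). This gives at most
`(C(2n, 2c) + C(2n, 2c - 2)) * 16 * (n + 1)^(2c)` covers, where both binomial coefficients are at most
`(e n / c)^(2c)` and `8 * (n + 1)^(2c) ≤ n^(3c)`; this is stronger than the claimed bound.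
-/

open SimpleGraph

attribute [local instance] Classical.propDecidable

/-- The antiprism on `2k` vertices: the square of the cycle `C_{2k}`. -/
def antiprism (k : ℕ) : SimpleGraph (ZMod (2 * k)) :=
  SimpleGraph.fromRel fun v w => w = v + 1 ∨ w = v + 2

/-! ### Edge vectors and local cycles -/

/-- The multiplicities of the edges of a subgraph of the square of the `n`-cycle: `x.1 i` is that of
the short edge `{i, i + 1}` and `x.2 i` that of the long edge `{i, i + 2}`. -/
abbrev EdgeVec (n : ℕ) : Type := (ZMod n → ℕ) × (ZMod n → ℕ)

namespace EdgeVec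
variable {n : ℕ}

/-- The degree of the vertex `i`; its four edges are those to `i ± 1` and `i ± 2`. -/
def deg (x : EdgeVec n) (i : ZMod n) : ℕ := x.1 i + x.1 (i - 1) + x.2 i + x.2 (i - 2)

/-- The number of edges crossing the cut between `i` and `i + 1`: the three edges available there are
`{i, i + 1}`, `{i, i + 2}` and `{i - 1, i + 1}`. -/
def crossing (x : EdgeVec n) (i : ZMod n) : ℕ := x.1 i + x.2 i + x.2 (i - 1)

/-- A `0/1` vector all of whose degrees are even, i.e. an element of the cycle space. -/
structure IsEven (x : EdgeVec n) : Prop where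
  fst_le : ∀ i, x.1 i ≤ 1
  snd_le : ∀ i, x.2 i ≤ 1
  even_deg : ∀ i, Even (deg x i)

/-- The edge vector of a cycle. Connectedness says that a vertex set `W` that no edge leaves and that
contains one vertex of the cycle contains all of them. -/
structure IsCycle (x : EdgeVec n) : Prop where
  fst_le : ∀ i, x.1 i ≤ 1
  snd_le : ∀ i, x.2 i ≤ 1
  deg_eq : ∀ i, deg x i = 0 ∨ deg x i = 2
  nonempty : ∃ i, deg x i = 2
  connected : ∀ W : Set (ZMod n),
    (∀ i, x.1 i = 1 → (i ∈ W ↔ i + 1 ∈ W)) → (∀ i, x.2 i = 1 → (i ∈ W ↔ i + 2 ∈ W)) →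
    ∀ i j, deg x i ≠ 0 → deg x j ≠ 0 → i ∈ W → j ∈ W

/-- The cycle on the `m + 2` consecutive vertices `i, …, i + m + 1`: its short edges are the two
extreme ones, `{i, i + 1}` and `{i + m, i + m + 1}`, and its long edges are all `{i + s, i + s + 2}`
with `s < m`. The case `m = 1` is a triangle. -/
noncomputable def loc (i : ZMod n) (m : ℕ) : EdgeVec n :=
  (fun v => if v = i ∨ v = i + m then 1 else 0, fun v => if ∃ s < m, v = i + (s : ℕ) then 1 else 0)

theorem IsCycle.isEven {x : EdgeVec n} (h : IsCycle x) : IsEven x where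
  fst_le := h.fst_le
  snd_le := h.snd_le
  even_deg i := by rcases h.deg_eq i with h | h <;> rw [h] <;> decide

theorem natCast_ne_zero {t : ℕ} (h0 : 0 < t) (ht : t < n) : (t : ZMod n) ≠ 0 := by
  rw [Ne, ZMod.natCast_eq_zero_iff]
  exact fun h => absurd (Nat.le_of_dvd h0 h) (by omega)

theorem exists_natCast_add [NeZero n] (j i : ZMod n) : ∃ t : ℕ, t < n ∧ i = j + t :=
  ⟨(i - j).val, ZMod.val_lt _, by simp⟩

/-- The parity of the crossing number is the same at all cuts, since the crossing numbers of two
consecutive cuts add up to the degree of the vertex between them plus twice the multiplicity of the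
long edge crossing both. -/
theorem even_crossing_succ {x : EdgeVec n} (h : IsEven x) {j : ZMod n} (hj : Even (crossing x j)) :
    Even (crossing x (j + 1)) := by
  have h1 := h.even_deg (j + 1)
  have e : j + 1 - 2 = j - 1 := by ring
  simp only [crossing, deg, add_sub_cancel_right, e] at *
  rw [Nat.even_iff] at *
  omega

theorem even_crossing [NeZero n] {x : EdgeVec n} (h : IsEven x) {j : ZMod n}
    (hj : crossing x j = 0) (i : ZMod n) : Even (crossing x i) := by
  obtain ⟨t, -, rfl⟩ := exists_natCast_add j i
  induction t with
  | zero => simp [hj]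
  | succ t ih =>
    have := even_crossing_succ h ih
    rwa [add_assoc, ← Nat.cast_succ] at this

/-- A cycle that avoids some cut is one of the cycles `loc i m`. Starting from its first vertex `i`
after the cut, the cycle uses both edges going forward; it must then continue through all long edges
until a second short edge `{i + m, i + m + 1}` closes it. -/
theorem IsCycle.exists_eq_loc [NeZero n] {x : EdgeVec n} (h : IsCycle x) {j : ZMod n}
    (hj : crossing x j = 0) : ∃ i m, 1 ≤ m ∧ m < n ∧ x = loc i m := by
  obtain ⟨a, b⟩ := x
  have ha := h.fst_le
  have hb := h.snd_le
  have hW := h.connected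
  have hd : ∀ v, a (v + 2) + a (v + 1) + b (v + 2) + b v = 0 ∨
      a (v + 2) + a (v + 1) + b (v + 2) + b v = 2 := by
    intro v
    have := h.deg_eq (v + 2)
    have e : v + 2 - 1 = v + 1 := by ring
    simpa [deg, e] using this
  simp only [crossing, Nat.add_eq_zero_iff] at hj
  obtain ⟨⟨haj, hbj⟩, hbj'⟩ := hj
  dsimp only at ha hb hW
  have hex : ∃ t : ℕ, deg (a, b) (j + 1 + t) ≠ 0 := by
    obtain ⟨v, hv⟩ := h.nonempty
    obtain ⟨t, -, rfl⟩ := exists_natCast_add (j + 1) v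
    exact ⟨t, by omega⟩
  -- the first vertex of the cycle after the uncrossed cut
  obtain ⟨i, hi, ha1, hb1, hb2⟩ : ∃ i, deg (a, b) i ≠ 0 ∧ a (i - 1) = 0 ∧ b (i - 1) = 0 ∧
      b (i - 2) = 0 := by
    have hmin := fun s (hs : s < Nat.find hex) => Nat.find_min hex hs
    have hspec := Nat.find_spec hex
    generalize Nat.find hex = t at hmin hspec
    refine ⟨j + 1 + t, hspec, ?_⟩
    rcases t with _ | _ | t
    · have e1 : j + 1 + ((0 : ℕ) : ZMod n) - 1 = j := by push_cast; ring
      have e2 : j + 1 + ((0 : ℕ) : ZMod n) - 2 = j - 1 := by push_cast; ring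
      rw [e1, e2]; exact ⟨haj, hbj, hbj'⟩
    · have h0 := hmin 0 (by omega)
      have e1 : j + 1 + ((0 + 1 : ℕ) : ZMod n) - 1 = j + 1 := by push_cast; ring
      have e2 : j + 1 + ((0 + 1 : ℕ) : ZMod n) - 2 = j := by push_cast; ring
      rw [e1, e2]
      simp only [deg, Nat.cast_zero, add_zero] at h0
      exact ⟨by omega, by omega, hbj⟩
    · have h0 := hmin t (by omega)
      have h1 := hmin (t + 1) (by omega)
      have e1 : j + 1 + ((t + 1 + 1 : ℕ) : ZMod n) - 1 = j + 1 + ((t + 1 : ℕ) : ZMod n) := by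
        push_cast; ring
      have e2 : j + 1 + ((t + 1 + 1 : ℕ) : ZMod n) - 2 = j + 1 + (t : ZMod n) := by
        push_cast; ring
      rw [e1, e2]
      simp only [deg] at h0 h1
      exact ⟨by omega, by omega, by omega⟩
  have hai : a i = 1 ∧ b i = 1 := by
    have h1 := h.deg_eq i
    have h2 := ha i
    have h3 := hb i
    simp only [deg, ha1, hb2] at h1 hi
    omega
  -- as long as no further short edge occurs, the cycle consists of the long edges
  have chain : ∀ m : ℕ, (∀ s : ℕ, 0 < s → s < m → a (i + s) = 0) → ∀ s : ℕ, s < m → b (i + s) = 1 := by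
    intro m hm s
    induction s using Nat.strong_induction_on with
    | _ s ih =>
      intro hs
      rcases s with _ | _ | s
      · simpa using hai.2
      · have h1 := hd (i - 1)
        have h2 := hm 1 (by omega) hs
        have h3 := hb (i + (1 : ℕ))
        have e1 : i - 1 + 2 = i + ((1 : ℕ) : ZMod n) := by push_cast; ring
        have e2 : i - 1 + 1 = i := by ring
        rw [e1, e2] at h1
        simp only [zero_add]
        omega
      · have h1 := hd (i + s)
        have h2 := hm (s + 2) (by omega) hs
        have h3 := hm (s + 1) (by omega) (by omega)
        have h4 := ih s (by omega) (by omega)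
        have h5 := hb (i + (s + 2 : ℕ))
        have e1 : i + s + 2 = i + ((s + 2 : ℕ) : ZMod n) := by push_cast; ring
        have e2 : i + s + 1 = i + ((s + 1 : ℕ) : ZMod n) := by push_cast; ring
        rw [e1, e2] at h1
        show b (i + (s + 2 : ℕ)) = 1
        omega
  obtain ⟨r, hrn, hr⟩ := exists_natCast_add i j
  have hex2 : ∃ m : ℕ, 0 < m ∧ a (i + m) = 1 := by
    by_contra hcon
    push Not at hcon
    have := chain n (fun s hs _ => by have := hcon s hs; have := ha (i + s); omega) r hrn
    rw [← hr] at this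
    omega
  have hmin := fun s (hs : s < Nat.find hex2) => Nat.find_min hex2 hs
  obtain ⟨hm0, ham⟩ := Nat.find_spec hex2
  generalize Nat.find hex2 = m at hmin hm0 ham
  have hzero : ∀ s : ℕ, 0 < s → s < m → a (i + s) = 0 := fun s h0 hs => by
    have h1 := hmin s hs
    have h2 := ha (i + s)
    by_contra h3
    exact h1 ⟨h0, by omega⟩
  have hone := chain m hzero
  have hmn : m < n := by
    by_contra hcon
    have := hone r (by omega)
    rw [← hr] at this
    omega
  have hend1 : a (i + (m + 1 : ℕ)) = 0 ∧ b (i + (m + 1 : ℕ)) = 0 := by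
    have h1 := hd (i + (m - 1 : ℕ))
    have h2 := hone (m - 1) (by omega)
    have e1 : i + ((m - 1 : ℕ) : ZMod n) + 2 = i + ((m + 1 : ℕ) : ZMod n) := by
      rw [Nat.cast_sub hm0]; push_cast; ring
    have e2 : i + ((m - 1 : ℕ) : ZMod n) + 1 = i + (m : ZMod n) := by
      rw [Nat.cast_sub hm0]; push_cast; ring
    rw [e1, e2] at h1
    omega
  have hend2 : b (i + m) = 0 := by
    rcases m with _ | _ | m
    · omega
    · have h1 := hd (i - 1)
      have e1 : i - 1 + 2 = i + ((0 + 1 : ℕ) : ZMod n) := by push_cast; ring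
      have e2 : i - 1 + 1 = i := by ring
      rw [e1, e2] at h1
      omega
    · have h1 := hd (i + m)
      have h2 := hone m (by omega)
      have e1 : i + m + 2 = i + ((m + 1 + 1 : ℕ) : ZMod n) := by push_cast; ring
      rw [e1] at h1
      omega
  -- the vertices met so far are closed under adjacency, so they are all the vertices of the cycle
  have hmem := hW {v | ∃ s : ℕ, s ≤ m + 1 ∧ v = i + s} (by
      intro v hv
      constructor
      · rintro ⟨s, hs, rfl⟩
        rcases Nat.lt_or_ge s (m + 1) with h' | h'
        · exact ⟨s + 1, by omega, by push_cast; ring⟩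
        · obtain rfl : s = m + 1 := by omega
          omega
      · rintro ⟨s, hs, hvs⟩
        rcases s with _ | s
        · obtain rfl : v = i - 1 := by rw [eq_sub_iff_add_eq, hvs]; simp
          omega
        · refine ⟨s, by omega, ?_⟩
          have := congrArg (· - 1) hvs
          simpa [← add_assoc] using this) (by
      intro v hv
      constructor
      · rintro ⟨s, hs, rfl⟩
        rcases Nat.lt_or_ge s m with h' | h'
        · exact ⟨s + 2, by omega, by push_cast; ring⟩
        · obtain rfl | rfl : s = m ∨ s = m + 1 := by omega
          · omega
          · omega
      · rintro ⟨s, hs, hvs⟩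
        rcases s with _ | _ | s
        · obtain rfl : v = i - 2 := by rw [eq_sub_iff_add_eq, hvs]; simp
          omega
        · obtain rfl : v = i - 1 := by
            rw [eq_sub_iff_add_eq, ← add_left_inj (1 : ZMod n)]
            push_cast at hvs
            linear_combination hvs
          omega
        · refine ⟨s, by omega, ?_⟩
          push_cast at hvs
          linear_combination hvs) i
  have hmem' : ∀ v, deg (a, b) v ≠ 0 → ∃ s : ℕ, s ≤ m + 1 ∧ v = i + s := fun v hv =>
    hmem v hi hv ⟨0, by omega, by simp⟩
  refine ⟨i, m, hm0, hmn, ?_⟩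
  unfold loc
  refine Prod.ext (funext fun v => ?_) (funext fun v => ?_)
  · dsimp only
    split_ifs with hv
    · rcases hv with rfl | rfl
      · exact hai.1
      · exact ham
    · by_contra hne
      obtain ⟨s, hs, rfl⟩ := hmem' v (by simp only [deg]; omega)
      push Not at hv
      have hs0 : 0 < s := by
        rcases s with _ | s
        · simp at hv
        · omega
      rcases lt_trichotomy s m with h' | rfl | h'
      · exact hne (hzero s hs0 h')
      · exact hv.2 rfl
      · obtain rfl : s = m + 1 := by omega
        exact hne hend1.1
  · dsimp only
    split_ifs with hv
    · obtain ⟨s, hs, rfl⟩ := hv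
      exact hone s hs
    · by_contra hne
      obtain ⟨s, hs, rfl⟩ := hmem' v (by simp only [deg]; omega)
      push Not at hv
      rcases lt_trichotomy s m with h' | rfl | h'
      · exact hv s h' rfl
      · exact hne hend2
      · obtain rfl : s = m + 1 := by omega
        exact hne hend1.2

theorem sum_loc_fst [NeZero n] (i : ZMod n) {m : ℕ} (h0 : 1 ≤ m) (hm : m < n) :
    ∑ v, (loc i m).1 v = 2 := by
  have hne : i ≠ i + (m : ZMod n) := by
    simpa using (natCast_ne_zero h0 hm)
  simp only [loc]
  rw [Finset.sum_boole]
  have : (Finset.univ.filter fun v => v = i ∨ v = i + (m : ZMod n)) = {i, i + (m : ZMod n)} := by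
    ext v; simp
  rw [this, Finset.card_pair hne]; rfl

theorem sum_loc_snd [NeZero n] (i : ZMod n) {m : ℕ} (hm : m < n) :
    ∑ v, (loc i m).2 v = m := by
  simp only [loc]
  rw [Finset.sum_boole]
  have : (Finset.univ.filter fun v => ∃ s < m, v = i + (s : ℕ)) =
      (Finset.range m).image (fun s : ℕ => i + (s : ZMod n)) := by
    ext v; simp [eq_comm]
  rw [this, Finset.card_image_of_injOn]
  · simp
  · intro s hs t ht hst
    have hst' : (s : ZMod n) = t := by simpa using hst
    rw [ZMod.natCast_eq_natCast_iff] at hst'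
    simp only [Finset.coe_range, Set.mem_Iio] at hs ht
    exact Nat.ModEq.eq_of_lt_of_lt hst' (by omega) (by omega)

/-- An element of the cycle space is determined by its short edges and two long edges: the degree
condition at `i + 2` gives the long edge at `i + 2` from the one at `i`. -/
theorem IsEven.ext_of [NeZero n] {x y : EdgeVec n} (hx : IsEven x) (hy : IsEven y)
    (h : x.1 = y.1) (h0 : x.2 0 = y.2 0) (h1 : x.2 1 = y.2 1) : x = y := by
  refine Prod.ext h (funext fun v => ?_)
  obtain ⟨t, -, rfl⟩ := exists_natCast_add 0 v
  simp only [zero_add]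
  induction t using Nat.strong_induction_on with
  | _ t ih =>
    rcases t with _ | _ | t
    · simpa using h0
    · simpa using h1
    · have e1 := hx.even_deg (t + 2 : ℕ)
      have e2 := hy.even_deg (t + 2 : ℕ)
      have e : ((t + 2 : ℕ) : ZMod n) - 2 = t := by push_cast; ring
      have i1 := ih t (by omega)
      have b1 := hx.snd_le (t + 2 : ℕ)
      have b2 := hy.snd_le (t + 2 : ℕ)
      simp only [deg, e, h, i1] at e1 e2
      rw [Nat.even_iff] at e1 e2
      show x.2 (t + 2 : ℕ) = y.2 (t + 2 : ℕ)
      omega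

/-! ### The double counting argument -/

/-- The number of short edges. -/
def shortSum [NeZero n] (x : EdgeVec n) : ℕ := ∑ v, x.1 v

/-- The number of long edges. -/
def longSum [NeZero n] (x : EdgeVec n) : ℕ := ∑ v, x.2 v

/-- The cycle avoids some cut, i.e. does not go around. -/
def IsLocal (x : EdgeVec n) : Prop := ∃ j, crossing x j = 0

/-- The triangle on `i, i + 1, i + 2` for some `i`. -/
def IsTriangle (x : EdgeVec n) : Prop := ∃ i, x = loc i 1

/-- A cycle double cover in terms of edge vectors. -/
structure IsCover (s : Multiset (EdgeVec n)) : Prop where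
  isCycle : ∀ x ∈ s, IsCycle x
  short_eq : ∀ v, (s.map fun x => x.1 v).sum = 2
  long_eq : ∀ v, (s.map fun x => x.2 v).sum = 2

theorem sum_map_sum [NeZero n] (s : Multiset (EdgeVec n)) (f : EdgeVec n → ZMod n → ℕ) :
    (s.map fun x => ∑ v, f x v).sum = ∑ v, (s.map fun x => f x v).sum := by
  induction s using Multiset.induction_on with
  | empty => simp
  | cons x s ih => simp [ih, Finset.sum_add_distrib]

theorem sum_map_crossing [NeZero n] (s : Multiset (EdgeVec n)) :
    ∑ v, (s.map fun x => crossing x v).sum =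
      (s.map shortSum).sum + 2 * (s.map longSum).sum := by
  rw [← sum_map_sum]
  induction s using Multiset.induction_on with
  | empty => simp
  | cons x s ih =>
    have h : ∑ v, crossing x v = shortSum x + 2 * longSum x := by
      simp only [crossing, Finset.sum_add_distrib, shortSum, longSum]
      have := Equiv.sum_comp (Equiv.subRight (1 : ZMod n)) x.2
      simp only [Equiv.subRight_apply] at this
      omega
    simp only [Multiset.map_cons, Multiset.sum_cons, ih, h]
    ring

theorem sum_filter_add (s : Multiset (EdgeVec n)) (p : EdgeVec n → Prop) (f : EdgeVec n → ℕ) :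
    ((s.filter p).map f).sum + ((s.filter fun x => ¬ p x).map f).sum = (s.map f).sum := by
  conv_rhs => rw [← Multiset.filter_add_not p s]
  simp

/-- With `n + 2 - c` cycles in the cover and `c ≠ 2`, one or two of them are not local; these have at
most `2 * c` short edges altogether, and the local ones exceed triangles by at most `2 * c` long
edges altogether. A local cycle has exactly two short edges, so the total `2 * n` of short edges
fixes the number of local cycles in terms of that of non-local ones; if all were local there would
be `n` of them. Every cut is crossed six times in total and an even number of times by local cycles,
so the non-local ones cross it an even number of times, and each crosses it at least once. Three or
more of them would thus cross every cut at least four times, leaving too few long edges. -/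
theorem IsCover.counts [NeZero n] {s : Multiset (EdgeVec n)} (h : IsCover s) {c : ℕ}
    (hc : 0 < c) (hc2 : c ≠ 2) (hn : 6 * c + 8 ≤ n) (hcard : Multiset.card s = n + 2 - c) :
    ∃ q, (q = 1 ∨ q = 2) ∧ Multiset.card (s.filter fun x => ¬ IsLocal x) = q ∧
      ((s.filter fun x => ¬ IsLocal x).map shortSum).sum = 2 * (q + c - 2) ∧
      ((s.filter IsLocal).map longSum).sum ≤ Multiset.card (s.filter IsLocal) + 2 * c := by
  have hS := sum_filter_add s IsLocal shortSum
  have hB := sum_filter_add s IsLocal longSum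
  have hcr := fun v => sum_filter_add s IsLocal fun x => crossing x v
  have hN : Multiset.card (s.filter IsLocal) + Multiset.card (s.filter fun x => ¬ IsLocal x)
      = n + 2 - c := by
    rw [← hcard, ← Multiset.card_add, Multiset.filter_add_not]
  have hX := sum_map_crossing (s.filter fun x => ¬ IsLocal x)
  have tS : (s.map shortSum).sum = 2 * n := by
    have := sum_map_sum s fun x v => x.1 v
    simp only [h.short_eq] at this
    refine this.trans ?_
    simp [ZMod.card, mul_comm]
  have tB : (s.map longSum).sum = 2 * n := by
    have := sum_map_sum s fun x v => x.2 v
    simp only [h.long_eq] at this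
    refine this.trans ?_
    simp [ZMod.card, mul_comm]
  have tC : ∀ v, (s.map fun x => crossing x v).sum = 6 := by
    intro v
    have h1 := h.short_eq v
    have h2 := h.long_eq v
    have h3 := h.long_eq (v - 1)
    simp only [crossing, Multiset.sum_map_add]
    omega
  have lS : ((s.filter IsLocal).map shortSum).sum = 2 * Multiset.card (s.filter IsLocal) := by
    have : ∀ x ∈ s.filter IsLocal, shortSum x = 2 := by
      intro x hx
      rw [Multiset.mem_filter] at hx
      obtain ⟨j, hj⟩ := hx.2
      obtain ⟨i, m, h1, h2, rfl⟩ := (h.isCycle x hx.1).exists_eq_loc hj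
      exact sum_loc_fst i h1 h2
    rw [Multiset.map_congr rfl this]
    simp [mul_comm]
  have lB : Multiset.card (s.filter IsLocal) ≤ ((s.filter IsLocal).map longSum).sum := by
    have : ∀ x ∈ s.filter IsLocal, 1 ≤ longSum x := by
      intro x hx
      rw [Multiset.mem_filter] at hx
      obtain ⟨j, hj⟩ := hx.2
      obtain ⟨i, m, h1, h2, rfl⟩ := (h.isCycle x hx.1).exists_eq_loc hj
      exact h1.trans_eq (sum_loc_snd i h2).symm
    simpa using Multiset.sum_map_le_sum_map (fun _ => 1) longSum this
  have lC : ∀ v, Even (((s.filter IsLocal).map fun x => crossing x v).sum) := by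
    intro v
    apply Multiset.sum_induction
    · exact fun a b ha hb => ha.add hb
    · simp
    · intro t ht
      obtain ⟨x, hx, rfl⟩ := Multiset.mem_map.1 ht
      rw [Multiset.mem_filter] at hx
      obtain ⟨j, hj⟩ := hx.2
      exact even_crossing (h.isCycle x hx.1).isEven hj v
  set Q := s.filter fun x => ¬ IsLocal x with hQ
  set L := s.filter IsLocal with hL
  have qC : ∀ v, Multiset.card Q ≤ (Q.map fun x => crossing x v).sum := by
    intro v
    have : ∀ x ∈ Q, 1 ≤ crossing x v := by
      intro x hx
      rw [hQ, Multiset.mem_filter] at hx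
      by_contra hcon
      exact hx.2 ⟨v, by omega⟩
    have := Multiset.sum_map_le_sum_map (fun _ => 1) (fun x => crossing x v) this
    simpa using this
  have sumBound : ∀ d, (∀ v, d ≤ (Q.map fun x => crossing x v).sum) →
      n * d ≤ ∑ v, (Q.map fun x => crossing x v).sum := by
    intro d hd
    have := Finset.card_nsmul_le_sum Finset.univ (fun v => (Q.map fun x => crossing x v).sum) d
      (fun v _ => hd v)
    simpa [ZMod.card] using this
  have hq6 : Multiset.card Q ≤ 6 := by
    have h1 := qC 0
    have h2 := hcr 0
    have h3 := tC 0
    omega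
  have hq : Multiset.card Q = 1 ∨ Multiset.card Q = 2 := by
    rcases Nat.eq_zero_or_pos (Multiset.card Q) with h0 | h0
    · rw [Multiset.card_eq_zero] at h0
      rw [h0] at hS hN
      simp at hS hN
      omega
    · by_contra hcon
      have := sumBound 4 (fun v => by
        have h1 := qC v
        have h2 := hcr v
        have h3 := tC v
        have h4 := Nat.even_iff.1 (lC v)
        omega)
      omega
  refine ⟨_, hq, rfl, by omega, ?_⟩
  have := sumBound 2 (fun v => by
    have h1 := qC v
    have h2 := hcr v
    have h3 := tC v
    have h4 := Nat.even_iff.1 (lC v)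
    omega)
  omega

/-! ### Encoding covers -/

/-- Reads a word as a list of pairs: every letter `some i` gives the pair of `i` and the number of
letters `none` directly before it (plus the initial counter); trailing `none`s are ignored. -/
def decode : ℕ → List (Option (ZMod n)) → List (ZMod n × ℕ)
  | _, [] => []
  | k, none :: t => decode (k + 1) t
  | k, some i :: t => (i, k) :: decode 0 t

theorem decode_replicate (l k : ℕ) : decode (n := n) k (List.replicate l none) = [] := by
  induction l generalizing k with
  | zero => rfl
  | succ l ih => simp [List.replicate_succ, decode, ih]

theorem decode_append (l k : ℕ) (i : ZMod n) (t : List (Option (ZMod n))) :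
    decode k (List.replicate l none ++ some i :: t) = (i, k + l) :: decode 0 t := by
  induction l generalizing k with
  | zero => rfl
  | succ l ih =>
    simp only [List.replicate_succ, List.cons_append, decode, ih]
    congr 2
    omega

/-- The local cycles with at least two long edges described by a word: `k` letters `none` followed by
`some i` stand for `loc i (k + 2)`. -/
noncomputable def decodeCycles (w : List (Option (ZMod n))) : Multiset (EdgeVec n) :=
  ((decode 0 w).map fun p => loc p.1 (p.2 + 2) : List (EdgeVec n))

/-- The cycle `loc i m` costs `m - 1` letters, and a word may be padded at its end, so any multiset of
local non-triangles of total cost at most `l` is described by a word of length exactly `l`. -/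
theorem exists_word [NeZero n] (M : Multiset (EdgeVec n))
    (hM : ∀ x ∈ M, ∃ i m, 2 ≤ m ∧ m < n ∧ x = loc i m) :
    ∀ l, (M.map fun x => longSum x - 1).sum ≤ l →
      ∃ w : List (Option (ZMod n)), w.length = l ∧ decodeCycles w = M := by
  induction M using Multiset.induction_on with
  | empty =>
    intro l _
    exact ⟨List.replicate l none, by simp, by simp [decodeCycles, decode_replicate]⟩
  | cons x M ih =>
    intro l hl
    obtain ⟨i, m, h2, hm, rfl⟩ := hM x (by simp)
    have hs : longSum (loc i m) = m := sum_loc_snd i hm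
    simp only [Multiset.map_cons, Multiset.sum_cons, hs] at hl
    obtain ⟨w, hw, hwM⟩ := ih (fun y hy => hM y (by simp [hy])) (l - (m - 1)) (by omega)
    refine ⟨List.replicate (m - 2) none ++ some i :: w, by simp; omega, ?_⟩
    rw [← hwM]
    have e : 0 + (m - 2) + 2 = m := by omega
    simp only [decodeCycles, decode_append, List.map_cons, e, Multiset.cons_coe]

/-- A cover is determined by its cycles other than triangles: the long edge at `v` lies in only one
triangle, `loc v 1`, which therefore occurs as often as the other cycles leave that edge uncovered. -/
theorem IsCover.ext_of [NeZero n] {s t : Multiset (EdgeVec n)} (hs : IsCover s) (ht : IsCover t)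
    (h : s.filter (fun x => ¬ IsTriangle x) = t.filter (fun x => ¬ IsTriangle x)) : s = t := by
  have key : ∀ (u : Multiset (EdgeVec n)) (v : ZMod n),
      ((u.filter IsTriangle).map fun x => x.2 v).sum = u.count (loc v 1) := by
    intro u v
    induction u using Multiset.induction_on with
    | empty => simp
    | cons x u ih =>
      rw [Multiset.filter_cons, Multiset.count_cons, ← ih]
      by_cases hx : IsTriangle x
      · rw [if_pos hx]
        obtain ⟨i, rfl⟩ := hx
        have e : (loc i 1).2 v = if loc v 1 = loc i 1 then 1 else 0 := by
          by_cases hvi : v = i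
          · subst hvi; simp [loc]
          · have : loc v 1 ≠ loc i 1 := by
              intro hcon
              have := congrFun (congrArg Prod.snd hcon) v
              simp [loc, hvi] at this
            rw [if_neg this]
            simp [loc, hvi]
        simp [e, add_comm]
      · have : loc v 1 ≠ x := fun hcon => hx ⟨v, hcon.symm⟩
        simp [hx, this]
  refine Multiset.ext.2 fun x => ?_
  by_cases hx : IsTriangle x
  · obtain ⟨v, rfl⟩ := hx
    have h1 := sum_filter_add s IsTriangle fun x => x.2 v
    have h2 := sum_filter_add t IsTriangle fun x => x.2 v
    rw [hs.long_eq, key, h] at h1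
    rw [ht.long_eq, key] at h2
    omega
  · have h1 := Multiset.count_filter_of_pos (s := s) (p := fun x => ¬ IsTriangle x) hx
    have h2 := Multiset.count_filter_of_pos (s := t) (p := fun x => ¬ IsTriangle x) hx
    rw [← h1, ← h2, h]


/-- Codes for covers: the short edges of two elements of the cycle space, two long edges of each of
them, and a word for the local cycles that are not triangles. -/
abbrev Code (n c : ℕ) : Type :=
  Finset (ZMod n ⊕ ZMod n) × (Bool × Bool × Bool × Bool) × (Fin (2 * c) → Option (ZMod n))

/-- Vectors other than zero; zero fills the second place when only one cycle is non-local. -/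
def IsNonzero (x : EdgeVec n) : Prop := x ≠ 0

/-- `C` describes the non-triangles of `s`: the non-zero ones among `x`, `y` are the non-local cycles,
and the word gives the local ones. -/
def Encodes {c : ℕ} (s : Multiset (EdgeVec n)) (C : Code n c) : Prop :=
  ∃ x y : EdgeVec n, IsEven x ∧ IsEven y ∧
    (∀ v, Sum.inl v ∈ C.1 ↔ x.1 v = 1) ∧ (∀ v, Sum.inr v ∈ C.1 ↔ y.1 v = 1) ∧
    C.2.1 = (decide (x.2 0 = 1), decide (x.2 1 = 1), decide (y.2 0 = 1), decide (y.2 1 = 1)) ∧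
    s.filter (fun x => ¬ IsTriangle x) =
      (decodeCycles (List.ofFn C.2.2) + {x, y}).filter IsNonzero

theorem eq_of_le_one {a b : ℕ} (ha : a ≤ 1) (hb : b ≤ 1) (h : a = 1 ↔ b = 1) : a = b := by
  omega

theorem Encodes.unique [NeZero n] {c : ℕ} {s t : Multiset (EdgeVec n)} {C : Code n c}
    (hs : IsCover s) (ht : IsCover t) (h : Encodes s C) (h' : Encodes t C) : s = t := by
  obtain ⟨x, y, hx, hy, hx1, hy1, hb, hf⟩ := h
  obtain ⟨x', y', hx', hy', hx1', hy1', hb', hf'⟩ := h'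
  rw [hb] at hb'
  simp only [Prod.mk.injEq, decide_eq_decide] at hb'
  obtain ⟨b1, b2, b3, b4⟩ := hb'
  have ex : x = x' := hx.ext_of hx'
    (funext fun v => eq_of_le_one (hx.fst_le v) (hx'.fst_le v) ((hx1 v).symm.trans (hx1' v)))
    (eq_of_le_one (hx.snd_le 0) (hx'.snd_le 0) b1) (eq_of_le_one (hx.snd_le 1) (hx'.snd_le 1) b2)
  have ey : y = y' := hy.ext_of hy'
    (funext fun v => eq_of_le_one (hy.fst_le v) (hy'.fst_le v) ((hy1 v).symm.trans (hy1' v)))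
    (eq_of_le_one (hy.snd_le 0) (hy'.snd_le 0) b3) (eq_of_le_one (hy.snd_le 1) (hy'.snd_le 1) b4)
  subst ex ey
  exact hs.ext_of ht (hf.trans hf'.symm)

theorem isLocal_of_isTriangle (hn : 5 ≤ n) {x : EdgeVec n} (h : IsTriangle x) : IsLocal x := by
  obtain ⟨i, rfl⟩ := h
  have h1 := natCast_ne_zero (n := n) (t := 1) (by omega) (by omega)
  have h2 := natCast_ne_zero (n := n) (t := 2) (by omega) (by omega)
  push_cast at h1 h2
  refine ⟨i - 1, ?_⟩
  have e1 : i - 1 ≠ i := by simpa using h1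
  have e2 : i - 1 ≠ i + 1 := fun h => h2 (by linear_combination -h)
  have e3 : i - 1 - 1 ≠ i := fun h => h2 (by linear_combination -h)
  simp [crossing, loc, h1, e2, e3]

theorem IsCycle.ne_zero {x : EdgeVec n} (h : IsCycle x) : x ≠ 0 := by
  rintro rfl
  obtain ⟨i, hi⟩ := h.nonempty
  simp [deg] at hi

theorem isEven_zero : IsEven (0 : EdgeVec n) where
  fst_le _ := by simp
  snd_le _ := by simp
  even_deg _ := by simp [deg]

/-- The codes that occur: there are `2 * c` short edges in non-local cycles if there are two such
cycles, and `2 * c - 2` if there is one. -/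
noncomputable def codes (n c : ℕ) [NeZero n] : Finset (Code n c) :=
  (Finset.univ.powersetCard (2 * c) ∪ Finset.univ.powersetCard (2 * c - 2)) ×ˢ Finset.univ

theorem exists_pair [NeZero n] {Q : Multiset (EdgeVec n)} (hQ : ∀ x ∈ Q, IsCycle x) {q : ℕ}
    (hq : q = 1 ∨ q = 2) (hcard : Multiset.card Q = q) :
    ∃ x y : EdgeVec n, IsEven x ∧ IsEven y ∧ Q = Multiset.filter IsNonzero {x, y} ∧
      (Q.map shortSum).sum = shortSum x + shortSum y := by
  rcases hq with rfl | rfl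
  · obtain ⟨x, rfl⟩ := Multiset.card_eq_one.1 hcard
    have hx := hQ x (by simp)
    refine ⟨x, 0, hx.isEven, isEven_zero, ?_, by simp [shortSum]⟩
    rw [Multiset.insert_eq_cons, Multiset.filter_cons_of_pos _ (p := IsNonzero) hx.ne_zero]
    simp [Multiset.filter_singleton, IsNonzero]
  · obtain ⟨x, y, rfl⟩ := Multiset.card_eq_two.1 hcard
    have hx := hQ x (by simp)
    have hy := hQ y (by simp)
    refine ⟨x, y, hx.isEven, hy.isEven, ?_, by simp⟩
    rw [Multiset.insert_eq_cons, Multiset.filter_cons_of_pos _ (p := IsNonzero) hx.ne_zero]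
    simp [Multiset.filter_singleton, IsNonzero, hy.ne_zero]

theorem IsCover.exists_code [NeZero n] {s : Multiset (EdgeVec n)} (h : IsCover s) {c : ℕ}
    (hc : 0 < c) (hc2 : c ≠ 2) (hn : 6 * c + 8 ≤ n) (hcard : Multiset.card s = n + 2 - c) :
    ∃ C ∈ codes n c, Encodes s C := by
  obtain ⟨q, hq, hQ, hshort, hlong⟩ := h.counts hc hc2 hn hcard
  obtain ⟨x, y, hx, hy, hQxy, hsum⟩ := exists_pair
    (fun x hx => h.isCycle x (Multiset.mem_of_mem_filter hx)) hq hQ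
  set M := (s.filter IsLocal).filter (fun x => ¬ IsTriangle x) with hM
  have hMcyc : ∀ z ∈ M, IsCycle z := fun z hz =>
    h.isCycle z (Multiset.mem_of_mem_filter (Multiset.mem_of_mem_filter hz))
  have hloc : ∀ z ∈ s.filter IsLocal, ∃ i m, 1 ≤ m ∧ m < n ∧ z = loc i m := by
    intro z hz
    rw [Multiset.mem_filter] at hz
    obtain ⟨j, hj⟩ := hz.2
    exact (h.isCycle z hz.1).exists_eq_loc hj
  have hMloc : ∀ z ∈ M, ∃ i m, 2 ≤ m ∧ m < n ∧ z = loc i m := by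
    intro z hz
    rw [hM, Multiset.mem_filter] at hz
    obtain ⟨i, m, h1, h2, rfl⟩ := hloc z hz.1
    refine ⟨i, m, ?_, h2, rfl⟩
    by_contra hcon
    obtain rfl : m = 1 := by omega
    exact hz.2 ⟨i, rfl⟩
  have hweight : (M.map fun z => longSum z - 1).sum ≤ 2 * c := by
    have h1 := sum_filter_add (s.filter IsLocal) IsTriangle fun z => longSum z - 1
    have h2 : ((s.filter IsLocal).map fun z => longSum z - 1).sum +
        Multiset.card (s.filter IsLocal) = ((s.filter IsLocal).map longSum).sum := by
      have h3 : ((s.filter IsLocal).map fun z => longSum z - 1 + 1).sum =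
          ((s.filter IsLocal).map longSum).sum := by
        refine congrArg _ (Multiset.map_congr rfl fun z hz => ?_)
        obtain ⟨i, m, h1, h2, rfl⟩ := hloc z hz
        have : longSum (loc i m) = m := sum_loc_snd i h2
        omega
      rw [← h3, Multiset.sum_map_add]
      simp
    rw [← hM] at h1
    omega
  obtain ⟨w, hwl, hw⟩ := exists_word M hMloc (2 * c) hweight
  refine ⟨(Finset.univ.filter fun z => Sum.elim (fun v => x.1 v = 1) (fun v => y.1 v = 1) z,
    (decide (x.2 0 = 1), decide (x.2 1 = 1), decide (y.2 0 = 1), decide (y.2 1 = 1)),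
    fun i => w.get (i.cast hwl.symm)), ?_, x, y, hx, hy, by simp, by simp, rfl, ?_⟩
  · have hU : (Finset.univ.filter fun z : ZMod n ⊕ ZMod n =>
        Sum.elim (fun v => x.1 v = 1) (fun v => y.1 v = 1) z).card = 2 * (q + c - 2) := by
      rw [← hshort, hsum, Finset.card_filter, Fintype.sum_sum_type]
      simp only [Sum.elim_inl, Sum.elim_inr, shortSum]
      congr 1 <;> refine Finset.sum_congr rfl fun v _ => ?_
      · rcases Nat.le_one_iff_eq_zero_or_eq_one.1 (hx.fst_le v) with e | e <;> simp [e]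
      · rcases Nat.le_one_iff_eq_zero_or_eq_one.1 (hy.fst_le v) with e | e <;> simp [e]
    simp only [codes, Finset.mem_product, Finset.mem_union, Finset.mem_powersetCard, hU,
      Finset.mem_univ, Finset.subset_univ, true_and, and_true]
    omega
  · have hofFn : List.ofFn (fun i : Fin (2 * c) => w.get (i.cast hwl.symm)) = w :=
      List.ext_getElem (by simp [hwl]) (by simp)
    show _ = Multiset.filter IsNonzero (decodeCycles (List.ofFn fun i : Fin (2 * c) =>
      w.get (i.cast hwl.symm)) + _)
    rw [hofFn, hw, Multiset.filter_add, ← hQxy,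
      Multiset.filter_eq_self (p := IsNonzero).2 fun z hz => (hMcyc z hz).ne_zero, hM, Multiset.filter_filter]
    rw [← Multiset.filter_add_not IsLocal (s.filter fun x => ¬ IsTriangle x),
      Multiset.filter_filter, Multiset.filter_filter]
    congr 1
    · exact Multiset.filter_congr fun z _ => and_comm
    · refine Multiset.filter_congr fun z _ => ⟨fun hz => hz.1, fun hz => ⟨hz, fun ht => hz ?_⟩⟩
      exact isLocal_of_isTriangle (by omega) ht

theorem card_codes_le (n c : ℕ) [NeZero n] :
    (codes n c).card ≤
      ((2 * n).choose (2 * c) + (2 * n).choose (2 * c - 2)) * (16 * (n + 1) ^ (2 * c)) := by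
  rw [codes, Finset.card_product]
  refine Nat.mul_le_mul ?_ ?_
  · refine (Finset.card_union_le _ _).trans ?_
    simp [Finset.card_powersetCard, ZMod.card, two_mul n]
  · simp [Fintype.card_prod, ZMod.card, Finset.card_univ]

/-- Both coefficients are at most `(2n)^{2c} / (2c)!`, and `(2c)! ≥ (2c/e)^{2c}`. -/
theorem choose_le (n c : ℕ) (hc : 0 < c) (hn : c ≤ n) :
    ((2 * n).choose (2 * c) : ℝ) ≤ (Real.exp 1 / c) ^ (2 * c) * (n : ℝ) ^ (2 * c) ∧
    ((2 * n).choose (2 * c - 2) : ℝ) ≤ (Real.exp 1 / c) ^ (2 * c) * (n : ℝ) ^ (2 * c) := by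
  have hc' : (0 : ℝ) < c := by exact_mod_cast hc
  have key : ((2 * n : ℕ) : ℝ) ^ (2 * c) / (2 * c).factorial ≤
      (Real.exp 1 / c) ^ (2 * c) * (n : ℝ) ^ (2 * c) := by
    have h := Real.pow_div_factorial_le_exp (2 * c : ℝ) (by positivity) (2 * c)
    have e : Real.exp (2 * c : ℝ) = Real.exp 1 ^ (2 * c) := by
      rw [← Real.exp_nat_mul]; push_cast; ring_nf
    rw [e] at h
    have h2 : ((2 * n : ℕ) : ℝ) ^ (2 * c) / (2 * c).factorial =
        (2 * c : ℝ) ^ (2 * c) / (2 * c).factorial * ((n : ℝ) / c) ^ (2 * c) := by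
      push_cast
      rw [mul_pow, mul_pow, div_pow]
      field_simp
    rw [h2]
    calc _ ≤ Real.exp 1 ^ (2 * c) * ((n : ℝ) / c) ^ (2 * c) := by gcongr
      _ = _ := by rw [div_pow, div_pow]; ring
  refine ⟨(Nat.choose_le_pow_div _ _).trans key, (Nat.choose_le_pow_div _ _).trans (le_trans ?_ key)⟩
  obtain ⟨d, rfl⟩ : ∃ d, c = d + 1 := ⟨c - 1, by omega⟩
  have e1 : 2 * (d + 1) - 2 = 2 * d := by omega
  have e2 : 2 * (d + 1) = 2 * d + 1 + 1 := by omega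
  rw [e1, e2, Nat.factorial_succ, Nat.factorial_succ, div_le_div_iff₀ (by positivity) (by positivity)]
  have h3 : (2 * d + 1 + 1) * (2 * d + 1) ≤ (2 * n) * (2 * n) := Nat.mul_le_mul (by omega) (by omega)
  have h4 := Nat.mul_le_mul_left ((2 * n) ^ (2 * d) * (2 * d).factorial) h3
  have h5 : (2 * n) ^ (2 * d) * ((2 * d + 1 + 1) * ((2 * d + 1) * (2 * d).factorial)) ≤
      (2 * n) ^ (2 * d + 1 + 1) * (2 * d).factorial := by
    calc _ = (2 * n) ^ (2 * d) * (2 * d).factorial * ((2 * d + 1 + 1) * (2 * d + 1)) := by ring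
      _ ≤ _ := h4
      _ = _ := by ring
  exact_mod_cast h5

theorem card_codes_le_real (n c : ℕ) [NeZero n] (hc : 0 < c) (hn : 6 * c + 8 ≤ n) :
    ((codes n c).card : ℝ) ≤ 4 * (Real.exp 1 / c) ^ (2 * c) * (3 * c + 1) *
        (Fintype.card (Nat.Partition (3 * c))) * (n : ℝ) ^ (5 * c) := by
  obtain ⟨h1, h2⟩ := choose_le n c hc (by omega)
  have h3 : ((codes n c).card : ℝ) ≤ (((2 * n).choose (2 * c) : ℝ) + (2 * n).choose (2 * c - 2)) *
      (16 * (n + 1) ^ (2 * c)) := by exact_mod_cast card_codes_le n c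
  have hp : (1 : ℝ) ≤ Fintype.card (Nat.Partition (3 * c)) := by
    exact_mod_cast Fintype.card_pos
  have hn14 : (14 : ℝ) ≤ n := by exact_mod_cast (by omega : 14 ≤ n)
  have hc1 : (1 : ℝ) ≤ c := by exact_mod_cast hc
  have h4 : 8 * ((n : ℝ) + 1) ^ (2 * c) ≤ (n : ℝ) ^ (3 * c) := by
    have h5 : 8 * ((n : ℝ) + 1) ^ 2 ≤ (n : ℝ) ^ 3 := by nlinarith [mul_self_nonneg ((n : ℝ) - 14)]
    calc 8 * ((n : ℝ) + 1) ^ (2 * c) ≤ 8 ^ c * ((n : ℝ) + 1) ^ (2 * c) := by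
          gcongr
          exact le_self_pow₀ (by norm_num) (by omega)
      _ = (8 * ((n : ℝ) + 1) ^ 2) ^ c := by rw [mul_pow, pow_mul]
      _ ≤ ((n : ℝ) ^ 3) ^ c := by gcongr
      _ = _ := by rw [pow_mul]
  set E := (Real.exp 1 / c) ^ (2 * c) with hE
  have hE0 : 0 ≤ E := by positivity
  calc _ ≤ _ := h3
    _ ≤ (E * (n : ℝ) ^ (2 * c) + E * (n : ℝ) ^ (2 * c)) * (16 * (n + 1) ^ (2 * c)) := by gcongr
    _ = 4 * E * (n : ℝ) ^ (2 * c) * (8 * ((n : ℝ) + 1) ^ (2 * c)) := by ring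
    _ ≤ 4 * E * (n : ℝ) ^ (2 * c) * (n : ℝ) ^ (3 * c) := by gcongr
    _ = 4 * E * 1 * 1 * (n : ℝ) ^ (5 * c) := by
      rw [show 5 * c = 2 * c + 3 * c by ring, pow_add]; ring
    _ ≤ _ := by
      gcongr
      linarith

end EdgeVec

/-! ### From the antiprism to edge vectors -/

section Graph
open EdgeVec

/-- The edge vector of a subgraph, of interest when all edges are of the form `{i, i + 1}` or `{i, i + 2}`. -/
noncomputable def edgeVec {n : ℕ} {G : SimpleGraph (ZMod n)} (C : G.Subgraph) : EdgeVec n :=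
  (fun i => if C.Adj i (i + 1) then 1 else 0, fun i => if C.Adj i (i + 2) then 1 else 0)

theorem antiprism_adj {k : ℕ} {v w : ZMod (2 * k)} (h : (antiprism k).Adj v w) :
    w = v + 1 ∨ w = v - 1 ∨ w = v + 2 ∨ w = v - 2 := by
  rw [antiprism, SimpleGraph.fromRel_adj] at h
  rcases h.2 with (h | h) | (h | h)
  · exact Or.inl h
  · exact Or.inr (Or.inr (Or.inl h))
  · exact Or.inr (Or.inl (by rw [h]; ring))
  · exact Or.inr (Or.inr (Or.inr (by rw [h]; ring)))

theorem ncard_neighborSet {k : ℕ} (hk : 5 ≤ 2 * k) (C : (antiprism k).Subgraph) (v : ZMod (2 * k)) :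
    (C.neighborSet v).ncard = deg (edgeVec C) v := by
  have h1 := natCast_ne_zero (n := 2 * k) (t := 1) (by omega) (by omega)
  have h2 := natCast_ne_zero (n := 2 * k) (t := 2) (by omega) (by omega)
  have h3 := natCast_ne_zero (n := 2 * k) (t := 3) (by omega) (by omega)
  have h4 := natCast_ne_zero (n := 2 * k) (t := 4) (by omega) (by omega)
  push_cast at h1 h2 h3 h4
  have hset : C.neighborSet v =
      (({v + 1, v - 1, v + 2, v - 2} : Finset (ZMod (2 * k))).filter fun w => C.Adj v w) := by
    ext w
    simp only [Subgraph.mem_neighborSet, Finset.coe_filter, Finset.mem_insert,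
      Finset.mem_singleton, Set.mem_ofPred_eq]
    exact ⟨fun h => ⟨antiprism_adj h.adj_sub, h⟩, fun h => h.2⟩
  rw [hset, Set.ncard_coe_finset, Finset.card_filter, Finset.sum_insert, Finset.sum_insert,
    Finset.sum_insert, Finset.sum_singleton]
  · have e1 : C.Adj v (v - 1) ↔ C.Adj (v - 1) (v - 1 + 1) := by
      rw [sub_add_cancel]; exact C.adj_comm _ _
    have e2 : C.Adj v (v - 2) ↔ C.Adj (v - 2) (v - 2 + 2) := by
      rw [sub_add_cancel]; exact C.adj_comm _ _
    simp only [deg, edgeVec, e1, e2]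
    ring
  · simp only [Finset.mem_singleton]
    exact fun h => h4 (by linear_combination h)
  · simp only [Finset.mem_insert, Finset.mem_singleton, not_or]
    exact ⟨fun h => h3 (by linear_combination -h), fun h => h1 (by linear_combination h)⟩
  · simp only [Finset.mem_insert, Finset.mem_singleton, not_or]
    exact ⟨fun h => h2 (by linear_combination h), fun h => h1 (by linear_combination -h),
      fun h => h3 (by linear_combination h)⟩

theorem deg_edgeVec {k : ℕ} (hk : 5 ≤ 2 * k) {C : (antiprism k).Subgraph}
    (hC : IsCycleSubgraph C) (v : ZMod (2 * k)) :
    deg (edgeVec C) v = if v ∈ C.verts then 2 else 0 := by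
  rw [← ncard_neighborSet hk]
  split_ifs with hv
  · exact hC.2 v hv
  · have : C.neighborSet v = ∅ :=
      Set.eq_empty_of_forall_notMem fun w hw => hv (C.edge_vert hw)
    simp [this]

theorem isCycle_edgeVec {k : ℕ} (hk : 5 ≤ 2 * k) {C : (antiprism k).Subgraph}
    (hC : IsCycleSubgraph C) : IsCycle (edgeVec C) where
  fst_le i := by simp only [edgeVec]; split_ifs <;> omega
  snd_le i := by simp only [edgeVec]; split_ifs <;> omega
  deg_eq i := by rw [deg_edgeVec hk hC]; split_ifs <;> simp
  nonempty := by
    obtain ⟨v⟩ := hC.1.nonempty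
    exact ⟨v, by rw [deg_edgeVec hk hC, if_pos v.2]⟩
  connected W h1 h2 i j hi hj hiW := by
    have hi' : i ∈ C.verts := by
      by_contra h
      exact hi (by rw [deg_edgeVec hk hC, if_neg h])
    have hj' : j ∈ C.verts := by
      by_contra h
      exact hj (by rw [deg_edgeVec hk hC, if_neg h])
    have step : ∀ v w, C.Adj v w → v ∈ W → w ∈ W := by
      intro v w hvw hv
      rcases antiprism_adj hvw.adj_sub with rfl | rfl | rfl | rfl
      · exact (h1 v (by simp [edgeVec, hvw])).1 hv
      · refine (h1 (v - 1) ?_).2 (by simpa using hv)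
        simp [edgeVec, hvw.symm]
      · exact (h2 v (by simp [edgeVec, hvw])).1 hv
      · refine (h2 (v - 2) ?_).2 (by simpa using hv)
        simp [edgeVec, hvw.symm]
    obtain ⟨p⟩ := hC.1.preconnected ⟨i, hi'⟩ ⟨j, hj'⟩
    have walk : ∀ (a b : C.verts) (_ : C.coe.Walk a b), (a : ZMod (2 * k)) ∈ W → (b : ZMod (2 * k)) ∈ W := by
      intro a b p
      induction p with
      | nil => exact id
      | cons hadj _ ih => exact fun ha => ih (step _ _ hadj ha)
    exact walk _ _ p hiW

theorem edgeVec_injOn {k : ℕ} (hk : 5 ≤ 2 * k) {C D : (antiprism k).Subgraph}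
    (hC : IsCycleSubgraph C) (hD : IsCycleSubgraph D) (h : edgeVec C = edgeVec D) : C = D := by
  have h1 : ∀ v, C.Adj v (v + 1) ↔ D.Adj v (v + 1) := by
    intro v
    have := congrFun (congrArg Prod.fst h) v
    simp only [edgeVec] at this
    split_ifs at this <;> simp_all
  have h2 : ∀ v, C.Adj v (v + 2) ↔ D.Adj v (v + 2) := by
    intro v
    have := congrFun (congrArg Prod.snd h) v
    simp only [edgeVec] at this
    split_ifs at this <;> simp_all
  have key : ∀ v w, (antiprism k).Adj v w → (C.Adj v w ↔ D.Adj v w) := by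
    intro v w hvw
    rcases antiprism_adj hvw with rfl | rfl | rfl | rfl
    · exact h1 v
    · rw [C.adj_comm, D.adj_comm]
      simpa using h1 (v - 1)
    · exact h2 v
    · rw [C.adj_comm, D.adj_comm]
      simpa using h2 (v - 2)
  refine Subgraph.ext ?_ ?_
  · ext v
    have e1 := deg_edgeVec hk hC v
    have e2 := deg_edgeVec hk hD v
    rw [h, e2] at e1
    split_ifs at e1 <;> simp_all
  · ext v w
    exact ⟨fun hvw => (key v w hvw.adj_sub).1 hvw, fun hvw => (key v w hvw.adj_sub).2 hvw⟩

theorem sum_map_ite {α : Type*} (S : Multiset α) (p : α → Prop) :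
    (S.map fun a => if p a then 1 else 0).sum = S.countP p := by
  induction S using Multiset.induction_on with
  | empty => simp
  | cons a S ih => simp [Multiset.countP_cons, ih, add_comm]

theorem isCover_map {k : ℕ} (hk : 5 ≤ 2 * k) {S : Multiset (antiprism k).Subgraph}
    (hS : IsCDC (antiprism k) S) : IsCover (S.map edgeVec) where
  isCycle x hx := by
    obtain ⟨C, hC, rfl⟩ := Multiset.mem_map.1 hx
    exact isCycle_edgeVec hk (hS.1 C hC)
  short_eq v := by
    have h1 := natCast_ne_zero (n := 2 * k) (t := 1) (by omega) (by omega)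
    have := hS.2 s(v, v + 1) (by simpa [antiprism] using h1)
    rw [Multiset.map_map]
    simpa [Function.comp_def, edgeVec, sum_map_ite] using this
  long_eq v := by
    have h1 := natCast_ne_zero (n := 2 * k) (t := 2) (by omega) (by omega)
    have := hS.2 s(v, v + 2) (by simpa [antiprism] using h1)
    rw [Multiset.map_map]
    simpa [Function.comp_def, edgeVec, sum_map_ite] using this

theorem map_edgeVec_injOn {k : ℕ} (hk : 5 ≤ 2 * k) {S T : Multiset (antiprism k).Subgraph}
    (hS : ∀ C ∈ S, IsCycleSubgraph C) (hT : ∀ C ∈ T, IsCycleSubgraph C)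
    (h : S.map edgeVec = T.map edgeVec) : S = T := by
  induction S using Multiset.induction_on generalizing T with
  | empty => simpa [eq_comm] using h
  | cons C S ih =>
    have hC : edgeVec C ∈ T.map edgeVec := by rw [← h]; simp
    obtain ⟨D, hD, hDC⟩ := Multiset.mem_map.1 hC
    obtain rfl := edgeVec_injOn hk (hT D hD) (hS C (by simp)) hDC
    obtain ⟨T, rfl⟩ := Multiset.exists_cons_of_mem hD
    rw [Multiset.map_cons, Multiset.map_cons, Multiset.cons_inj_right] at h
    rw [ih (fun E hE => hS E (by simp [hE])) (fun E hE => hT E (by simp [hE])) h]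

end Graph

/-- For a positive integer `c ≠ 2` and the antiprism `A` on `n = 2k` vertices with
`k > 3c+3`, the number of CDCs of `A` of size exactly `n+2-c` is at most
`4·(e/c)^{2c}·(3c+1)·p(3c)·n^{5c}`, where `p` is the integer partition function;
in particular it is at most `f(c)·n^{5c}` with `f` depending only on `c`. -/
theorem statement_7 (c k : ℕ) (hc : 0 < c) (hc2 : c ≠ 2) (hk : 3 * c + 3 < k) :
    ({S : Multiset (antiprism k).Subgraph |
        IsCDC (antiprism k) S ∧ Multiset.card S = 2 * k + 2 - c}.ncard : ℝ) ≤
      4 * (Real.exp 1 / c) ^ (2 * c) * (3 * c + 1) *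
        (Fintype.card (Nat.Partition (3 * c))) * ((2 * k : ℕ) : ℝ) ^ (5 * c) := by
  have : NeZero (2 * k) := ⟨by omega⟩
  refine le_trans ?_ (EdgeVec.card_codes_le_real (2 * k) c hc (by omega))
  have hcode : ∀ S : Multiset (antiprism k).Subgraph,
      IsCDC (antiprism k) S ∧ Multiset.card S = 2 * k + 2 - c →
      ∃ C ∈ EdgeVec.codes (2 * k) c, EdgeVec.Encodes (S.map edgeVec) C := fun S hS =>
    (isCover_map (by omega) hS.1).exists_code hc hc2 (by omega) (by simpa using hS.2)
  choose! f hf using hcode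
  rw [← Set.ncard_coe_finset]
  refine Nat.cast_le.2 (Set.ncard_le_ncard_of_injOn f (fun S hS => (hf S hS).1) ?_
    (Finset.finite_toSet _))
  intro S hS T hT hST
  refine map_edgeVec_injOn (by omega) hS.1.1 hT.1.1 ?_
  refine EdgeVec.Encodes.unique (isCover_map (by omega) hS.1) (isCover_map (by omega) hT.1)
    (hf S hS).2 ?_
  rw [hST]
  exact (hf T hT).2
end
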